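/- arXiv:1707.02081 — 2 statements merged into one kernel-verified Lean document; each statement's English description precedes it below -/
import Mathlib

section
/- Let C be a small addable class of finite simple graphs with C_n nonempty for every n ≥ 1. Then the probability that the uniformly random graph R_n(C) on vertex set Fin n is connected is at least 1/√e − o(1); that is, the liminf as n → ∞ of the probability that R_n(C) is connected is at least e^{−1/2}. -/
open Filter Topology FirstOrder

/-- A class of finite simple graphs, given as a property of simple graphs
on arbitrary finite vertex types. -/
abbrev GraphClassOn := ∀ (V : Type) [Finite V], SimpleGraph V → Prop

/-- The class is invariant under graph isomorphism. -/
def ClassIsoInvariant (C : GraphClassOn) : Prop :=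
  ∀ (V W : Type) [Finite V] [Finite W] (G : SimpleGraph V) (H : SimpleGraph W),
    Nonempty (G ≃g H) → (C V G ↔ C W H)

/-- The class is bridge-addable: one may add an edge between two vertices lying in
distinct connected components. -/
def ClassBridgeAddable (C : GraphClassOn) : Prop :=
  ∀ (V : Type) [Finite V] (G : SimpleGraph V) (u v : V),
    C V G → ¬G.Reachable u v → C V (G ⊔ SimpleGraph.fromEdgeSet {s(u, v)})

/-- The class is decomposable: a graph belongs to the class iff each of its connected
components does. -/
def ClassDecomposable (C : GraphClassOn) : Prop :=
  ∀ (V : Type) [Finite V] (G : SimpleGraph V),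
    C V G ↔ ∀ c : G.ConnectedComponent, C c.supp (G.induce c.supp)

/-- Addable = decomposable and bridge-addable. -/
def ClassAddable (C : GraphClassOn) : Prop :=
  ClassDecomposable C ∧ ClassBridgeAddable C

/-- The number of graphs in the class on the vertex set `Fin n`. -/
noncomputable def classCount (C : GraphClassOn) (n : ℕ) : ℕ :=
  Nat.card {G : SimpleGraph (Fin n) // C (Fin n) G}

/-- The class is small: `c_n ≤ d^n · n!` for some real `d`. -/
def ClassSmall (C : GraphClassOn) : Prop :=
  ∃ d : ℝ, ∀ n : ℕ, (classCount C n : ℝ) ≤ d ^ n * n.factorial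

/-- The class is smooth: `c_n / (n · c_{n-1})` tends to a finite limit. -/
def ClassSmooth (C : GraphClassOn) : Prop :=
  ∃ γ : ℝ, Tendsto (fun n : ℕ => (classCount C n : ℝ) / (n * classCount C (n - 1)))
    atTop (𝓝 γ)

/-- The probability that a uniformly random graph from the class on `Fin n`
satisfies the property `P`. -/
noncomputable def classProb (C : GraphClassOn) (n : ℕ) (P : SimpleGraph (Fin n) → Prop) : ℝ :=
  (Nat.card {G : SimpleGraph (Fin n) // C (Fin n) G ∧ P G} : ℝ) / (classCount C n : ℝ)

/-- The probability that a uniformly random *connected* graph from the class on `Fin n`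
satisfies the property `P`. -/
noncomputable def connClassProb (C : GraphClassOn) (n : ℕ)
    (P : SimpleGraph (Fin n) → Prop) : ℝ :=
  (Nat.card {G : SimpleGraph (Fin n) // (C (Fin n) G ∧ G.Connected) ∧ P G} : ℝ) /
    (Nat.card {G : SimpleGraph (Fin n) // C (Fin n) G ∧ G.Connected} : ℝ)

/-- Satisfaction of a first-order sentence in the language of graphs in a simple graph. -/
def SatFO {V : Type} (G : SimpleGraph V) (φ : Language.graph.Sentence) : Prop :=
  letI := G.structure
  V ⊨ φ

/-- The rooted graph `(H, r)` appears in `G` on the vertex set `W`: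
the induced subgraph of `G` on `W` is isomorphic to `H` via an isomorphism sending some
`w ∈ W` to `r`, every edge of `G` joining `W` to its complement is incident on `w`,
and there is exactly one such edge. -/
def AppearsAt {VH V : Type} (H : SimpleGraph VH) (r : VH) (G : SimpleGraph V)
    (W : Set V) : Prop :=
  ∃ (w : V) (hw : w ∈ W) (e : G.induce W ≃g H),
    e ⟨w, hw⟩ = r ∧
    (∀ a ∈ W, ∀ b ∉ W, G.Adj a b → a = w) ∧
    (∃! b, b ∉ W ∧ G.Adj w b)

/-- The rooted graph `(H, r)` appears in `G`. -/
def Appears {VH V : Type} (H : SimpleGraph VH) (r : VH) (G : SimpleGraph V) : Prop :=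
  ∃ W : Set V, AppearsAt H r G W

/-- The number of appearances of the rooted graph `(H, r)` in `G`, i.e. the number of
vertex sets `W` witnessing an appearance. -/
noncomputable def numAppearances {VH V : Type} (H : SimpleGraph VH) (r : VH)
    (G : SimpleGraph V) : ℕ :=
  Nat.card {W : Set V // AppearsAt H r G W}

/-- The number of connected components of `G` whose induced subgraph is isomorphic
to `H`. -/
noncomputable def numComponentsIso {V VH : Type} (G : SimpleGraph V)
    (H : SimpleGraph VH) : ℕ :=
  Nat.card {c : G.ConnectedComponent // Nonempty (G.induce c.supp ≃g H)}

section BAsection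

open scoped Classical

namespace BA

/-! ### Closed embeddings and components -/

lemma reach_closed {α γ : Type} {U : SimpleGraph α} {G : SimpleGraph γ} (f : α → γ)
    (hf : ∀ x y, G.Adj (f x) (f y) ↔ U.Adj x y)
    (hcl : ∀ x z, G.Adj (f x) z → ∃ y, z = f y) (x : α) (z : γ) (h : G.Reachable (f x) z) :
    ∃ y, z = f y ∧ U.Reachable x y := by
  obtain ⟨w⟩ := h
  suffices H : ∀ (a z : γ) (_ : G.Walk a z) (x : α), a = f x → ∃ y, z = f y ∧ U.Reachable x y from
    H _ _ w x rfl
  intro a z w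
  induction w with
  | nil => intro x hx; exact ⟨x, hx, SimpleGraph.Reachable.refl _⟩
  | cons hadj p ih =>
    intro x hx
    subst hx
    obtain ⟨y, rfl⟩ := hcl _ _ hadj
    obtain ⟨y', h1, h2⟩ := ih y rfl
    exact ⟨y', h1, ((hf _ _).1 hadj).reachable.trans h2⟩

lemma reach_map {α γ : Type} {U : SimpleGraph α} {G : SimpleGraph γ} (f : α → γ)
    (hf : ∀ x y, G.Adj (f x) (f y) ↔ U.Adj x y) {x y : α} (h : U.Reachable x y) :
    G.Reachable (f x) (f y) :=
  h.map (⟨f, fun {a b} hab => (hf a b).2 hab⟩ : U →g G)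

lemma comp_iso {α γ : Type} {U : SimpleGraph α} {G : SimpleGraph γ} (f : α → γ)
    (hinj : Function.Injective f)
    (hf : ∀ x y, G.Adj (f x) (f y) ↔ U.Adj x y)
    (hcl : ∀ x z, G.Adj (f x) z → ∃ y, z = f y) (x : α) :
    Nonempty (U.induce (U.connectedComponentMk x).supp ≃g
      G.induce (G.connectedComponentMk (f x)).supp) := by
  have key : ∀ y, y ∈ (U.connectedComponentMk x).supp ↔
      f y ∈ (G.connectedComponentMk (f x)).supp := by
    intro y
    simp only [SimpleGraph.ConnectedComponent.mem_supp_iff, SimpleGraph.ConnectedComponent.eq]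
    constructor
    · intro h; exact reach_map f hf h
    · intro h
      obtain ⟨y', h1, h2⟩ := reach_closed f hf hcl x (f y) h.symm
      rw [hinj h1]; exact h2.symm
  refine ⟨⟨Equiv.ofBijective (fun y => ⟨f y.1, (key y.1).1 y.2⟩) ⟨?_, ?_⟩, ?_⟩⟩
  · intro a b hab
    exact Subtype.ext (hinj (congrArg Subtype.val hab))
  · rintro ⟨z, hz⟩
    have hz' := hz
    simp only [SimpleGraph.ConnectedComponent.mem_supp_iff, SimpleGraph.ConnectedComponent.eq] at hz'
    obtain ⟨y, rfl, _⟩ := reach_closed f hf hcl x z hz'.symm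
    exact ⟨⟨y, (key y).2 hz⟩, rfl⟩
  · intro a b
    exact hf a.1 b.1

lemma decomp_iff {C : GraphClassOn} (hD : ClassDecomposable C) (V : Type) [Finite V]
    (G : SimpleGraph V) :
    C V G ↔ ∀ x : V, C (G.connectedComponentMk x).supp (G.induce (G.connectedComponentMk x).supp) := by
  rw [hD V G]
  constructor
  · intro h x; exact h _
  · intro h c
    induction c using SimpleGraph.ConnectedComponent.ind with
    | h v => exact h v

/-- A graph without edges between two parts is in the class iff both parts are. -/
lemma class_sum {C : GraphClassOn} (hI : ClassIsoInvariant C) (hD : ClassDecomposable C)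
    {α β γ : Type} [Finite α] [Finite β] [Finite γ] (e : α ⊕ β ≃ γ) (G : SimpleGraph γ)
    (U : SimpleGraph α) (V : SimpleGraph β)
    (hU : ∀ x y, G.Adj (e (.inl x)) (e (.inl y)) ↔ U.Adj x y)
    (hV : ∀ x y, G.Adj (e (.inr x)) (e (.inr y)) ↔ V.Adj x y)
    (hno : ∀ a b, ¬ G.Adj (e (.inl a)) (e (.inr b))) :
    C γ G ↔ C α U ∧ C β V := by
  have hl : ∀ x z, G.Adj (e (.inl x)) z → ∃ y, z = e (.inl y) := by
    intro x z hz
    obtain ⟨w, rfl⟩ := e.surjective z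
    rcases w with w | w
    · exact ⟨w, rfl⟩
    · exact absurd hz (hno _ _)
  have hr : ∀ x z, G.Adj (e (.inr x)) z → ∃ y, z = e (.inr y) := by
    intro x z hz
    obtain ⟨w, rfl⟩ := e.surjective z
    rcases w with w | w
    · exact absurd hz.symm (hno _ _)
    · exact ⟨w, rfl⟩
  rw [decomp_iff hD γ G, decomp_iff hD α U, decomp_iff hD β V]
  constructor
  · intro h
    refine ⟨fun x => ?_, fun x => ?_⟩
    · exact (hI _ _ _ _ (comp_iso (fun y => e (.inl y))
        (fun a b hab => Sum.inl_injective (e.injective hab)) hU hl x)).2 (h _)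
    · exact (hI _ _ _ _ (comp_iso (fun y => e (.inr y))
        (fun a b hab => Sum.inr_injective (e.injective hab)) hV hr x)).2 (h _)
  · rintro ⟨h1, h2⟩ z
    obtain ⟨w, rfl⟩ := e.surjective z
    rcases w with w | w
    · exact (hI _ _ _ _ (comp_iso (fun y => e (.inl y))
        (fun a b hab => Sum.inl_injective (e.injective hab)) hU hl w)).1 (h1 _)
    · exact (hI _ _ _ _ (comp_iso (fun y => e (.inr y))
        (fun a b hab => Sum.inr_injective (e.injective hab)) hV hr w)).1 (h2 _)

/-! ### Joins -/

/-- `W` is obtained from `U` and `V` (placed via `e`) by adding the single edge `a b`. -/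
structure IsJoin {α β γ : Type} (U : SimpleGraph α) (V : SimpleGraph β) (W : SimpleGraph γ)
    (e : α ⊕ β ≃ γ) (a : α) (b : β) : Prop where
  left : ∀ x y, W.Adj (e (.inl x)) (e (.inl y)) ↔ U.Adj x y
  right : ∀ x y, W.Adj (e (.inr x)) (e (.inr y)) ↔ V.Adj x y
  cross : ∀ x y, W.Adj (e (.inl x)) (e (.inr y)) ↔ x = a ∧ y = b

/-- The join of two graphs. -/
def joinG {α β γ : Type} (U : SimpleGraph α) (V : SimpleGraph β) (e : α ⊕ β ≃ γ) (a : α) (b : β) :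
    SimpleGraph γ :=
  ((U ⊕g V).comap e.symm) ⊔ SimpleGraph.fromEdgeSet {s(e (.inl a), e (.inr b))}

lemma isJoin_joinG {α β γ : Type} (U : SimpleGraph α) (V : SimpleGraph β) (e : α ⊕ β ≃ γ)
    (a : α) (b : β) : IsJoin U V (joinG U V e a b) e a b := by
  constructor <;> intro x y <;> simp [joinG]

lemma IsJoin.symm {α β γ : Type} {U : SimpleGraph α} {V : SimpleGraph β} {W : SimpleGraph γ}
    {e : α ⊕ β ≃ γ} {a : α} {b : β} (h : IsJoin U V W e a b) :
    IsJoin V U W ((Equiv.sumComm β α).trans e) b a := by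
  constructor
  · intro x y; simpa using h.right x y
  · intro x y; simpa using h.left x y
  · intro x y
    simp only [Equiv.trans_apply, Equiv.sumComm_apply, Sum.swap_inl, Sum.swap_inr]
    rw [SimpleGraph.adj_comm, h.cross]; tauto

lemma IsJoin.connected {α β γ : Type} {U : SimpleGraph α} {V : SimpleGraph β} {W : SimpleGraph γ}
    {e : α ⊕ β ≃ γ} {a : α} {b : β} (h : IsJoin U V W e a b) (hU : U.Connected)
    (hV : V.Connected) : W.Connected := by
  have key : ∀ z, W.Reachable (e (.inl a)) z := by
    intro z
    obtain ⟨w, rfl⟩ := e.surjective z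
    rcases w with w | w
    · exact reach_map (fun y => e (.inl y)) h.left (hU.preconnected a w)
    · have h1 : W.Adj (e (.inl a)) (e (.inr b)) := (h.cross _ _).2 ⟨rfl, rfl⟩
      exact h1.reachable.trans (reach_map (fun y => e (.inr y)) h.right (hV.preconnected b w))
  have : Nonempty γ := ⟨e (.inl a)⟩
  exact ⟨fun x y => (key x).symm.trans (key y)⟩

lemma IsJoin.ext {α β γ : Type} {U : SimpleGraph α} {V : SimpleGraph β} {W W' : SimpleGraph γ}
    {e : α ⊕ β ≃ γ} {a : α} {b : β} (h : IsJoin U V W e a b) (h' : IsJoin U V W' e a b) :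
    W = W' := by
  ext p q
  obtain ⟨p, rfl⟩ := e.surjective p
  obtain ⟨q, rfl⟩ := e.surjective q
  rcases p with p | p <;> rcases q with q | q
  · rw [h.left, h'.left]
  · rw [h.cross, h'.cross]
  · rw [SimpleGraph.adj_comm, h.cross, SimpleGraph.adj_comm, h'.cross]
  · rw [h.right, h'.right]

lemma IsJoin.mem {C : GraphClassOn} (hI : ClassIsoInvariant C) (hA : ClassAddable C)
    {α β γ : Type} [Finite α] [Finite β] [Finite γ]
    {U : SimpleGraph α} {V : SimpleGraph β} {W : SimpleGraph γ}
    {e : α ⊕ β ≃ γ} {a : α} {b : β} (h : IsJoin U V W e a b) (hU : C α U) (hV : C β V) :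
    C γ W := by
  rw [h.ext (isJoin_joinG U V e a b)]
  apply hA.2
  · rw [class_sum hI hA.1 e _ U V (by simp) (by simp) (by simp)]
    exact ⟨hU, hV⟩
  · intro hr
    obtain ⟨y, hy, _⟩ := reach_closed (U := U) (G := (U ⊕g V).comap e.symm)
      (fun x => e (.inl x)) (by simp) (by
        intro x z hz
        obtain ⟨w, rfl⟩ := e.surjective z
        rcases w with w | w
        · exact ⟨w, rfl⟩
        · simp at hz) a _ hr
    have := e.injective hy
    cases this

/-- The bridge of a join separates the two sides. -/
lemma IsJoin.reach_del {α β γ : Type} {U : SimpleGraph α} {V : SimpleGraph β} {W : SimpleGraph γ}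
    {e : α ⊕ β ≃ γ} {a : α} {b : β} (h : IsJoin U V W e a b) (hU : U.Connected) (z : γ) :
    (W.deleteEdges {s(e (.inl a), e (.inr b))}).Reachable (e (.inl a)) z ↔ ∃ x, z = e (.inl x) := by
  have hf : ∀ x y, (W.deleteEdges {s(e (.inl a), e (.inr b))}).Adj (e (.inl x)) (e (.inl y)) ↔
      U.Adj x y := by
    intro x y
    simp [SimpleGraph.deleteEdges_adj, h.left]
  constructor
  · intro hr
    obtain ⟨y, hy, _⟩ := reach_closed (fun x => e (.inl x)) hf (by
      intro x z hz
      obtain ⟨w, rfl⟩ := e.surjective z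
      rcases w with w | w
      · exact ⟨w, rfl⟩
      · exfalso
        rw [SimpleGraph.deleteEdges_adj, h.cross] at hz
        obtain ⟨⟨rfl, rfl⟩, hz⟩ := hz
        exact hz rfl) a z hr
    exact ⟨y, hy⟩
  · rintro ⟨x, rfl⟩
    exact reach_map (fun x => e (.inl x)) hf (hU.preconnected a x)

/-- Number of bridges (among edges) is at most `n - 1`. -/
lemma card_bridges {n : ℕ} (hn : 1 ≤ n) (G : SimpleGraph (Fin n)) :
    ((Finset.univ : Finset (Sym2 (Fin n))).filter
      (fun e => e ∈ G.edgeSet ∧ G.IsBridge e)).card ≤ n - 1 := by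
  have : Nonempty (Fin n) := ⟨⟨0, hn⟩⟩
  set F : SimpleGraph (Fin n) := SimpleGraph.fromEdgeSet {e | e ∈ G.edgeSet ∧ G.IsBridge e} with hF
  have hFG : F ≤ G := by
    intro a b hab
    rw [hF, SimpleGraph.fromEdgeSet_adj] at hab
    exact hab.1.1
  have hac : F.IsAcyclic := by
    rw [SimpleGraph.isAcyclic_iff_forall_isBridge]
    intro e he
    rw [hF, SimpleGraph.edgeSet_fromEdgeSet] at he
    exact he.1.2.anti hFG
  obtain ⟨T, hT, hle, hTT⟩ := (SimpleGraph.connected_top (V := Fin n)).exists_isTree_le_of_le_of_isAcyclic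
    (le_top : F ≤ ⊤) hac
  have h1 := hTT.card_edgeFinset
  rw [Fintype.card_fin] at h1
  have h2 : ((Finset.univ : Finset (Sym2 (Fin n))).filter
      (fun e => e ∈ G.edgeSet ∧ G.IsBridge e)) ⊆ T.edgeFinset := by
    intro e he
    simp only [Finset.mem_filter, Finset.mem_univ, true_and] at he
    rw [SimpleGraph.mem_edgeFinset]
    apply SimpleGraph.edgeSet_mono hT
    rw [hF, SimpleGraph.edgeSet_fromEdgeSet]
    exact ⟨he, G.not_isDiag_of_mem_edgeSet he.1⟩
  have := Finset.card_le_card h2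
  omega

end BA

namespace BA

/-- Graphs of the class on `Fin n`. -/
noncomputable def cls (C : GraphClassOn) (n : ℕ) : Finset (SimpleGraph (Fin n)) :=
  Finset.univ.filter (fun G => C (Fin n) G)

/-- Connected graphs of the class on `Fin n`. -/
noncomputable def conn (C : GraphClassOn) (n : ℕ) : Finset (SimpleGraph (Fin n)) :=
  Finset.univ.filter (fun G => C (Fin n) G ∧ G.Connected)

lemma mem_cls {C : GraphClassOn} {n : ℕ} {G : SimpleGraph (Fin n)} : G ∈ cls C n ↔ C (Fin n) G := by
  simp [cls]

lemma mem_conn {C : GraphClassOn} {n : ℕ} {G : SimpleGraph (Fin n)} :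
    G ∈ conn C n ↔ C (Fin n) G ∧ G.Connected := by
  simp [conn]

lemma classCount_eq (C : GraphClassOn) (n : ℕ) : classCount C n = (cls C n).card := by
  rw [classCount, Nat.card_eq_fintype_card, Fintype.card_subtype]
  rfl

lemma connCount_eq (C : GraphClassOn) (n : ℕ) :
    Nat.card {G : SimpleGraph (Fin n) // C (Fin n) G ∧ G.Connected} = (conn C n).card := by
  rw [Nat.card_eq_fintype_card, Fintype.card_subtype]
  rfl

/-- Canonical splitting of `Fin n` along a finset. -/
noncomputable def eA {n : ℕ} (A : Finset (Fin n)) : Fin A.card ⊕ Fin Aᶜ.card ≃ Fin n :=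
  finSumEquivOfFinset rfl rfl

lemma eA_inl_mem {n : ℕ} (A : Finset (Fin n)) (x : Fin A.card) : eA A (.inl x) ∈ A := by
  simp [eA, finSumEquivOfFinset_inl]

lemma eA_inr_mem {n : ℕ} (A : Finset (Fin n)) (x : Fin Aᶜ.card) : eA A (.inr x) ∉ A := by
  have := Finset.orderEmbOfFin_mem Aᶜ rfl x
  rw [Finset.mem_compl] at this
  simpa [eA, finSumEquivOfFinset_inr] using this

/-- `A` is (the vertex set of) a component of `G`. -/
def IsComp {n : ℕ} (G : SimpleGraph (Fin n)) (A : Finset (Fin n)) : Prop :=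
  ∃ x, ∀ y, y ∈ A ↔ G.Reachable x y

lemma IsComp.no_cross {n : ℕ} {G : SimpleGraph (Fin n)} {A : Finset (Fin n)} (h : IsComp G A)
    (a : Fin A.card) (b : Fin Aᶜ.card) : ¬ G.Adj (eA A (.inl a)) (eA A (.inr b)) := by
  obtain ⟨x, hx⟩ := h
  intro hadj
  apply eA_inr_mem A b
  rw [hx]
  exact ((hx _).1 (eA_inl_mem A a)).trans hadj.reachable

lemma IsComp.connected {n : ℕ} {G : SimpleGraph (Fin n)} {A : Finset (Fin n)} (h : IsComp G A) :
    (G.comap (fun x => eA A (.inl x))).Connected := by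
  have hno := h.no_cross
  obtain ⟨x, hx⟩ := h
  obtain ⟨w, hw⟩ := (eA A).surjective x
  rcases w with w | w
  · have : Nonempty (Fin A.card) := ⟨w⟩
    have key : ∀ y, (G.comap (fun x => eA A (.inl x))).Reachable w y := by
      intro y
      obtain ⟨y', h1, h2⟩ := reach_closed (U := G.comap (fun x => eA A (.inl x))) (G := G)
        (fun x => eA A (.inl x)) (fun _ _ => Iff.rfl)
        (by
          intro x z hz
          obtain ⟨u, rfl⟩ := (eA A).surjective z
          rcases u with u | u
          · exact ⟨u, rfl⟩
          · exact absurd hz (hno _ _)) w (eA A (.inl y))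
        (by rw [hw]; exact (hx _).1 (eA_inl_mem A y))
      have : y = y' := by
        have := (eA A).injective h1
        exact Sum.inl_injective this
      rw [this]; exact h2
    exact ⟨fun a b => (key a).symm.trans (key b)⟩
  · exfalso
    apply eA_inr_mem A w
    rw [hw, hx]

lemma card_isComp {C : GraphClassOn} (hI : ClassIsoInvariant C) (hD : ClassDecomposable C)
    {n : ℕ} (A : Finset (Fin n)) :
    ((cls C n).filter (fun G => IsComp G A)).card ≤ (conn C A.card).card * (cls C Aᶜ.card).card := by
  rw [← Finset.card_product]
  apply Finset.card_le_card_of_injOn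
    (fun G => (G.comap (fun x => eA A (.inl x)), G.comap (fun x => eA A (.inr x))))
  · intro G hG
    simp only [Finset.coe_filter, Set.mem_setOf_eq, mem_cls] at hG
    have := (class_sum hI hD (eA A) G (G.comap (fun x => eA A (.inl x)))
      (G.comap (fun x => eA A (.inr x))) (fun _ _ => Iff.rfl) (fun _ _ => Iff.rfl)
      hG.2.no_cross).1 hG.1
    simp only [Finset.coe_product, Set.mem_prod, Finset.mem_coe, mem_conn, mem_cls]
    exact ⟨⟨this.1, hG.2.connected⟩, this.2⟩
  · intro G hG G' hG' heq
    simp only [Finset.coe_filter, Set.mem_setOf_eq, mem_cls] at hG hG'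
    simp only [Prod.mk.injEq] at heq
    ext p q
    obtain ⟨p, rfl⟩ := (eA A).surjective p
    obtain ⟨q, rfl⟩ := (eA A).surjective q
    rcases p with p | p <;> rcases q with q | q
    · have := congrArg (fun H : SimpleGraph (Fin A.card) => H.Adj p q) heq.1
      simpa using this
    · exact iff_of_false (hG.2.no_cross _ _) (hG'.2.no_cross _ _)
    · exact iff_of_false (fun h => hG.2.no_cross _ _ h.symm) (fun h => hG'.2.no_cross _ _ h.symm)
    · have := congrArg (fun H : SimpleGraph (Fin Aᶜ.card) => H.Adj p q) heq.2
      simpa using this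

/-- component of a vertex as a finset -/
noncomputable def compOf {n : ℕ} (G : SimpleGraph (Fin n)) (x : Fin n) : Finset (Fin n) :=
  Finset.univ.filter (fun y => G.Reachable x y)

lemma isComp_compOf {n : ℕ} (G : SimpleGraph (Fin n)) (x : Fin n) : IsComp G (compOf G x) :=
  ⟨x, fun y => by simp [compOf]⟩

lemma self_mem_compOf {n : ℕ} (G : SimpleGraph (Fin n)) (x : Fin n) : x ∈ compOf G x := by
  simp [compOf]

lemma rec_A {C : GraphClassOn} (hI : ClassIsoInvariant C) (hD : ClassDecomposable C) (n : ℕ) :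
    n * (cls C n).card ≤
      ∑ A : Finset (Fin n), A.card * ((conn C A.card).card * (cls C Aᶜ.card).card) := by
  calc n * (cls C n).card = ∑ G ∈ cls C n, n := by simp [mul_comm]
    _ ≤ ∑ G ∈ cls C n, ∑ A : Finset (Fin n), if IsComp G A then A.card else 0 := by
        apply Finset.sum_le_sum
        intro G _
        have h1 : (Finset.univ : Finset (Fin n)).card =
            ∑ A : Finset (Fin n), (Finset.univ.filter (fun x => compOf G x = A)).card :=
          Finset.card_eq_sum_card_fiberwise (fun _ _ => Finset.mem_coe.2 (Finset.mem_univ _))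
        rw [Finset.card_univ, Fintype.card_fin] at h1
        conv_lhs => rw [h1]
        apply Finset.sum_le_sum
        intro A _
        split_ifs with hA
        · apply Finset.card_le_card
          intro x hx
          simp only [Finset.mem_filter, Finset.mem_univ, true_and] at hx
          rw [← hx]; exact self_mem_compOf G x
        · rw [Nat.le_zero, Finset.card_eq_zero, Finset.filter_eq_empty_iff]
          intro x _ hx
          exact hA (hx ▸ isComp_compOf G x)
    _ = ∑ A : Finset (Fin n), A.card * ((cls C n).filter (fun G => IsComp G A)).card := by
        rw [Finset.sum_comm]
        apply Finset.sum_congr rfl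
        intro A _
        rw [← Finset.sum_filter, Finset.sum_const, smul_eq_mul, mul_comm]
    _ ≤ _ := by
        apply Finset.sum_le_sum
        intro A _
        exact Nat.mul_le_mul_left _ (card_isComp hI hD A)

lemma big_comp {C : GraphClassOn} (hI : ClassIsoInvariant C) (hD : ClassDecomposable C) (n S : ℕ) :
    ((cls C n).filter (fun G => ∃ A, IsComp G A ∧ Aᶜ.card ≤ S)).card ≤
      ∑ A ∈ (Finset.univ : Finset (Finset (Fin n))).filter (fun A => Aᶜ.card ≤ S),
        ((conn C A.card).card * (cls C Aᶜ.card).card) := by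
  have : (cls C n).filter (fun G => ∃ A, IsComp G A ∧ Aᶜ.card ≤ S) ⊆
      ((Finset.univ : Finset (Finset (Fin n))).filter (fun A => Aᶜ.card ≤ S)).biUnion
        (fun A => (cls C n).filter (fun G => IsComp G A)) := by
    intro G hG
    simp only [Finset.mem_filter, Finset.mem_biUnion, Finset.mem_univ, true_and] at hG ⊢
    obtain ⟨h1, A, h2, h3⟩ := hG
    exact ⟨A, h3, h1, h2⟩
  refine (Finset.card_le_card this).trans (Finset.card_biUnion_le.trans ?_)
  exact Finset.sum_le_sum fun A _ => card_isComp hI hD A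

lemma card_darts {n : ℕ} (hn : 1 ≤ n) (G : SimpleGraph (Fin n)) :
    ((Finset.univ : Finset (Fin n × Fin n)).filter
      (fun p => G.Adj p.1 p.2 ∧ G.IsBridge s(p.1, p.2))).card ≤ 2 * (n - 1) := by
  refine le_trans (Finset.card_le_mul_card_image_of_maps_to (f := fun p => s(p.1, p.2))
    (t := (Finset.univ : Finset (Sym2 (Fin n))).filter
      (fun e => e ∈ G.edgeSet ∧ G.IsBridge e)) ?_ 2 ?_) ?_
  · intro p hp
    simpa using hp
  · intro e _
    induction e using Sym2.ind with
    | _ a b =>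
      refine le_trans (Finset.card_le_card (t := {(a, b), (b, a)}) ?_) Finset.card_le_two
      intro p hp
      simp only [Finset.mem_filter, Sym2.eq_iff] at hp
      rcases hp.2 with h | h
      · simp [Prod.ext_iff, h.1, h.2]
      · simp [Prod.ext_iff, h.1, h.2]
  · exact Nat.mul_le_mul_left _ (card_bridges hn G)

/-- Graphs all of whose components miss many vertices are rare. -/
lemma small_comp {C : GraphClassOn} (hB : ClassBridgeAddable C) (n S : ℕ) (hn : 1 ≤ n) :
    ((cls C n).filter (fun G => ∀ A, IsComp G A → S < Aᶜ.card)).card * (n * (S + 1)) ≤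
      (cls C n).card * (2 * (n - 1)) := by
  set T := (cls C n).filter (fun G => ∀ A, IsComp G A → S < Aᶜ.card) with hT
  have h1 : T.card * (n * (S + 1)) ≤
      (T.sigma (fun G => (Finset.univ : Finset (Fin n × Fin n)).filter
        (fun p => ¬ G.Reachable p.1 p.2))).card := by
    rw [Finset.card_sigma, ← smul_eq_mul]
    apply Finset.card_nsmul_le_sum
    intro G hG
    have h2 : (Finset.univ : Finset (Fin n × Fin n)).filter
        (fun p => ¬ G.Reachable p.1 p.2) = Finset.univ.biUnion (fun x : Fin n =>
          (compOf G x)ᶜ.map ⟨fun y => (x, y), fun a b h => (Prod.mk.inj h).2⟩) := by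
      ext ⟨a, b⟩
      simp only [Finset.mem_filter, Finset.mem_univ, true_and, Finset.mem_biUnion, Finset.mem_map,
        Finset.mem_compl, compOf, Function.Embedding.coeFn_mk]
      constructor
      · intro h
        exact ⟨a, b, h, rfl⟩
      · rintro ⟨x, y, h, heq⟩
        obtain ⟨rfl, rfl⟩ := Prod.mk.inj heq
        exact h
    rw [h2, Finset.card_biUnion]
    · simp only [Finset.card_map]
      calc n * (S + 1) = ∑ x : Fin n, (S + 1) := by simp
        _ ≤ _ := by
          apply Finset.sum_le_sum
          intro x _
          rw [hT, Finset.mem_filter] at hG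
          exact hG.2 _ (isComp_compOf G x)
    · intro x _ y _ hxy
      rw [Function.onFun, Finset.disjoint_left]
      intro p hp hq
      simp only [Finset.mem_map, Function.Embedding.coeFn_mk] at hp hq
      obtain ⟨_, _, rfl⟩ := hp
      obtain ⟨_, _, h⟩ := hq
      exact hxy (Prod.mk.inj h).1.symm
  refine h1.trans ?_
  have h3 : (T.sigma (fun G => (Finset.univ : Finset (Fin n × Fin n)).filter
        (fun p => ¬ G.Reachable p.1 p.2))).card ≤
      ((cls C n).sigma (fun G => (Finset.univ : Finset (Fin n × Fin n)).filter
        (fun p => G.Adj p.1 p.2 ∧ G.IsBridge s(p.1, p.2)))).card := by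
    apply Finset.card_le_card_of_injOn
      (fun z => ⟨z.1 ⊔ SimpleGraph.fromEdgeSet {s(z.2.1, z.2.2)}, z.2⟩)
    · rintro ⟨G, a, b⟩ hG
      simp only [Finset.coe_sigma, Set.mem_sigma_iff, Finset.mem_coe, hT, Finset.mem_filter,
        Finset.mem_univ, true_and, mem_cls] at hG ⊢
      refine ⟨hB _ _ _ _ hG.1.1 hG.2, ?_, ?_⟩
      · have hne : a ≠ b := by
          rintro rfl
          exact hG.2 (SimpleGraph.Reachable.refl _)
        simp [hne]
      · exact SimpleGraph.IsBridge.sup_edge_of_not_reachable hG.2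
    · rintro ⟨G, a, b⟩ hG ⟨G', a', b'⟩ hG' heq
      simp only [Finset.coe_sigma, Set.mem_sigma_iff, Finset.mem_coe, Finset.mem_filter,
        Finset.mem_univ, true_and] at hG hG'
      simp only [Sigma.mk.injEq, heq_eq_eq, Prod.mk.injEq] at heq
      obtain ⟨h, rfl, rfl⟩ := heq
      have hna : ¬ G.Adj a b := fun h => hG.2 h.reachable
      have hna' : ¬ G'.Adj a b := fun h => hG'.2 h.reachable
      have hGG : G = G' := by
        ext p q
        have h5 := congrArg (fun H : SimpleGraph (Fin n) => H.Adj p q) h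
        simp only [SimpleGraph.sup_adj, SimpleGraph.fromEdgeSet_adj, Set.mem_singleton_iff,
          eq_iff_iff] at h5
        by_cases hs : s(p, q) = s(a, b)
        · rw [Sym2.eq_iff] at hs
          rcases hs with ⟨rfl, rfl⟩ | ⟨rfl, rfl⟩
          · exact iff_of_false hna hna'
          · exact iff_of_false (fun h => hna h.symm) (fun h => hna' h.symm)
        · simpa [hs] using h5
      rw [hGG]
  refine h3.trans ?_
  rw [Finset.card_sigma]
  calc _ ≤ ∑ G ∈ cls C n, 2 * (n - 1) := Finset.sum_le_sum fun G _ => card_darts hn G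
    _ = _ := by simp

end BA

namespace BA

/-! ### Pendant copies -/

lemma conn_cut {V : Type} {G : SimpleGraph V} (hG : G.Connected) (D : Set V) {x y : V}
    (hx : x ∈ D) (hy : y ∉ D) : ∃ a ∈ D, ∃ b, b ∉ D ∧ G.Adj a b := by
  obtain ⟨w⟩ := hG.preconnected x y
  obtain ⟨d, _, h1, h2⟩ := w.exists_boundary_dart D hx hy
  exact ⟨_, h1, _, h2, d.adj⟩

/-- `A` is a connected set joined to the rest by the unique edge `r b`. -/
structure PSet {V : Type} (G : SimpleGraph V) (A : Finset V) (r b : V) : Prop where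
  hr : r ∈ A
  hb : b ∉ A
  out : ∀ x ∈ A, ∀ z, z ∉ A → (G.Adj x z ↔ x = r ∧ z = b)
  cut : ∀ D : Set V, ∀ x ∈ A, ∀ y ∈ A, x ∈ D → y ∉ D →
    ∃ a ∈ A, a ∈ D ∧ ∃ c ∈ A, c ∉ D ∧ G.Adj a c

lemma PSet.cross {V : Type} {G : SimpleGraph V} {A A' : Finset V} {r b r' b' : V}
    (h : PSet G A r b) (h' : PSet G A' r' b') {x y : V} (hx : x ∈ A) (hx' : x ∈ A') (hy : y ∈ A)
    (hy' : y ∉ A') : r' ∈ A ∧ b' ∈ A := by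
  obtain ⟨a, ha, ha', c, hc, hc', hadj⟩ := h.cut A' x hx y hy hx' hy'
  obtain ⟨rfl, rfl⟩ := (h'.out a ha' c hc').1 hadj
  exact ⟨ha, hc⟩

lemma PSet.no_cross {V : Type} [Fintype V] {G : SimpleGraph V} (hG : G.Connected)
    {A A' : Finset V} {r b r' b' : V}
    (h : PSet G A r b) (h' : PSet G A' r' b') (hcard : A.card + A'.card < Fintype.card V)
    {x y y' : V} (hx : x ∈ A) (hx' : x ∈ A') (hy : y ∈ A)
    (hy' : y ∉ A') (hz : y' ∉ A) (hz' : y' ∈ A') : False := by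
  have h1 := h.cross h' hx hx' hy hy'
  have h2 := h'.cross h hx' hx hz' hz
  obtain ⟨w, hw⟩ : ∃ w, w ∉ A ∪ A' := by
    by_contra hcon
    push Not at hcon
    have : (A ∪ A') = Finset.univ := Finset.eq_univ_iff_forall.2 hcon
    have h3 := Finset.card_union_le A A'
    rw [this, Finset.card_univ] at h3
    omega
  obtain ⟨p, hp, q, hq, hadj⟩ := conn_cut hG (↑(A ∪ A')) (x := x) (y := w) (by simp [hx])
    (by simpa using hw)
  simp only [Finset.coe_union, Set.mem_union, Finset.mem_coe, not_or] at hp hq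
  rcases hp with hp | hp
  · obtain ⟨rfl, rfl⟩ := (h.out p hp q hq.1).1 hadj
    exact hq.2 h2.2
  · obtain ⟨rfl, rfl⟩ := (h'.out p hp q hq.2).1 hadj
    exact hq.1 h1.2

lemma PSet.eq_of_card {V : Type} [Fintype V] {G : SimpleGraph V} (hG : G.Connected)
    {A A' : Finset V} {r b r' b' : V}
    (h : PSet G A r b) (h' : PSet G A' r' b') (hc : A.card = A'.card)
    (hcard : A.card + A'.card < Fintype.card V) {x : V} (hx : x ∈ A) (hx' : x ∈ A') : A = A' := by
  by_contra hne
  have h1 : ¬ A ⊆ A' := fun hs => hne (Finset.eq_of_subset_of_card_le hs hc.ge)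
  have h2 : ¬ A' ⊆ A := fun hs => hne (Finset.eq_of_subset_of_card_le hs hc.le).symm
  obtain ⟨y, hy, hy'⟩ := Finset.not_subset.1 h1
  obtain ⟨z, hz, hz'⟩ := Finset.not_subset.1 h2
  exact h.no_cross hG h' hcard hx hx' hy hy' hz' hz

lemma PSet.not_ssub {V : Type} {G : SimpleGraph V}
    {A A' : Finset V} {r b b' : V}
    (h : PSet G A r b) (h' : PSet G A' r b') (hs : A' ⊆ A) : A ⊆ A' := by
  by_contra h1
  obtain ⟨y, hy, hy'⟩ := Finset.not_subset.1 h1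
  have h2 := h.cross h' h.hr h'.hr hy hy'
  have h3 : G.Adj r b := (h.out _ h.hr _ h.hb).2 ⟨rfl, rfl⟩
  have h4 := ((h'.out r h'.hr b (fun hb => h.hb (hs hb))).1 h3).2
  rw [h4] at h
  exact h.hb h2.2

lemma PSet.eq_of_root {V : Type} [Fintype V] {G : SimpleGraph V} (hG : G.Connected)
    {A A' : Finset V} {r b b' : V}
    (h : PSet G A r b) (h' : PSet G A' r b')
    (hcard : A.card + A'.card < Fintype.card V) : A = A' := by
  by_cases h1 : A ⊆ A'
  · exact h1.antisymm (h'.not_ssub h h1)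
  by_cases h2 : A' ⊆ A
  · exact (h.not_ssub h' h2).antisymm h2
  exfalso
  obtain ⟨y, hy, hy'⟩ := Finset.not_subset.1 h1
  obtain ⟨z, hz, hz'⟩ := Finset.not_subset.1 h2
  exact h.no_cross hG h' hcard h.hr h'.hr hy hy' hz' hz

/-- `φ` is a pendant copy of the rooted graph `(P, r)` in `G`. -/
def Pend {j n : ℕ} (P : SimpleGraph (Fin j)) (r : Fin j) (G : SimpleGraph (Fin n))
    (φ : Fin j ↪ Fin n) : Prop :=
  P.Connected ∧ (∀ x y, G.Adj (φ x) (φ y) ↔ P.Adj x y) ∧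
    ∃ b, (∀ x, φ x ≠ b) ∧ ∀ x z, (∀ y, φ y ≠ z) → (G.Adj (φ x) z ↔ x = r ∧ z = b)

/-- The set of pendant copies. -/
noncomputable def pends {j n : ℕ} (P : SimpleGraph (Fin j)) (r : Fin j) (G : SimpleGraph (Fin n)) :
    Finset (Fin j ↪ Fin n) :=
  Finset.univ.filter (fun φ => Pend P r G φ)

lemma mem_pends {j n : ℕ} {P : SimpleGraph (Fin j)} {r : Fin j} {G : SimpleGraph (Fin n)}
    {φ : Fin j ↪ Fin n} : φ ∈ pends P r G ↔ Pend P r G φ := by simp [pends]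

lemma Pend.pset {j n : ℕ} {P : SimpleGraph (Fin j)} {r : Fin j} {G : SimpleGraph (Fin n)}
    {φ : Fin j ↪ Fin n} (h : Pend P r G φ) : ∃ b, PSet G (Finset.univ.map φ) (φ r) b := by
  obtain ⟨hP, h1, b, hb, h2⟩ := h
  refine ⟨b, ⟨by simp, by simpa using hb, ?_, ?_⟩⟩
  · intro x hx z hz
    obtain ⟨x, _, rfl⟩ := Finset.mem_map.1 hx
    rw [h2 x z (by simpa using hz)]
    simp
  · intro D x hx y hy hxD hyD
    obtain ⟨x, _, rfl⟩ := Finset.mem_map.1 hx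
    obtain ⟨y, _, rfl⟩ := Finset.mem_map.1 hy
    obtain ⟨a, ha, c, hc, hadj⟩ := conn_cut hP (φ ⁻¹' D) (x := x) (y := y) hxD hyD
    exact ⟨φ a, by simp, ha, φ c, by simp, hc, (h1 _ _).2 hadj⟩

lemma card_emb_range {j n : ℕ} (A : Finset (Fin n)) :
    ((Finset.univ : Finset (Fin j ↪ Fin n)).filter (fun φ => Finset.univ.map φ = A)).card ≤
      j.factorial := by
  by_cases hA : A.card = j
  · subst hA
    have h0 : Fintype.card (Fin A.card ↪ A) = A.card.factorial := by
      rw [Fintype.card_embedding_eq, Fintype.card_coe, Fintype.card_fin, Nat.descFactorial_self]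
    rw [← h0, ← Finset.card_univ]
    have : Nonempty (Fin A.card ↪ A) := ⟨A.equivFin.symm.toEmbedding⟩
    apply Finset.card_le_card_of_surjOn
      (fun f => f.trans (Function.Embedding.subtype _))
    intro φ hφ
    simp only [Finset.coe_filter, Finset.mem_univ, true_and, Set.mem_setOf_eq] at hφ
    have hm : ∀ x, φ x ∈ A := fun x => hφ.subset (by simp)
    refine ⟨⟨fun x => ⟨φ x, hm x⟩, fun a b hab => φ.injective (congrArg Subtype.val hab)⟩,
      by simp, ?_⟩
    ext x; rfl
  · rw [Finset.card_eq_zero.2]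
    · exact Nat.zero_le _
    · rw [Finset.filter_eq_empty_iff]
      intro φ _ h
      apply hA
      rw [← h]; simp

/-- few pendant copies through a vertex -/
lemma card_pends_through {w n : ℕ} (hn : 2 * w < n) (P : SimpleGraph (Fin w)) (r : Fin w)
    (G : SimpleGraph (Fin n)) (hG : G.Connected) (z : Fin n) :
    ((pends P r G).filter (fun φ => ∃ x, φ x = z)).card ≤ w.factorial := by
  rcases ((pends P r G).filter (fun φ => ∃ x, φ x = z)).eq_empty_or_nonempty with h | ⟨φ₀, h0⟩
  · rw [h]; simp
  · simp only [Finset.mem_filter, mem_pends] at h0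
    obtain ⟨h0, x0, hx0⟩ := h0
    refine le_trans (Finset.card_le_card ?_) (card_emb_range (Finset.univ.map φ₀))
    intro φ hφ
    simp only [Finset.mem_filter, mem_pends, Finset.mem_univ, true_and] at hφ ⊢
    obtain ⟨h1, x1, hx1⟩ := hφ
    obtain ⟨b0, p0⟩ := h0.pset
    obtain ⟨b1, p1⟩ := h1.pset
    apply p1.eq_of_card hG p0 (by simp) (by simp; omega) (x := z)
    · rw [← hx1]; simp
    · rw [← hx0]; simp

lemma sum_pends_le {C : GraphClassOn} {n j : ℕ} (G : SimpleGraph (Fin n)) :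
    ∑ V ∈ conn C j, ∑ v, (pends V v G).card ≤
      j.factorial * ((Finset.univ : Finset (Finset (Fin n))).filter
        (fun A => A.card = j ∧ ∃ r b, PSet G A r b)).card := by
  have h1 : ∑ V ∈ conn C j, ∑ v, (pends V v G).card =
      (((conn C j) ×ˢ (Finset.univ : Finset (Fin j))).sigma (fun p => pends p.1 p.2 G)).card := by
    rw [Finset.card_sigma, Finset.sum_product]
  have hinj : ∀ p ∈ (((conn C j) ×ˢ (Finset.univ : Finset (Fin j))).sigma
      (fun p => pends p.1 p.2 G)), ∀ q ∈ (((conn C j) ×ˢ (Finset.univ : Finset (Fin j))).sigma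
      (fun p => pends p.1 p.2 G)), p.2 = q.2 → p = q := by
    rintro ⟨⟨V, v⟩, φ⟩ hp ⟨⟨V', v'⟩, φ'⟩ hq (h : φ = φ')
    subst h
    simp only [Finset.mem_sigma, Finset.mem_product, mem_pends] at hp hq
    obtain ⟨_, _, hp1, b, hb, hp2⟩ := hp
    obtain ⟨_, _, hq1, b', hb', hq2⟩ := hq
    have e1 : V = V' := by
      ext x y
      rw [← hp1, ← hq1]
    have e2 : v = v' := by
      have := (hp2 v b hb).2 ⟨rfl, rfl⟩
      exact ((hq2 v b hb).1 this).1
    subst e1 e2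
    rfl
  rw [h1]
  apply Finset.card_le_mul_card_image_of_maps_to (f := fun p => Finset.univ.map p.2)
  · rintro ⟨⟨V, v⟩, φ⟩ hp
    simp only [Finset.mem_sigma, mem_pends] at hp
    simp only [Finset.mem_filter, Finset.mem_univ, true_and, Finset.card_map, Finset.card_univ,
      Fintype.card_fin]
    exact ⟨_, hp.2.pset⟩
  · intro A _
    refine le_trans ?_ (card_emb_range (j := j) A)
    apply Finset.card_le_card_of_injOn (fun p => p.2)
    · intro p hp
      simpa using (Finset.mem_filter.1 hp).2
    · intro p hp q hq h
      exact hinj p (Finset.mem_filter.1 hp).1 q (Finset.mem_filter.1 hq).1 h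

lemma sum_pset_le {n J : ℕ} (hn : 2 * J < n) (G : SimpleGraph (Fin n)) (hG : G.Connected) :
    ∑ j ∈ Finset.range (J + 1), ((Finset.univ : Finset (Finset (Fin n))).filter
        (fun A => A.card = j ∧ ∃ r b, PSet G A r b)).card ≤ n := by
  rw [← Finset.card_biUnion]
  · have hr : ∀ A ∈ ((Finset.range (J + 1)).biUnion fun j =>
        (Finset.univ : Finset (Finset (Fin n))).filter
        (fun A => A.card = j ∧ ∃ r b, PSet G A r b)), A.card ≤ J ∧ ∃ r b, PSet G A r b := by
      intro A hA
      simp only [Finset.mem_biUnion, Finset.mem_range, Finset.mem_filter, Finset.mem_univ,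
        true_and] at hA
      obtain ⟨j, hj, rfl, h⟩ := hA
      exact ⟨by omega, h⟩
    rcases Nat.eq_zero_or_pos n with h0 | h0
    · omega
    have : Nonempty (Fin n) := ⟨⟨0, h0⟩⟩
    conv_rhs => rw [← Fintype.card_fin n, ← Finset.card_univ]
    have hr' : ∀ A : Finset (Fin n), ∃ r : Fin n, (A.card ≤ J ∧ ∃ r b, PSet G A r b) →
        ∃ b, PSet G A r b := by
      intro A
      by_cases h : (A.card ≤ J ∧ ∃ r b, PSet G A r b)
      · obtain ⟨_, r, hb⟩ := h
        exact ⟨r, fun _ => hb⟩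
      · exact ⟨⟨0, h0⟩, fun h' => absurd h' h⟩
    choose f hf using hr'
    apply Finset.card_le_card_of_injOn f
    · intro _ _; simp
    · intro A hA A' hA' hEq
      obtain ⟨b, hb⟩ := hf A (hr A hA)
      obtain ⟨b', hb'⟩ := hf A' (hr A' hA')
      have c1 := (hr A hA).1
      have c2 := (hr A' hA').1
      rw [← hEq] at hb'
      exact hb.eq_of_root hG hb' (by rw [Fintype.card_fin]; omega)
  · intro i _ j _ hij
    rw [Function.onFun, Finset.disjoint_left]
    intro A h1 h2
    simp only [Finset.mem_filter] at h1 h2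
    exact hij (h1.2.1.symm.trans h2.2.1)

lemma weighted_pends_le {C : GraphClassOn} {n J : ℕ} (hn : 2 * J < n) (G : SimpleGraph (Fin n))
    (hG : G.Connected) :
    ∑ j ∈ Finset.range (J + 1), (1 / (j.factorial : ℝ)) *
      ∑ V ∈ conn C j, ∑ v, ((pends V v G).card : ℝ) ≤ n := by
  have h := sum_pset_le hn G hG
  have h' : ∑ j ∈ Finset.range (J + 1), (((Finset.univ : Finset (Finset (Fin n))).filter
        (fun A => A.card = j ∧ ∃ r b, PSet G A r b)).card : ℝ) ≤ n := by exact_mod_cast h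
  refine le_trans (Finset.sum_le_sum ?_) h'
  intro j _
  have h2 : ((∑ V ∈ conn C j, ∑ v, (pends V v G).card : ℕ) : ℝ) ≤ _ :=
    Nat.cast_le.2 (sum_pends_le (C := C) (j := j) G)
  push_cast at h2
  have hpos : (0 : ℝ) < j.factorial := by exact_mod_cast j.factorial_pos
  rw [one_div, inv_mul_le_iff₀ hpos]
  exact h2

/-- A single pendant count is at most `j! n`. -/
lemma pends_le {n j : ℕ} (hn : 2 * j < n) (P : SimpleGraph (Fin j)) (r : Fin j)
    (G : SimpleGraph (Fin n)) (hG : G.Connected) : (pends P r G).card ≤ j.factorial * n := by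
  by_cases hP : P.Connected
  · have h1 := sum_pends_le (C := fun _ _ _ => True) (j := j) G
    have h2 : (pends P r G).card ≤ ∑ V ∈ conn (fun _ _ _ => True) j, ∑ v, (pends V v G).card := by
      refine le_trans ?_ (Finset.single_le_sum (f := fun V => ∑ v, (pends V v G).card)
        (fun _ _ => Nat.zero_le _) (a := P) (by simp [mem_conn, hP]))
      exact Finset.single_le_sum (f := fun v => (pends P v G).card)
        (fun _ _ => Nat.zero_le _) (Finset.mem_univ r)
    refine h2.trans (h1.trans (Nat.mul_le_mul_left _ ?_))
    refine le_trans ?_ (sum_pset_le hn G hG)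
    exact Finset.single_le_sum (f := fun j => ((Finset.univ : Finset (Finset (Fin n))).filter
        (fun A => A.card = j ∧ ∃ r b, PSet G A r b)).card) (fun _ _ => Nat.zero_le _)
        (Finset.mem_range.2 (Nat.lt_succ_self j))
  · have : pends P r G = ∅ := by
      rw [pends, Finset.filter_eq_empty_iff]
      intro φ _ h
      exact hP h.1
    rw [this]; simp

/-- pendant copies in a join versus in the left part. -/
lemma pends_join_le {m j N w : ℕ} {B : SimpleGraph (Fin m)} {V : SimpleGraph (Fin j)}
    {G : SimpleGraph (Fin N)} {e : Fin m ⊕ Fin j ≃ Fin N} {a : Fin m} {v : Fin j}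
    (h : IsJoin B V G e a v) (hB : B.Connected) (hm : 2 * w < m)
    (P : SimpleGraph (Fin w)) (r : Fin w) :
    (pends P r B).card ≤ (pends P r G).card + w.factorial := by
  have h1 := Finset.card_filter_add_card_filter_not (s := pends P r B) (fun φ => ∃ x, φ x = a)
  have h2 := card_pends_through hm P r B hB a
  have h3 : ((pends P r B).filter (fun φ => ¬ ∃ x, φ x = a)).card ≤ (pends P r G).card := by
    apply Finset.card_le_card_of_injOn
      (fun φ => (φ.trans Function.Embedding.inl).trans e.toEmbedding)
    · intro φ hφ
      simp only [Finset.coe_filter, Set.mem_setOf_eq, mem_pends] at hφ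
      obtain ⟨⟨hP, p1, b, hb, p2⟩, hna⟩ := hφ
      simp only [Finset.mem_coe, mem_pends]
      refine ⟨hP, ?_, e (.inl b), ?_, ?_⟩
      · intro x y
        simp [h.left, p1]
      · intro x
        simpa using hb x
      · intro x z hz
        obtain ⟨u, rfl⟩ := e.surjective z
        rcases u with u | u
        · simp only [Function.Embedding.trans_apply, Function.Embedding.inl_apply,
            Equiv.coe_toEmbedding, h.left]
          rw [p2 x u (by intro y; simpa using hz y)]
          simp
        · simp only [Function.Embedding.trans_apply, Function.Embedding.inl_apply,
            Equiv.coe_toEmbedding, h.cross]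
          constructor
          · intro hh; exact absurd ⟨x, hh.1⟩ hna
          · rintro ⟨_, hh⟩; simp at hh
    · intro φ _ ψ _ hEq
      ext x
      have := DFunLike.congr_fun hEq x
      simpa using congrArg Fin.val (Sum.inl_injective (e.injective this))
  omega

lemma pends_join_ge {m j N w : ℕ} {B : SimpleGraph (Fin m)} {V : SimpleGraph (Fin j)}
    {G : SimpleGraph (Fin N)} {e : Fin m ⊕ Fin j ≃ Fin N} {a : Fin m} {v : Fin j}
    (h : IsJoin B V G e a v) (hB : B.Connected) (hV : V.Connected) (hm : 2 * w < m)
    (P : SimpleGraph (Fin w)) (r : Fin w) :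
    (pends P r G).card ≤ (pends P r B).card + (j + 1) * w.factorial := by
  have hG := h.connected hB hV
  have hN : N = m + j := by
    have := Fintype.card_congr e
    simpa using this.symm
  have hN' : 2 * w < N := by omega
  have h1 : pends P r G ⊆
      ((pends P r G).filter (fun φ => ∃ x, φ x = e (.inl a)) ∪
        Finset.univ.biUnion (fun y : Fin j => (pends P r G).filter (fun φ => ∃ x, φ x = e (.inr y)))) ∪
      (pends P r B).image (fun φ => (φ.trans Function.Embedding.inl).trans e.toEmbedding) := by
    intro φ hφ
    by_cases c1 : ∃ x, φ x = e (.inl a)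
    · simp [hφ, c1]
    by_cases c2 : ∃ y, ∃ x, φ x = e (.inr y)
    · apply Finset.mem_union_left
      apply Finset.mem_union_right
      obtain ⟨y, hy⟩ := c2
      exact Finset.mem_biUnion.2 ⟨y, Finset.mem_univ _, Finset.mem_filter.2 ⟨hφ, hy⟩⟩
    apply Finset.mem_union_right
    have c3 : ∀ x, ∃ u, φ x = e (.inl u) := by
      intro x
      obtain ⟨u, hu⟩ := e.surjective (φ x)
      rcases u with u | u
      · exact ⟨u, hu.symm⟩
      · exact absurd ⟨u, x, hu.symm⟩ c2
    choose f hf using c3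
    rw [mem_pends] at hφ
    obtain ⟨hP, p1, b, hb, p2⟩ := hφ
    have hfi : Function.Injective f := by
      intro x y hxy
      apply φ.injective
      rw [hf, hf, hxy]
    have hrb : G.Adj (φ r) b := (p2 r b hb).2 ⟨rfl, rfl⟩
    obtain ⟨b', rfl⟩ : ∃ b', b = e (.inl b') := by
      obtain ⟨u, hu⟩ := e.surjective b
      rcases u with u | u
      · exact ⟨u, hu.symm⟩
      · rw [← hu, hf, h.cross] at hrb
        exact absurd ⟨r, by rw [hf, hrb.1]⟩ c1
    refine Finset.mem_image.2 ⟨⟨f, hfi⟩, ?_, ?_⟩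
    · rw [mem_pends]
      refine ⟨hP, ?_, b', ?_, ?_⟩
      · intro x y
        rw [← p1, hf, hf, h.left]; rfl
      · intro x hx
        apply hb x
        rw [hf, ← hx]; rfl
      · intro x z hz
        have := p2 x (e (.inl z)) (by
          intro y hy
          apply hz y
          rw [hf] at hy
          exact Sum.inl_injective (e.injective hy))
        rw [hf, h.left] at this
        simpa using this
    · ext x
      simp [hf]
  refine (Finset.card_le_card h1).trans ((Finset.card_union_le _ _).trans ?_)
  have h2 : ((pends P r B).image (fun φ => (φ.trans Function.Embedding.inl).trans e.toEmbedding)).card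
    ≤ (pends P r B).card := Finset.card_image_le
  have h3 := (Finset.card_union_le ((pends P r G).filter (fun φ => ∃ x, φ x = e (.inl a)))
    (Finset.univ.biUnion (fun y : Fin j => (pends P r G).filter (fun φ => ∃ x, φ x = e (.inr y)))))
  have h4 := card_pends_through hN' P r G hG (e (.inl a))
  have h5 : (Finset.univ.biUnion (fun y : Fin j =>
      (pends P r G).filter (fun φ => ∃ x, φ x = e (.inr y)))).card ≤ j * w.factorial := by
    refine (Finset.card_biUnion_le).trans ?_
    refine (Finset.sum_le_sum (fun y _ => card_pends_through hN' P r G hG (e (.inr y)))).trans ?_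
    simp
  have h6 : (j + 1) * w.factorial = j * w.factorial + w.factorial := by ring
  omega

end BA

namespace BA

lemma sum_le_of_inj {α β : Type*} (s : Finset α) (t : Finset β) (f : α → β) (F : α → ℝ) (F' : β → ℝ)
    (hm : ∀ x ∈ s, f x ∈ t) (hinj : ∀ x ∈ s, ∀ y ∈ s, f x = f y → x = y)
    (hF : ∀ x ∈ s, F x ≤ F' (f x)) (h0 : ∀ y ∈ t, 0 ≤ F' y) :
    ∑ x ∈ s, F x ≤ ∑ y ∈ t, F' y := by
  refine (Finset.sum_le_sum hF).trans ?_
  rw [← Finset.sum_image (f := F') (g := f) (fun x hx y hy h => hinj x hx y hy h)]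
  apply Finset.sum_le_sum_of_subset_of_nonneg
  · intro y hy
    obtain ⟨x, hx, rfl⟩ := Finset.mem_image.1 hy
    exact hm x hx
  · intro y hy _
    exact h0 y hy

lemma exists_ext {m j : ℕ} (ψ : Fin j ↪ Fin (m + j)) :
    ∃ e : Fin m ⊕ Fin j ≃ Fin (m + j), ∀ y, e (.inr y) = ψ y := by
  obtain ⟨g, hg⟩ := Finset.exists_equiv_extend_of_card_eq (α := Fin m ⊕ Fin j)
    (t := (Finset.univ : Finset (Fin (m + j)))) (by simp)
    (s := Finset.univ.map Function.Embedding.inr)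
    (f := Sum.elim (Fin.castAdd j) ψ) (by simp) (by
      intro x hx y hy
      simp only [Finset.coe_map, Finset.coe_univ, Set.image_univ, Set.mem_range,
        Function.Embedding.inr_apply] at hx hy
      obtain ⟨x, rfl⟩ := hx
      obtain ⟨y, rfl⟩ := hy
      simp)
  refine ⟨g.trans (Equiv.subtypeUnivEquiv (by simp)), fun y => ?_⟩
  have := hg (.inr y) (by simp)
  simpa using this

/-- an extension of an embedding to an equivalence -/
noncomputable def ext {m j : ℕ} (ψ : Fin j ↪ Fin (m + j)) : Fin m ⊕ Fin j ≃ Fin (m + j) :=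
  (exists_ext ψ).choose

lemma ext_inr {m j : ℕ} (ψ : Fin j ↪ Fin (m + j)) (y : Fin j) : ext ψ (.inr y) = ψ y :=
  (exists_ext ψ).choose_spec y

lemma IsJoin.left_inj {α β γ : Type} {U U' : SimpleGraph α} {V : SimpleGraph β} {W : SimpleGraph γ}
    {e : α ⊕ β ≃ γ} {a a' : α} {b : β} (h : IsJoin U V W e a b) (h' : IsJoin U' V W e a' b) :
    U = U' ∧ a = a' := by
  constructor
  · ext x y
    rw [← h.left, ← h'.left]
  · have := (h.cross a b).2 ⟨rfl, rfl⟩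
    exact ((h'.cross a b).1 this).1

lemma attach0 {C : GraphClassOn} (hI : ClassIsoInvariant C) (hA : ClassAddable C) {m j : ℕ}
    {V : SimpleGraph (Fin j)} (hV : V ∈ conn C j) (v : Fin j)
    (F : SimpleGraph (Fin m) → ℝ) (F' : SimpleGraph (Fin (m + j)) → ℝ) (h0 : ∀ G, 0 ≤ F' G)
    (hF : ∀ B ∈ conn C m, ∀ G e b, IsJoin B V G e b v → F B ≤ F' G) :
    ((m + j).descFactorial j : ℝ) * ∑ B ∈ conn C m, (m : ℝ) * F B ≤
      ∑ G ∈ conn C (m + j), ((pends V v G).card : ℝ) * F' G := by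
  rw [mem_conn] at hV
  have h1 : ((m + j).descFactorial j : ℝ) * ∑ B ∈ conn C m, (m : ℝ) * F B =
      ∑ p ∈ (Finset.univ : Finset (Fin j ↪ Fin (m + j))) ×ˢ
        (conn C m ×ˢ (Finset.univ : Finset (Fin m))), F p.2.1 := by
    rw [Finset.sum_product]
    simp only [Finset.sum_product, Finset.sum_const, Finset.card_univ, Fintype.card_fin,
      nsmul_eq_mul, Fintype.card_embedding_eq]
  have h2 : ∑ G ∈ conn C (m + j), ((pends V v G).card : ℝ) * F' G =
      ∑ p ∈ (conn C (m + j)).sigma (fun G => pends V v G), F' p.1 := by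
    rw [Finset.sum_sigma]
    simp
  rw [h1, h2]
  apply sum_le_of_inj _ _ (fun p => ⟨joinG p.2.1 V (ext p.1) p.2.2 v, p.1⟩)
  · rintro ⟨ψ, B, b⟩ hp
    simp only [Finset.mem_product, Finset.mem_univ, and_true, true_and, mem_conn] at hp
    have hj := isJoin_joinG B V (ext ψ) b v
    simp only [Finset.mem_sigma, mem_conn, mem_pends]
    refine ⟨⟨hj.mem hI hA hp.1 hV.1, hj.connected hp.2 hV.2⟩, hV.2, ?_, ext ψ (.inl b), ?_, ?_⟩
    · intro x y
      rw [← ext_inr, ← ext_inr, hj.right]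
    · intro x
      rw [← ext_inr]
      simp
    · intro x z hz
      obtain ⟨u, rfl⟩ := (ext ψ).surjective z
      rcases u with u | u
      · rw [← ext_inr, SimpleGraph.adj_comm, hj.cross]
        simp [and_comm]
      · exact absurd (ext_inr ψ u).symm (hz u)
  · rintro ⟨ψ, B, b⟩ hp ⟨ψ', B', b'⟩ hp' heq
    simp only [Sigma.mk.injEq] at heq
    obtain ⟨h3, h4⟩ := heq
    have h4 := eq_of_heq h4
    subst h4
    have hj := isJoin_joinG B V (ext ψ) b v
    have hj' := isJoin_joinG B' V (ext ψ) b' v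
    rw [← h3] at hj'
    obtain ⟨rfl, rfl⟩ := hj.left_inj hj'
    rfl
  · rintro ⟨ψ, B, b⟩ hp
    simp only [Finset.mem_product, Finset.mem_univ, and_true, true_and] at hp
    exact hF B hp _ _ _ (isJoin_joinG B V (ext ψ) b v)
  · intro p _
    exact h0 _

lemma attach1 {C : GraphClassOn} (hI : ClassIsoInvariant C) (hA : ClassAddable C) {m j i w : ℕ}
    {V : SimpleGraph (Fin j)} (hV : V ∈ conn C j) (v : Fin j)
    {U : SimpleGraph (Fin i)} {W : SimpleGraph (Fin w)} {e0 : Fin i ⊕ Fin j ≃ Fin w}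
    {u : Fin i} (hW : IsJoin U V W e0 u v) (r : Fin i)
    (F : SimpleGraph (Fin m) → ℝ) (F' : SimpleGraph (Fin (m + j)) → ℝ) (h0 : ∀ G, 0 ≤ F' G)
    (hF : ∀ B ∈ conn C m, ∀ G e b, IsJoin B V G e b v → F B ≤ F' G) :
    ((m + j).descFactorial j : ℝ) * ∑ B ∈ conn C m, ((pends U r B).card : ℝ) * F B ≤
      ∑ G ∈ conn C (m + j), ((pends W (e0 (.inl r)) G).card : ℝ) * F' G := by
  rw [mem_conn] at hV
  have h1 : ((m + j).descFactorial j : ℝ) * ∑ B ∈ conn C m, ((pends U r B).card : ℝ) * F B =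
      ∑ p ∈ (Finset.univ : Finset (Fin j ↪ Fin (m + j))) ×ˢ
        ((conn C m).sigma (fun B => pends U r B)), F p.2.1 := by
    rw [Finset.sum_product]
    simp only [Finset.sum_sigma, Finset.sum_const, Finset.card_univ, Fintype.card_fin,
      nsmul_eq_mul, Fintype.card_embedding_eq]
  have h2 : ∑ G ∈ conn C (m + j), ((pends W (e0 (.inl r)) G).card : ℝ) * F' G =
      ∑ p ∈ (conn C (m + j)).sigma (fun G => pends W (e0 (.inl r)) G), F' p.1 := by
    rw [Finset.sum_sigma]
    simp
  rw [h1, h2]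
  apply sum_le_of_inj _ _ (fun p => ⟨joinG p.2.1 V (ext p.1) (p.2.2 u) v,
    (e0.symm.toEmbedding.trans (p.2.2.sumMap (Function.Embedding.refl _))).trans
      (ext p.1).toEmbedding⟩)
  · rintro ⟨ψ, B, φ⟩ hp
    simp only [Finset.mem_product, Finset.mem_univ, true_and, Finset.mem_sigma, mem_conn,
      mem_pends] at hp
    obtain ⟨hB, hU, p1, b, hb, p2⟩ := hp
    have hj := isJoin_joinG B V (ext ψ) (φ u) v
    simp only [Finset.mem_sigma, mem_conn, mem_pends]
    refine ⟨⟨hj.mem hI hA hB.1 hV.1, hj.connected hB.2 hV.2⟩, hW.connected hU hV.2, ?_,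
      ext ψ (.inl b), ?_, ?_⟩
    · intro x y
      obtain ⟨x, rfl⟩ := e0.surjective x
      obtain ⟨y, rfl⟩ := e0.surjective y
      rcases x with x | x <;> rcases y with y | y
      · simp [hj.left, hW.left, p1]
      · simp [hj.cross, hW.cross]
      · simp [SimpleGraph.adj_comm _ (ext ψ (.inr x)), SimpleGraph.adj_comm _ (e0 (.inr x)),
          hj.cross, hW.cross]
      · simp [hj.right, hW.right]
    · intro x
      obtain ⟨x, rfl⟩ := e0.surjective x
      rcases x with x | x
      · simpa using hb x
      · simp
    · intro x z hz
      obtain ⟨t, rfl⟩ := (ext ψ).surjective z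
      rcases t with t | t
      · have ht : ∀ y, φ y ≠ t := by
          intro y hy
          apply hz (e0 (.inl y))
          simp [hy]
        obtain ⟨x, rfl⟩ := e0.surjective x
        rcases x with x | x
        · simp [hj.left, p2 x t ht]
        · simp only [Function.Embedding.trans_apply, Equiv.coe_toEmbedding,
            Equiv.symm_apply_apply, Function.Embedding.coe_sumMap, Sum.map_inr,
            Function.Embedding.refl_apply, SimpleGraph.adj_comm _ (ext ψ (.inr x)), hj.cross]
          constructor
          · rintro ⟨h, _⟩; exact absurd h.symm (ht u)
          · rintro ⟨h, _⟩
            have := e0.injective h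
            cases this
      · exfalso
        apply hz (e0 (.inr t))
        simp
  · rintro ⟨ψ, B, φ⟩ hp ⟨ψ', B', φ'⟩ hp' heq
    simp only [Sigma.mk.injEq] at heq
    obtain ⟨h3, h4⟩ := heq
    have h4 := eq_of_heq h4
    have h5 : ψ = ψ' := by
      ext y
      have := DFunLike.congr_fun h4 (e0 (.inr y))
      simp only [Function.Embedding.trans_apply, Equiv.coe_toEmbedding,
            Equiv.symm_apply_apply, Function.Embedding.coe_sumMap, Sum.map_inr,
            Function.Embedding.refl_apply, ext_inr] at this
      rw [this]
    subst h5
    have hj := isJoin_joinG B V (ext ψ) (φ u) v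
    have hj' := isJoin_joinG B' V (ext ψ) (φ' u) v
    rw [← h3] at hj'
    obtain ⟨rfl, _⟩ := hj.left_inj hj'
    have h6 : φ = φ' := by
      ext y
      have := DFunLike.congr_fun h4 (e0 (.inl y))
      simp only [Function.Embedding.trans_apply, Equiv.coe_toEmbedding,
            Equiv.symm_apply_apply, Function.Embedding.coe_sumMap, Sum.map_inl] at this
      rw [Sum.inl_injective ((ext ψ).injective this)]
    rw [h6]
  · rintro ⟨ψ, B, φ⟩ hp
    simp only [Finset.mem_product, Finset.mem_univ, true_and, Finset.mem_sigma] at hp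
    exact hF B hp.1 _ _ _ (isJoin_joinG B V (ext ψ) (φ u) v)
  · intro p _
    exact h0 _

lemma bot_mem {C : GraphClassOn} (hne : ∀ n : ℕ, 1 ≤ n → ∃ G : SimpleGraph (Fin n), C (Fin n) G) :
    (⊥ : SimpleGraph (Fin 1)) ∈ conn C 1 := by
  obtain ⟨G, hG⟩ := hne 1 le_rfl
  have : G = ⊥ := Subsingleton.elim _ _
  subst this
  rw [mem_conn]
  refine ⟨hG, ⟨?_⟩⟩
  intro x y
  rw [Subsingleton.elim x y]

lemma conn_nonempty {C : GraphClassOn} (hI : ClassIsoInvariant C) (hA : ClassAddable C)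
    (hne : ∀ n : ℕ, 1 ≤ n → ∃ G : SimpleGraph (Fin n), C (Fin n) G) (n : ℕ) :
    (conn C (n + 1)).Nonempty := by
  induction n with
  | zero => exact ⟨_, bot_mem hne⟩
  | succ n ih =>
    obtain ⟨B, hB⟩ := ih
    have h1 := bot_mem hne
    rw [mem_conn] at hB h1
    have hj := isJoin_joinG B (⊥ : SimpleGraph (Fin 1)) finSumFinEquiv 0 0
    exact ⟨_, mem_conn.2 ⟨hj.mem hI hA hB.1 h1.1, hj.connected hB.2 h1.2⟩⟩

end BA

namespace BA

/-- Exponential formula inequality. -/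
lemma exp_formula (S : ℕ) (a K : ℕ → ℝ) (ha : ∀ s, 0 ≤ a s) (hK : ∀ j, 0 ≤ K j) (h0 : a 0 ≤ 1)
    (hrec : ∀ s : ℕ, (s : ℝ) * a s ≤ ∑ j ∈ Finset.range (s + 1), (j : ℝ) * K j * a (s - j)) :
    ∑ s ∈ Finset.range (S + 1), a s ≤ Real.exp (∑ j ∈ Finset.range (S + 1), K j) := by
  set f : ℝ → ℝ := fun q => ∑ s ∈ Finset.range (S + 1), a s * q ^ s with hf
  set k : ℝ → ℝ := fun q => ∑ j ∈ Finset.range (S + 1), K j * q ^ j with hk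
  set f' : ℝ → ℝ := fun q => ∑ s ∈ Finset.range (S + 1), a s * ((s : ℝ) * q ^ (s - 1)) with hf'
  set k' : ℝ → ℝ := fun q => ∑ j ∈ Finset.range (S + 1), K j * ((j : ℝ) * q ^ (j - 1)) with hk'
  have df : ∀ q, HasDerivAt f (f' q) q := fun q => by
    apply HasDerivAt.fun_sum
    intro s _
    exact (hasDerivAt_pow s q).const_mul _
  have dk : ∀ q, HasDerivAt k (k' q) q := fun q => by
    apply HasDerivAt.fun_sum
    intro s _
    exact (hasDerivAt_pow s q).const_mul _
  have main : ∀ q, 0 < q → q < 1 → f' q ≤ k' q * f q := by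
    intro q hq hq1
    have hpow : ∀ n : ℕ, (n : ℝ) * q ^ (n - 1) * q = n * q ^ n := by
      intro n
      rcases n with _ | n
      · simp
      · rw [Nat.add_sub_cancel, mul_assoc, pow_succ]
    have e1 : f' q * q = ∑ s ∈ Finset.range (S + 1), (s : ℝ) * a s * q ^ s := by
      rw [hf', Finset.sum_mul]
      apply Finset.sum_congr rfl
      intro s _
      rw [mul_assoc, hpow]; ring
    have e2 : k' q * q = ∑ j ∈ Finset.range (S + 1), (j : ℝ) * K j * q ^ j := by
      rw [hk', Finset.sum_mul]
      apply Finset.sum_congr rfl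
      intro s _
      rw [mul_assoc, hpow]; ring
    have e3 : f' q * q ≤ (k' q * q) * f q := by
      rw [e1, e2, hf, Finset.sum_mul_sum]
      calc ∑ s ∈ Finset.range (S + 1), (s : ℝ) * a s * q ^ s
          ≤ ∑ s ∈ Finset.range (S + 1), ∑ j ∈ Finset.range (s + 1),
            ((j : ℝ) * K j * q ^ j) * (a (s - j) * q ^ (s - j)) := by
            apply Finset.sum_le_sum
            intro s _
            have := mul_le_mul_of_nonneg_right (hrec s) (pow_nonneg hq.le s)
            refine this.trans (le_of_eq ?_)
            rw [Finset.sum_mul]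
            apply Finset.sum_congr rfl
            intro j hj
            have hj' : j + (s - j) = s := by
              have := Finset.mem_range.1 hj; omega
            conv_lhs => rw [← hj', pow_add, hj']
            ring
        _ = ∑ p ∈ (Finset.range (S + 1)).sigma (fun s => Finset.range (s + 1)),
            ((p.2 : ℝ) * K p.2 * q ^ p.2) * (a (p.1 - p.2) * q ^ (p.1 - p.2)) := by
            rw [Finset.sum_sigma]
        _ ≤ ∑ p ∈ (Finset.range (S + 1)) ×ˢ (Finset.range (S + 1)),
            ((p.1 : ℝ) * K p.1 * q ^ p.1) * (a p.2 * q ^ p.2) := by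
            apply sum_le_of_inj _ _ (fun p => (p.2, p.1 - p.2))
            · rintro ⟨s, j⟩ h
              simp only [Finset.mem_sigma, Finset.mem_range, Finset.mem_product] at h ⊢
              omega
            · rintro ⟨s, j⟩ h ⟨s', j'⟩ h' heq
              simp only [Finset.mem_sigma, Finset.mem_range, Prod.mk.injEq] at h h' heq
              obtain ⟨rfl, h3⟩ := heq
              have : s = s' := by omega
              rw [this]
            · rintro p _; exact le_rfl
            · rintro p _
              have := hK p.1
              have := ha p.2
              positivity
        _ = _ := by rw [Finset.sum_product]
    have e4 : (k' q * q) * f q = (k' q * f q) * q := by ring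
    rw [e4] at e3
    exact le_of_mul_le_mul_right e3 hq
  have hanti : AntitoneOn (fun q => f q * Real.exp (-k q)) (Set.Icc 0 1) := by
    have hd : ∀ q, HasDerivAt (fun q => f q * Real.exp (-k q))
      (f' q * Real.exp (-k q) + f q * (Real.exp (-k q) * -k' q)) q := fun q =>
      (df q).mul ((dk q).neg.exp)
    apply antitoneOn_of_deriv_nonpos (convex_Icc 0 1)
    · exact fun q _ => (hd q).continuousAt.continuousWithinAt
    · exact fun q _ => (hd q).differentiableAt.differentiableWithinAt
    · intro q hq
      rw [interior_Icc] at hq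
      rw [(hd q).deriv]
      have h1 := main q hq.1 hq.2
      have : f' q * Real.exp (-k q) + f q * (Real.exp (-k q) * -k' q) =
        (f' q - k' q * f q) * Real.exp (-k q) := by ring
      rw [this]
      exact mul_nonpos_of_nonpos_of_nonneg (by linarith) (Real.exp_pos _).le
  have h01 := hanti (Set.left_mem_Icc.2 zero_le_one) (Set.right_mem_Icc.2 zero_le_one) zero_le_one
  have hf1 : f 1 = ∑ s ∈ Finset.range (S + 1), a s := by simp [hf]
  have hk1 : k 1 = ∑ s ∈ Finset.range (S + 1), K s := by simp [hk]
  have hf0 : f 0 = a 0 := by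
    simp [hf, Finset.sum_range_succ', pow_succ]
  have hk0 : 0 ≤ k 0 := Finset.sum_nonneg fun j _ => mul_nonneg (hK j) (by positivity)
  simp only [hf1, hk1, hf0] at h01
  rw [Real.exp_neg, ← div_eq_mul_inv, div_le_iff₀ (Real.exp_pos _)] at h01
  refine h01.trans ?_
  have h2 : Real.exp (-k 0) ≤ 1 := Real.exp_le_one_iff.2 (by linarith)
  have h3 : a 0 * Real.exp (-k 0) ≤ 1 := by
    have := mul_le_mul h0 h2 (Real.exp_pos _).le zero_le_one
    simpa using this
  have := mul_le_mul_of_nonneg_right h3 (Real.exp_pos (∑ s ∈ Finset.range (S + 1), K s)).le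
  simpa using this

/-- Dissymmetry. -/
lemma sum_K_le (K : ℕ → ℝ) (hK : ∀ j, 0 ≤ K j) (hK0 : K 0 = 0)
    (h1 : ∀ J : ℕ, ∑ j ∈ Finset.range (J + 1), (j : ℝ) * K j ≤ 1)
    (h2 : ∀ j : ℕ, ∑ p ∈ Finset.HasAntidiagonal.antidiagonal j, ((p.1 : ℝ) * K p.1) * (p.2 * K p.2) ≤
      2 * ((j : ℝ) - 1) * K j) (S : ℕ) :
    ∑ j ∈ Finset.range (S + 1), K j ≤ 1 / 2 := by
  set T : ℕ → ℝ := fun j => (j : ℝ) * K j with hT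
  have hTn : ∀ j, 0 ≤ T j := fun j => mul_nonneg (Nat.cast_nonneg j) (hK j)
  have hle : ∀ n, ∑ j ∈ Finset.range n, T j ≤ 1 := fun n =>
    (Finset.sum_le_sum_of_subset_of_nonneg (Finset.range_mono (Nat.le_succ n))
      (fun j _ _ => hTn j)).trans (h1 n)
  have hs : Summable T := summable_of_sum_range_le hTn hle
  have hT1 : ∑' j, T j ≤ 1 := hs.tsum_le_of_sum_range_le hle
  have hnorm : Summable fun j => ‖T j‖ := by
    simpa [abs_of_nonneg (hTn _)] using hs.norm
  have hprod := tsum_mul_tsum_eq_tsum_sum_antidiagonal_of_summable_norm hnorm hnorm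
  have hsum2 : Summable fun j => ∑ p ∈ Finset.HasAntidiagonal.antidiagonal j, T p.1 * T p.2 :=
    (summable_norm_sum_mul_antidiagonal_of_summable_norm hnorm hnorm).of_norm
  have hKle : ∀ j, K j ≤ T j - (1 / 2) * ∑ p ∈ Finset.HasAntidiagonal.antidiagonal j, T p.1 * T p.2 := by
    intro j
    have := h2 j
    simp only [hT] at this ⊢
    linarith
  have hKs : Summable K := by
    refine Summable.of_nonneg_of_le hK (fun j => ?_) hs
    rcases Nat.eq_zero_or_pos j with rfl | hj
    · rw [hK0]; exact hTn 0
    · have : (1 : ℝ) ≤ j := by exact_mod_cast hj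
      have := hK j
      simp only [hT]
      nlinarith
  have h3 : ∑' j, K j ≤ ∑' j, T j - (1 / 2) * ((∑' j, T j) * (∑' j, T j)) := by
    rw [hprod, ← tsum_mul_left, ← hs.tsum_sub (hsum2.mul_left _)]
    exact hKs.tsum_le_tsum hKle (hs.sub (hsum2.mul_left _))
  refine (hKs.sum_le_tsum _ (fun j _ => hK j)).trans (h3.trans ?_)
  nlinarith [sq_nonneg (1 - ∑' j, T j)]

end BA

namespace BA

/-- `c` is a valid multiplier for attaching `V` in any context. -/
def Good (ξ : ∀ j : ℕ, SimpleGraph (Fin j) → Fin j → ℝ) {j : ℕ} (V : SimpleGraph (Fin j)) (c : ℝ) :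
    Prop :=
  0 ≤ c ∧ (∀ v, c ≤ ξ j V v) ∧ ∀ (i w : ℕ) (U : SimpleGraph (Fin i)) (W : SimpleGraph (Fin w))
    (e : Fin i ⊕ Fin j ≃ Fin w) (u : Fin i) (v : Fin j) (r : Fin i), IsJoin U V W e u v →
      c * ξ i U r ≤ ξ w W (e (.inl r))

/-- The best multiplier. -/
noncomputable def hH (ξ : ∀ j : ℕ, SimpleGraph (Fin j) → Fin j → ℝ) {j : ℕ}
    (V : SimpleGraph (Fin j)) : ℝ := sSup {c | Good ξ V c}

lemma good_zero {ξ : ∀ j : ℕ, SimpleGraph (Fin j) → Fin j → ℝ} (hξ : ∀ j V v, 0 ≤ ξ j V v) {j : ℕ}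
    (V : SimpleGraph (Fin j)) : Good ξ V 0 :=
  ⟨le_rfl, fun v => hξ _ _ _, fun i w U W e u v r _ => by rw [zero_mul]; exact hξ _ _ _⟩

lemma le_hH {ξ : ∀ j : ℕ, SimpleGraph (Fin j) → Fin j → ℝ} {j : ℕ}
    {V : SimpleGraph (Fin j)} (hV : V.Connected) {c : ℝ} (hc : Good ξ V c) : c ≤ hH ξ V := by
  obtain ⟨v⟩ := hV.nonempty
  exact le_csSup ⟨ξ j V v, fun c hc => hc.2.1 v⟩ hc

lemma good_hH {ξ : ∀ j : ℕ, SimpleGraph (Fin j) → Fin j → ℝ} (hξ : ∀ j V v, 0 ≤ ξ j V v) {j : ℕ}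
    {V : SimpleGraph (Fin j)} (hV : V.Connected) : Good ξ V (hH ξ V) := by
  have hne : {c | Good ξ V c}.Nonempty := ⟨0, good_zero hξ V⟩
  refine ⟨le_hH hV (good_zero hξ V), fun v => csSup_le hne fun c hc => hc.2.1 v, ?_⟩
  intro i w U W e u v r h
  rcases (hξ i U r).eq_or_lt with h0 | h0
  · rw [← h0, mul_zero]; exact hξ _ _ _
  · rw [← le_div_iff₀ h0]
    apply csSup_le hne
    intro c hc
    rw [le_div_iff₀ h0]
    exact hc.2.2 i w U W e u v r h

lemma isJoin_assoc {i j1 j2 j w : ℕ} {U : SimpleGraph (Fin i)} {V1 : SimpleGraph (Fin j1)}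
    {V2 : SimpleGraph (Fin j2)} {V : SimpleGraph (Fin j)} {W : SimpleGraph (Fin w)}
    {e12 : Fin j1 ⊕ Fin j2 ≃ Fin j} {a : Fin j1} {b : Fin j2} (h : IsJoin V1 V2 V e12 a b)
    {e : Fin i ⊕ Fin j ≃ Fin w} {u : Fin i} {x : Fin j1} (hW : IsJoin U V W e u (e12 (.inl x))) :
    ∃ (W1 : SimpleGraph (Fin (i + j1))) (e1 : Fin i ⊕ Fin j1 ≃ Fin (i + j1))
      (e2 : Fin (i + j1) ⊕ Fin j2 ≃ Fin w), IsJoin U V1 W1 e1 u x ∧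
      IsJoin W1 V2 W e2 (e1 (.inr a)) b ∧ ∀ r, e2 (.inl (e1 (.inl r))) = e (.inl r) := by
  refine ⟨joinG U V1 finSumFinEquiv u x, finSumFinEquiv,
    (((Equiv.sumCongr finSumFinEquiv.symm (Equiv.refl _)).trans (Equiv.sumAssoc _ _ _)).trans
      (Equiv.sumCongr (Equiv.refl _) e12)).trans e, isJoin_joinG _ _ _ _ _, ?_, ?_⟩
  · have hj := isJoin_joinG U V1 finSumFinEquiv u x
    constructor
    · intro p q
      obtain ⟨p, rfl⟩ := finSumFinEquiv.surjective p
      obtain ⟨q, rfl⟩ := finSumFinEquiv.surjective q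
      rcases p with p | p <;> rcases q with q | q
      · rw [hj.left]; simpa using hW.left p q
      · rw [hj.cross]; simpa using hW.cross p (e12 (.inl q))
      · rw [SimpleGraph.adj_comm, SimpleGraph.adj_comm (joinG U V1 finSumFinEquiv u x), hj.cross]
        simpa using hW.cross q (e12 (.inl p))
      · rw [hj.right, ← h.left]; simpa using hW.right (e12 (.inl p)) (e12 (.inl q))
    · intro p q
      rw [← h.right]; simpa using hW.right (e12 (.inr p)) (e12 (.inr q))
    · intro p q
      obtain ⟨p, rfl⟩ := finSumFinEquiv.surjective p
      rcases p with p | p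
      · have := hW.cross p (e12 (.inr q))
        simp only [EmbeddingLike.apply_eq_iff_eq, reduceCtorEq, and_false, iff_false] at this ⊢
        simpa using this
      · have := h.cross p q
        rw [← hW.right] at this
        simp only [EmbeddingLike.apply_eq_iff_eq, Sum.inr.injEq]
        rw [← this]
        simp
  · intro r
    simp

lemma good_mul_aux {ξ : ∀ j : ℕ, SimpleGraph (Fin j) → Fin j → ℝ} (hξ : ∀ j V v, 0 ≤ ξ j V v)
    {j1 j2 j : ℕ} {V1 : SimpleGraph (Fin j1)}
    {V2 : SimpleGraph (Fin j2)} {V : SimpleGraph (Fin j)}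
    {e12 : Fin j1 ⊕ Fin j2 ≃ Fin j} {a : Fin j1} {b : Fin j2} (h : IsJoin V1 V2 V e12 a b)
    {c1 c2 : ℝ} (h1 : Good ξ V1 c1) (h2 : Good ξ V2 c2) (x : Fin j1) :
    c1 * c2 ≤ ξ j V (e12 (.inl x)) ∧ ∀ (i w : ℕ) (U : SimpleGraph (Fin i)) (W : SimpleGraph (Fin w))
    (e : Fin i ⊕ Fin j ≃ Fin w) (u : Fin i) (r : Fin i), IsJoin U V W e u (e12 (.inl x)) →
      c1 * c2 * ξ i U r ≤ ξ w W (e (.inl r)) := by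
  constructor
  · have := h2.2.2 _ _ _ _ _ _ _ x h
    refine le_trans ?_ this
    rw [mul_comm]
    exact mul_le_mul_of_nonneg_left (h1.2.1 x) h2.1
  · intro i w U W e u r hW
    obtain ⟨W1, e1, e2, hj1, hj2, he⟩ := isJoin_assoc h hW
    have k1 := h1.2.2 _ _ _ _ _ _ _ r hj1
    have k2 := h2.2.2 _ _ _ _ _ _ _ (e1 (.inl r)) hj2
    rw [he] at k2
    refine le_trans ?_ k2
    calc c1 * c2 * ξ i U r = c2 * (c1 * ξ i U r) := by ring
      _ ≤ _ := mul_le_mul_of_nonneg_left k1 h2.1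

lemma good_mul {ξ : ∀ j : ℕ, SimpleGraph (Fin j) → Fin j → ℝ} (hξ : ∀ j V v, 0 ≤ ξ j V v)
    {j1 j2 j : ℕ} {V1 : SimpleGraph (Fin j1)}
    {V2 : SimpleGraph (Fin j2)} {V : SimpleGraph (Fin j)}
    {e12 : Fin j1 ⊕ Fin j2 ≃ Fin j} {a : Fin j1} {b : Fin j2} (h : IsJoin V1 V2 V e12 a b)
    {c1 c2 : ℝ} (h1 : Good ξ V1 c1) (h2 : Good ξ V2 c2) : Good ξ V (c1 * c2) := by
  refine ⟨mul_nonneg h1.1 h2.1, ?_, ?_⟩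
  · intro v
    obtain ⟨t, rfl⟩ := e12.surjective v
    rcases t with t | t
    · exact (good_mul_aux hξ h h1 h2 t).1
    · have := (good_mul_aux hξ h.symm h2 h1 t).1
      rw [mul_comm]
      simpa using this
  · intro i w U W e u v r hW
    obtain ⟨t, rfl⟩ := e12.surjective v
    rcases t with t | t
    · exact (good_mul_aux hξ h h1 h2 t).2 _ _ _ _ _ _ _ hW
    · have := (good_mul_aux hξ h.symm h2 h1 t).2 _ _ _ _ _ _ r hW
      rw [mul_comm c1]
      exact this

lemma hH_mul {ξ : ∀ j : ℕ, SimpleGraph (Fin j) → Fin j → ℝ} (hξ : ∀ j V v, 0 ≤ ξ j V v)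
    {j1 j2 j : ℕ} {V1 : SimpleGraph (Fin j1)}
    {V2 : SimpleGraph (Fin j2)} {V : SimpleGraph (Fin j)}
    {e12 : Fin j1 ⊕ Fin j2 ≃ Fin j} {a : Fin j1} {b : Fin j2} (h : IsJoin V1 V2 V e12 a b)
    (h1 : V1.Connected) (h2 : V2.Connected) : hH ξ V1 * hH ξ V2 ≤ hH ξ V :=
  le_hH (h.connected h1 h2) (good_mul hξ h (good_hH hξ h1) (good_hH hξ h2))

lemma IsJoin.isBridge {α β γ : Type} {U : SimpleGraph α} {V : SimpleGraph β} {W : SimpleGraph γ}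
    {e : α ⊕ β ≃ γ} {a : α} {b : β} (h : IsJoin U V W e a b) (hU : U.Connected) :
    W.IsBridge s(e (.inl a), e (.inr b)) := by
  rw [SimpleGraph.isBridge_iff]
  intro hr
  obtain ⟨x, hx⟩ := (h.reach_del hU _).1 hr
  have := e.injective hx
  cases this

/-- joins over subsets of `Fin j` are recoverable from the dart. -/
lemma eA_join_inj {j : ℕ} {A A' : Finset (Fin j)}
    {V1 : SimpleGraph (Fin A.card)} {V2 : SimpleGraph (Fin Aᶜ.card)} {v1 : Fin A.card}
    {v2 : Fin Aᶜ.card}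
    {V1' : SimpleGraph (Fin A'.card)} {V2' : SimpleGraph (Fin A'ᶜ.card)} {v1' : Fin A'.card}
    {v2' : Fin A'ᶜ.card} (hV1 : V1.Connected) (hV1' : V1'.Connected)
    {W : SimpleGraph (Fin j)} (h : IsJoin V1 V2 W (eA A) v1 v2)
    (h' : IsJoin V1' V2' W (eA A') v1' v2') (e1 : eA A (.inl v1) = eA A' (.inl v1'))
    (e2 : eA A (.inr v2) = eA A' (.inr v2')) : A = A' := by
  ext z
  have key : ∀ (A : Finset (Fin j)) (z), z ∈ A ↔ ∃ x, z = eA A (.inl x) := by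
    intro A z
    constructor
    · intro hz
      obtain ⟨t, rfl⟩ := (eA A).surjective z
      rcases t with t | t
      · exact ⟨t, rfl⟩
      · exact absurd hz (eA_inr_mem A t)
    · rintro ⟨x, rfl⟩; exact eA_inl_mem A x
  rw [key, key, ← h.reach_del hV1, ← h'.reach_del hV1', e1, e2]

lemma dissym {C : GraphClassOn} (hI : ClassIsoInvariant C) (hA : ClassAddable C)
    {ξ : ∀ j : ℕ, SimpleGraph (Fin j) → Fin j → ℝ} (hξ : ∀ j V v, 0 ≤ ξ j V v) (j : ℕ)
    (hj : 1 ≤ j) :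
    ∑ A : Finset (Fin j), ((A.card : ℝ) * ∑ V ∈ conn C A.card, hH ξ V) *
      ((Aᶜ.card : ℝ) * ∑ V ∈ conn C Aᶜ.card, hH ξ V) ≤
      2 * ((j : ℝ) - 1) * ∑ V ∈ conn C j, hH ξ V := by
  have h1 : ∀ A : Finset (Fin j), ((A.card : ℝ) * ∑ V ∈ conn C A.card, hH ξ V) *
      ((Aᶜ.card : ℝ) * ∑ V ∈ conn C Aᶜ.card, hH ξ V) =
      ∑ p ∈ (conn C A.card ×ˢ (Finset.univ : Finset (Fin A.card))) ×ˢ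
        (conn C Aᶜ.card ×ˢ (Finset.univ : Finset (Fin Aᶜ.card))), hH ξ p.1.1 * hH ξ p.2.1 := by
    intro A
    have : ∀ i : ℕ, (i : ℝ) * ∑ V ∈ conn C i, hH ξ V =
        ∑ p ∈ conn C i ×ˢ (Finset.univ : Finset (Fin i)), hH ξ p.1 := by
      intro i
      rw [Finset.sum_product, Finset.mul_sum]
      simp
    rw [this, this, Finset.sum_mul_sum]
    exact (Finset.sum_product _ _ (fun p : (SimpleGraph (Fin A.card) × Fin A.card) ×
      (SimpleGraph (Fin Aᶜ.card) × Fin Aᶜ.card) => hH ξ p.1.1 * hH ξ p.2.1)).symm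
  simp only [h1]
  have h2 : ∑ W ∈ conn C j, ∑ p ∈ (Finset.univ : Finset (Fin j × Fin j)).filter
      (fun p => W.Adj p.1 p.2 ∧ W.IsBridge s(p.1, p.2)), hH ξ W ≤
      2 * ((j : ℝ) - 1) * ∑ V ∈ conn C j, hH ξ V := by
    rw [Finset.mul_sum]
    apply Finset.sum_le_sum
    intro W hW
    rw [Finset.sum_const, nsmul_eq_mul]
    apply mul_le_mul_of_nonneg_right _ (good_hH hξ (mem_conn.1 hW).2).1
    have := card_darts hj W
    have h3 : ((((Finset.univ : Finset (Fin j × Fin j)).filter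
      (fun p => W.Adj p.1 p.2 ∧ W.IsBridge s(p.1, p.2))).card : ℕ) : ℝ) ≤ ((2 * (j - 1) : ℕ) : ℝ) :=
      Nat.cast_le.2 this
    rw [Nat.cast_mul, Nat.cast_sub hj] at h3
    simpa using h3
  refine le_trans ?_ h2
  rw [Finset.sum_sigma', Finset.sum_sigma']
  apply sum_le_of_inj _ _ (fun p => ⟨joinG p.2.1.1 p.2.2.1 (eA p.1) p.2.1.2 p.2.2.2,
    (eA p.1 (.inl p.2.1.2), eA p.1 (.inr p.2.2.2))⟩)
  · rintro ⟨A, ⟨V1, v1⟩, V2, v2⟩ hp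
    simp only [Finset.mem_sigma, Finset.mem_product, Finset.mem_univ, and_true, true_and,
      mem_conn] at hp
    obtain ⟨⟨a1, b1⟩, a2, b2⟩ := hp
    have hJ := isJoin_joinG V1 V2 (eA A) v1 v2
    simp only [Finset.mem_sigma, mem_conn, Finset.mem_filter, Finset.mem_univ, true_and]
    exact ⟨⟨hJ.mem hI hA a1 a2, hJ.connected b1 b2⟩, (hJ.cross _ _).2 ⟨rfl, rfl⟩, hJ.isBridge b1⟩
  · rintro ⟨A, ⟨V1, v1⟩, V2, v2⟩ hp ⟨A', ⟨V1', v1'⟩, V2', v2'⟩ hp' heq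
    simp only [Finset.mem_sigma, Finset.mem_product, Finset.mem_univ, and_true, true_and,
      mem_conn] at hp hp'
    obtain ⟨⟨a1, b1⟩, a2, b2⟩ := hp
    obtain ⟨⟨a1', b1'⟩, a2', b2'⟩ := hp'
    have hJ := isJoin_joinG V1 V2 (eA A) v1 v2
    have hJ' := isJoin_joinG V1' V2' (eA A') v1' v2'
    simp only [Sigma.mk.injEq] at heq
    obtain ⟨e1, e2⟩ := heq
    have e2 := eq_of_heq e2
    rw [Prod.mk.injEq] at e2
    rw [← e1] at hJ'
    have hAA := eA_join_inj b1 b1' hJ hJ' e2.1 e2.2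
    subst hAA
    have f1 := Sum.inl_injective ((eA A).injective e2.1)
    have f2 := Sum.inr_injective ((eA A).injective e2.2)
    subst f1 f2
    have g1 : V1 = V1' := by ext x y; rw [← hJ.left, ← hJ'.left]
    have g2 : V2 = V2' := by ext x y; rw [← hJ.right, ← hJ'.right]
    subst g1 g2
    rfl
  · rintro ⟨A, ⟨V1, v1⟩, V2, v2⟩ hp
    simp only [Finset.mem_sigma, Finset.mem_product, Finset.mem_univ, and_true, true_and,
      mem_conn] at hp
    exact hH_mul hξ (isJoin_joinG V1 V2 (eA A) v1 v2) hp.1.2 hp.2.2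
  · rintro ⟨W, p⟩ hp
    simp only [Finset.mem_sigma, mem_conn] at hp
    exact (good_hH hξ hp.1.2).1

lemma sum_subsets {j : ℕ} (f : ℕ → ℕ → ℝ) :
    ∑ A : Finset (Fin j), f A.card Aᶜ.card =
      ∑ p ∈ Finset.HasAntidiagonal.antidiagonal j, (j.choose p.1 : ℝ) * f p.1 p.2 := by
  have h1 : ∀ A : Finset (Fin j), f A.card Aᶜ.card = f A.card (j - A.card) := by
    intro A
    rw [Finset.card_compl, Fintype.card_fin]
  simp only [h1]
  have := Finset.sum_powerset_apply_card (x := (Finset.univ : Finset (Fin j))) (fun i => f i (j - i))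
  rw [Finset.powerset_univ, Finset.card_univ, Fintype.card_fin] at this
  rw [this, Finset.Nat.sum_antidiagonal_eq_sum_range_succ_mk]
  simp [nsmul_eq_mul]

/-- The normalised weights. -/
noncomputable def kK (C : GraphClassOn) (ξ : ∀ j : ℕ, SimpleGraph (Fin j) → Fin j → ℝ) (j : ℕ) : ℝ :=
  (1 / (j.factorial : ℝ)) * ∑ V ∈ conn C j, hH ξ V

lemma conn_zero (C : GraphClassOn) : conn C 0 = ∅ := by
  rw [conn, Finset.filter_eq_empty_iff]
  rintro G _ ⟨_, h⟩
  obtain ⟨x⟩ := h.nonempty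
  exact x.elim0

lemma choose_div (p q : ℕ) : ((p + q).choose p : ℝ) =
    ((p + q).factorial : ℝ) * (1 / (p.factorial : ℝ)) * (1 / (q.factorial : ℝ)) := by
  rw [Nat.choose_symm_add, Nat.add_choose, Nat.cast_div (Nat.factorial_mul_factorial_dvd_factorial_add p q)
    (by positivity)]
  push_cast
  field_simp

theorem pointwise {C : GraphClassOn} (hI : ClassIsoInvariant C) (hA : ClassAddable C)
    (ξ : ∀ j : ℕ, SimpleGraph (Fin j) → Fin j → ℝ) (hξ : ∀ j V v, 0 ≤ ξ j V v)
    (g : ℕ → ℝ) (hg : ∀ s, 0 ≤ g s) (hg0 : g 0 = 1)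
    (h1 : ∀ s j, ∀ V ∈ conn C j, ∀ v, g (s + j) ≤ g s * ξ j V v)
    (h2 : ∀ s j, ∀ V ∈ conn C j, ∀ (i w : ℕ) (U : SimpleGraph (Fin i)) (W : SimpleGraph (Fin w))
      (e : Fin i ⊕ Fin j ≃ Fin w) (u : Fin i) (v : Fin j) (r : Fin i), IsJoin U V W e u v →
        g (s + j) * ξ i U r ≤ g s * ξ w W (e (.inl r)))
    (h3 : ∀ J : ℕ, ∑ j ∈ Finset.range (J + 1), (1 / (j.factorial : ℝ)) *
      ∑ V ∈ conn C j, ∑ v, ξ j V v ≤ 1) (S : ℕ) :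
    ∑ s ∈ Finset.range (S + 1), ((cls C s).card : ℝ) / (s.factorial : ℝ) * g s ≤
      Real.exp (1 / 2) := by
  have hHn : ∀ j, ∀ V ∈ conn C j, 0 ≤ hH ξ V := fun j V hV => (good_hH hξ (mem_conn.1 hV).2).1
  have hK : ∀ j, 0 ≤ kK C ξ j := fun j =>
    mul_nonneg (by positivity) (Finset.sum_nonneg fun V hV => hHn j V hV)
  have hgH : ∀ s j, ∀ V ∈ conn C j, g (s + j) ≤ hH ξ V * g s := by
    intro s j V hV
    obtain ⟨v0⟩ := (mem_conn.1 hV).2.nonempty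
    rcases (hg s).eq_or_lt with h0 | h0
    · have := h1 s j V hV v0
      rw [← h0] at this ⊢
      simpa using this
    · rw [← div_le_iff₀ h0]
      apply le_hH (mem_conn.1 hV).2
      refine ⟨div_nonneg (hg _) h0.le, ?_, ?_⟩
      · intro v
        rw [div_le_iff₀ h0, mul_comm]
        exact h1 s j V hV v
      · intro i w U W e u v r hJ
        rw [div_mul_eq_mul_div, div_le_iff₀ h0, mul_comm (ξ w W _)]
        exact h2 s j V hV i w U W e u v r hJ
  have hKsum : ∑ j ∈ Finset.range (S + 1), kK C ξ j ≤ 1 / 2 := by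
    apply sum_K_le _ hK
    · simp [kK, conn_zero]
    · intro J
      refine le_trans (Finset.sum_le_sum ?_) (h3 J)
      intro j _
      rw [kK, mul_left_comm]
      apply mul_le_mul_of_nonneg_left _ (by positivity)
      rw [Finset.mul_sum]
      apply Finset.sum_le_sum
      intro V hV
      have : ∑ v : Fin j, hH ξ V ≤ ∑ v, ξ j V v :=
        Finset.sum_le_sum fun v _ => (good_hH hξ (mem_conn.1 hV).2).2.1 v
      simpa using this
    · intro j
      rcases Nat.eq_zero_or_pos j with rfl | hj
      · simp [kK, conn_zero]
      have hd := dissym hI hA hξ j hj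
      rw [sum_subsets (fun i l => ((i : ℝ) * ∑ V ∈ conn C i, hH ξ V) *
        ((l : ℝ) * ∑ V ∈ conn C l, hH ξ V))] at hd
      have hpos : (0 : ℝ) < j.factorial := by exact_mod_cast j.factorial_pos
      have e1 : ∑ p ∈ Finset.HasAntidiagonal.antidiagonal j,
          ((p.1 : ℝ) * kK C ξ p.1) * (p.2 * kK C ξ p.2) = (1 / (j.factorial : ℝ)) *
          ∑ p ∈ Finset.HasAntidiagonal.antidiagonal j, (j.choose p.1 : ℝ) *
          (((p.1 : ℝ) * ∑ V ∈ conn C p.1, hH ξ V) * ((p.2 : ℝ) * ∑ V ∈ conn C p.2, hH ξ V)) := by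
        rw [Finset.mul_sum]
        apply Finset.sum_congr rfl
        intro p hp
        rw [Finset.HasAntidiagonal.mem_antidiagonal] at hp
        rw [← hp, choose_div, kK, kK]
        rw [hp]
        field_simp
      rw [e1, kK]
      have := mul_le_mul_of_nonneg_left hd (one_div_pos.2 hpos).le
      refine this.trans (le_of_eq ?_)
      ring
  refine le_trans (exp_formula S (fun s => ((cls C s).card : ℝ) / (s.factorial : ℝ) * g s)
    (kK C ξ) (fun s => mul_nonneg (by positivity) (hg s)) hK ?_ ?_) (Real.exp_le_exp.2 hKsum)
  · simp only [hg0, Nat.factorial_zero, Nat.cast_one, div_one, mul_one]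
    have : (cls C 0).card ≤ 1 := by
      refine (Finset.card_le_univ _).trans ?_
      rw [Fintype.card_le_one_iff_subsingleton]
      infer_instance
    exact_mod_cast this
  · intro s
    have hr := rec_A hI hA.1 s
    have hr' : (s : ℝ) * (cls C s).card ≤ ∑ A : Finset (Fin s),
        (A.card : ℝ) * (((conn C A.card).card : ℝ) * (cls C Aᶜ.card).card) := by exact_mod_cast hr
    rw [sum_subsets (fun i l => (i : ℝ) * (((conn C i).card : ℝ) * (cls C l).card))] at hr'
    have hpos : (0 : ℝ) < s.factorial := by exact_mod_cast s.factorial_pos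
    have := mul_le_mul_of_nonneg_right hr' (div_nonneg (hg s) hpos.le)
    calc (s : ℝ) * (((cls C s).card : ℝ) / (s.factorial : ℝ) * g s)
        = (s : ℝ) * (cls C s).card * (g s / s.factorial) := by ring
      _ ≤ _ := this
      _ ≤ ∑ p ∈ Finset.HasAntidiagonal.antidiagonal s, (p.1 : ℝ) * kK C ξ p.1 *
          (((cls C p.2).card : ℝ) / (p.2.factorial : ℝ) * g p.2) := by
        rw [Finset.sum_mul]
        apply Finset.sum_le_sum
        intro p hp
        rw [Finset.HasAntidiagonal.mem_antidiagonal] at hp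
        have e1 : (((conn C p.1).card : ℝ) * g s) ≤ (∑ V ∈ conn C p.1, hH ξ V) * g p.2 := by
          rw [← nsmul_eq_mul, ← Finset.sum_const, Finset.sum_mul]
          apply Finset.sum_le_sum
          intro V hV
          have := hgH p.2 p.1 V hV
          rwa [add_comm, hp] at this
        rw [← hp, choose_div, hp]
        have e2 : (s.factorial : ℝ) * (1 / (p.1.factorial : ℝ)) * (1 / (p.2.factorial : ℝ)) *
            ((p.1 : ℝ) * (((conn C p.1).card : ℝ) * (cls C p.2).card)) * (g s / s.factorial) =
            ((p.1 : ℝ) * (1 / (p.1.factorial : ℝ)) * ((cls C p.2).card / (p.2.factorial : ℝ))) *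
            (((conn C p.1).card : ℝ) * g s) := by
          field_simp
        rw [e2, kK]
        refine (mul_le_mul_of_nonneg_left e1 (by positivity)).trans (le_of_eq ?_)
        ring
      _ = _ := by rw [Finset.Nat.sum_antidiagonal_eq_sum_range_succ_mk]

end BA

namespace BA

open MeasureTheory
open scoped ENNReal NNReal BoundedContinuousFunction

section meas
variable {X : Type*} [TopologicalSpace X] [CompactSpace X] [TopologicalSpace.MetrizableSpace X]
  [MeasurableSpace X] [BorelSpace X]

lemma meas_le0 (μ ν : Measure X) [IsFiniteMeasure μ] [IsFiniteMeasure ν]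
    (h : ∀ f : X →ᵇ ℝ≥0, ∫⁻ x, f x ∂μ ≤ ∫⁻ x, f x ∂ν) {A : Set X} (hA : MeasurableSet A) :
    μ A ≤ ν A := by
  rw [hA.measure_eq_iSup_isClosed_of_ne_top (measure_ne_top μ A)]
  refine iSup_le fun F => iSup_le fun hFA => iSup_le fun hF => ?_
  refine le_trans ?_ (measure_mono hFA)
  exact le_of_tendsto_of_tendsto (HasOuterApproxClosed.tendsto_lintegral_apprSeq hF μ)
    (HasOuterApproxClosed.tendsto_lintegral_apprSeq hF ν) (Eventually.of_forall fun n => h _)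

lemma integrable_of_cont (μ : Measure X) [IsFiniteMeasure μ] {f : X → ℝ} (hf : Continuous f) :
    Integrable f μ :=
  (BoundedContinuousFunction.mkOfCompact ⟨f, hf⟩).integrable μ

lemma meas_le (μ ν : Measure X) [IsFiniteMeasure μ] [IsFiniteMeasure ν] {α β : X → ℝ}
    (hα : Continuous α) (hβ : Continuous β) (hα0 : ∀ x, 0 ≤ α x) (hβ0 : ∀ x, 0 ≤ β x)
    (h : ∀ f : X → ℝ, Continuous f → (∀ x, 0 ≤ f x) → ∫ x, α x * f x ∂μ ≤ ∫ x, β x * f x ∂ν)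
    {A : Set X} (hA : MeasurableSet A) :
    μ.withDensity (fun x => ENNReal.ofReal (α x)) A ≤
      ν.withDensity (fun x => ENNReal.ofReal (β x)) A := by
  have : IsFiniteMeasure (μ.withDensity (fun x => ENNReal.ofReal (α x))) :=
    isFiniteMeasure_withDensity_ofReal (integrable_of_cont μ hα).2
  have : IsFiniteMeasure (ν.withDensity (fun x => ENNReal.ofReal (β x))) :=
    isFiniteMeasure_withDensity_ofReal (integrable_of_cont ν hβ).2
  refine meas_le0 _ _ (fun f => ?_) hA
  have hf : Continuous (fun x => (f x : ℝ)) := by fun_prop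
  have key : ∀ (κ : Measure X) [IsFiniteMeasure κ] (γ : X → ℝ), Continuous γ → (∀ x, 0 ≤ γ x) →
      ∫⁻ x, f x ∂(κ.withDensity (fun x => ENNReal.ofReal (γ x))) =
        ENNReal.ofReal (∫ x, γ x * (f x : ℝ) ∂κ) := by
    intro κ _ γ hγ hγ0
    rw [lintegral_withDensity_eq_lintegral_mul _ (by fun_prop) (by fun_prop),
      ofReal_integral_eq_lintegral_ofReal (f := fun x => γ x * (f x : ℝ))
        (integrable_of_cont κ (hγ.mul hf))
        (Eventually.of_forall fun x => mul_nonneg (hγ0 x) (f x).2)]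
    refine lintegral_congr fun x => ?_
    rw [Pi.mul_apply, ENNReal.ofReal_mul (hγ0 x), ENNReal.ofReal_coe_nnreal]
  rw [key μ α hα hα0, key ν β hβ hβ0]
  exact ENNReal.ofReal_le_ofReal (h _ hf fun x => (f x).2)

lemma dens_le (ρ μ ν : Measure X) [IsFiniteMeasure ρ] [IsFiniteMeasure μ] [IsFiniteMeasure ν]
    (hμ : μ ≪ ρ) (hν : ν ≪ ρ) {α β : X → ℝ}
    (hα : Continuous α) (hβ : Continuous β) (hα0 : ∀ x, 0 ≤ α x) (hβ0 : ∀ x, 0 ≤ β x)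
    (h : ∀ f : X → ℝ, Continuous f → (∀ x, 0 ≤ f x) → ∫ x, α x * f x ∂μ ≤ ∫ x, β x * f x ∂ν) :
    ∀ᵐ x ∂ρ, (μ.rnDeriv ρ x).toReal * α x ≤ (ν.rnDeriv ρ x).toReal * β x := by
  have key : ∀ (κ : Measure X) [IsFiniteMeasure κ] (γ : X → ℝ), κ ≪ ρ → Continuous γ →
      κ.withDensity (fun x => ENNReal.ofReal (γ x)) =
        ρ.withDensity (fun x => κ.rnDeriv ρ x * ENNReal.ofReal (γ x)) := by
    intro κ _ γ hκ hγ
    conv_lhs => rw [← Measure.withDensity_rnDeriv_eq κ ρ hκ]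
    rw [← withDensity_mul _ (Measure.measurable_rnDeriv κ ρ) (by fun_prop)]
    rfl
  have hle : (fun x => μ.rnDeriv ρ x * ENNReal.ofReal (α x)) ≤ᵐ[ρ]
      (fun x => ν.rnDeriv ρ x * ENNReal.ofReal (β x)) := by
    refine ae_le_of_forall_setLIntegral_le_of_sigmaFinite
      ((Measure.measurable_rnDeriv μ ρ).mul (by fun_prop)) fun s hs _ => ?_
    have := meas_le μ ν hα hβ hα0 hβ0 h hs
    rwa [key μ α hμ hα, key ν β hν hβ, withDensity_apply _ hs, withDensity_apply _ hs] at this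
  filter_upwards [hle, Measure.rnDeriv_lt_top μ ρ, Measure.rnDeriv_lt_top ν ρ] with x hx h1 h2
  have := ENNReal.toReal_mono (ENNReal.mul_ne_top h2.ne ENNReal.ofReal_ne_top) hx
  rwa [ENNReal.toReal_mul, ENNReal.toReal_mul, ENNReal.toReal_ofReal (hα0 x),
    ENNReal.toReal_ofReal (hβ0 x)] at this

theorem measure_thm {C : GraphClassOn} (hI : ClassIsoInvariant C) (hA : ClassAddable C)
    (hb : (⊥ : SimpleGraph (Fin 1)) ∈ conn C 1)
    (μ : ℕ → Measure X) [∀ s, IsFiniteMeasure (μ s)] [IsProbabilityMeasure (μ 0)]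
    (ξ : ∀ j, SimpleGraph (Fin j) → Fin j → X → ℝ) (hc : ∀ j V v, Continuous (ξ j V v))
    (hξ : ∀ j V v x, 0 ≤ ξ j V v x)
    (H1 : ∀ s j, ∀ V ∈ conn C j, ∀ v, ∀ f : X → ℝ, Continuous f → (∀ x, 0 ≤ f x) →
      ∫ x, f x ∂(μ (s + j)) ≤ ∫ x, ξ j V v x * f x ∂(μ s))
    (H2 : ∀ s j, ∀ V ∈ conn C j, ∀ (i w : ℕ) (U : SimpleGraph (Fin i)) (W : SimpleGraph (Fin w))
      (e : Fin i ⊕ Fin j ≃ Fin w) (u : Fin i) (v : Fin j) (r : Fin i), IsJoin U V W e u v →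
      ∀ f : X → ℝ, Continuous f → (∀ x, 0 ≤ f x) →
      ∫ x, ξ i U r x * f x ∂(μ (s + j)) ≤ ∫ x, ξ w W (e (.inl r)) x * f x ∂(μ s))
    (H3 : ∀ J : ℕ, ∀ᵐ x ∂(μ 0), ∑ j ∈ Finset.range (J + 1), (1 / (j.factorial : ℝ)) *
      ∑ V ∈ conn C j, ∑ v, ξ j V v x ≤ 1) (S : ℕ) :
    ∑ s ∈ Finset.range (S + 1), ((cls C s).card : ℝ) / (s.factorial : ℝ) * (μ s).real Set.univ ≤
      Real.exp (1 / 2) := by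
  have hac : ∀ s, μ s ≪ μ 0 := by
    intro s
    induction s with
    | zero => exact Measure.AbsolutelyContinuous.rfl
    | succ s ih =>
      refine Measure.AbsolutelyContinuous.trans ?_ ih
      refine Measure.AbsolutelyContinuous.mk fun A hAm h0 => ?_
      have := meas_le (μ (s + 1)) (μ s) (α := fun _ => 1) continuous_const (hc 1 ⊥ 0)
        (fun _ => zero_le_one) (hξ 1 ⊥ 0) (fun f hf hf0 => by
          simpa only [one_mul] using H1 s 1 ⊥ hb 0 f hf hf0) hAm
      have h2 : (μ s).withDensity (fun x => ENNReal.ofReal (ξ 1 ⊥ 0 x)) A = 0 :=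
        withDensity_absolutelyContinuous _ _ h0
      rw [h2] at this
      simpa [withDensity_const] using this
  set g : ℕ → X → ℝ := fun s x => ((μ s).rnDeriv (μ 0) x).toReal with hg
  have h1 : ∀ᵐ x ∂(μ 0), ∀ s j, ∀ V ∈ conn C j, ∀ v, g (s + j) x ≤ g s x * ξ j V v x := by
    simp only [ae_all_iff]
    intro s j V hV v
    have := dens_le (μ 0) (μ (s + j)) (μ s) (hac _) (hac _) (α := fun _ => 1) continuous_const
      (hc j V v) (fun _ => zero_le_one) (hξ j V v) (fun f hf hf0 => by
          simpa only [one_mul] using H1 s j V hV v f hf hf0)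
    simpa only [mul_one] using this
  have h2 : ∀ᵐ x ∂(μ 0), ∀ s j, ∀ V ∈ conn C j, ∀ (i w : ℕ) (U : SimpleGraph (Fin i))
      (W : SimpleGraph (Fin w))
      (e : Fin i ⊕ Fin j ≃ Fin w) (u : Fin i) (v : Fin j) (r : Fin i), IsJoin U V W e u v →
      g (s + j) x * ξ i U r x ≤ g s x * ξ w W (e (.inl r)) x := by
    simp only [ae_all_iff]
    intro s j V hV i w U W e u v r hJ
    exact dens_le (μ 0) (μ (s + j)) (μ s) (hac _) (hac _) (hc i U r) (hc w W _) (hξ i U r)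
      (hξ w W _) (H2 s j V hV i w U W e u v r hJ)
  have h3 := ae_all_iff.2 H3
  have h0 : ∀ᵐ x ∂(μ 0), g 0 x = 1 := by
    filter_upwards [Measure.rnDeriv_self (μ 0)] with x hx
    simp [hg, hx]
  have hInt : ∀ s, Integrable (g s) (μ 0) := fun s => Measure.integrable_toReal_rnDeriv
  have hpt : ∀ᵐ x ∂(μ 0), ∑ s ∈ Finset.range (S + 1),
      ((cls C s).card : ℝ) / (s.factorial : ℝ) * g s x ≤ Real.exp (1 / 2) := by
    filter_upwards [h0, h1, h2, h3] with x e0 e1 e2 e3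
    exact pointwise hI hA (fun j V v => ξ j V v x) (fun j V v => hξ j V v x) (fun s => g s x)
      (fun s => ENNReal.toReal_nonneg) e0 e1 e2 e3 S
  have hI := integral_mono_ae (integrable_finset_sum _ fun s _ => (hInt s).const_mul _)
    (integrable_const _) hpt
  rw [integral_finset_sum _ fun s _ => (hInt s).const_mul _] at hI
  simp only [integral_const_mul, integral_const, probReal_univ, one_smul] at hI
  refine le_trans (le_of_eq ?_) hI
  refine Finset.sum_congr rfl fun s _ => ?_
  rw [Measure.integral_toReal_rnDeriv (hac s)]

end meas

end BA

namespace BA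

open MeasureTheory
open scoped ENNReal NNReal BoundedContinuousFunction Uniformity

/-- Index type of rooted graphs. -/
abbrev Idx : Type := Σ j : ℕ, SimpleGraph (Fin j) × Fin j

/-- The compact space of pendant densities. -/
abbrev XX : Type := Idx → Set.Icc (0 : ℝ) 1

/-- The pendant density vector of a graph. -/
noncomputable def xG {n : ℕ} (G : SimpleGraph (Fin n)) : XX := fun i =>
  Set.projIcc 0 1 zero_le_one
    (((pends i.2.1 i.2.2 G).card : ℝ) / ((n : ℝ) * (i.1.factorial : ℝ)))

/-- The rescaled coordinates. -/
noncomputable def xi (j : ℕ) (V : SimpleGraph (Fin j)) (v : Fin j) (x : XX) : ℝ :=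
  (j.factorial : ℝ) * (x ⟨j, V, v⟩ : ℝ)

lemma xi_cont (j : ℕ) (V : SimpleGraph (Fin j)) (v : Fin j) : Continuous (xi j V v) := by
  unfold xi
  fun_prop

lemma xi_nonneg (j : ℕ) (V : SimpleGraph (Fin j)) (v : Fin j) (x : XX) : 0 ≤ xi j V v x :=
  mul_nonneg (by positivity) (x _).2.1

lemma xi_xG {n j : ℕ} (hn : 2 * j < n) (V : SimpleGraph (Fin j)) (v : Fin j)
    (G : SimpleGraph (Fin n)) (hG : G.Connected) :
    xi j V v (xG G) = ((pends V v G).card : ℝ) / n := by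
  have hn0 : (0 : ℝ) < n := by exact_mod_cast (by omega : 0 < n)
  have hj0 : (0 : ℝ) < j.factorial := by exact_mod_cast j.factorial_pos
  have h := pends_le hn V v G hG
  have h' : ((pends V v G).card : ℝ) ≤ j.factorial * n := by exact_mod_cast h
  unfold xi xG
  rw [Set.projIcc_of_mem zero_le_one ⟨by positivity, by
    rw [div_le_one (by positivity)]; linarith [mul_comm (n : ℝ) j.factorial]⟩]
  field_simp

lemma close {j : ℕ} {V : SimpleGraph (Fin j)} (hV : V.Connected) (v : Fin j) {f : XX → ℝ}
    (hf : Continuous f) {ε : ℝ} (hε : 0 < ε) :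
    ∀ᶠ m in atTop, ∀ (B : SimpleGraph (Fin m)), B.Connected → ∀ (G : SimpleGraph (Fin (m + j))) e b,
      IsJoin B V G e b v → f (xG B) ≤ f (xG G) + ε := by
  let T := Σ m : ℕ, {p : SimpleGraph (Fin m) × SimpleGraph (Fin (m + j)) //
    p.1.Connected ∧ ∃ e b, IsJoin p.1 V p.2 e b v}
  let l : Filter T := comap Sigma.fst atTop
  have ht : Tendsto (fun t : T => (xG t.2.1.1, xG t.2.1.2)) l (𝓤 XX) := by
    rw [Pi.uniformity, tendsto_iInf]
    intro i
    rw [tendsto_comap_iff]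
    have hfst : Tendsto (fun t : T => t.1) l atTop := tendsto_comap
    have := (tendsto_uniformity_iff_dist_tendsto_zero 
      (f := fun t : T => (xG t.2.1.1 i, xG t.2.1.2 i)) (p := l)).2
    refine this ?_
    have hlim : Tendsto (fun t : T => (2 * (j : ℝ) + 1) / (t.1 : ℝ)) l (𝓝 0) :=
      (tendsto_const_div_atTop_nhds_zero_nat _).comp hfst
    refine squeeze_zero' (Eventually.of_forall fun _ => dist_nonneg) ?_ hlim
    filter_upwards [hfst.eventually (eventually_gt_atTop (2 * i.1))] with t ht
    obtain ⟨m, ⟨⟨B, G⟩, hB, e, b, hJ⟩⟩ := t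
    obtain ⟨w, P, r⟩ := i
    simp only at ht hJ hB ⊢
    refine le_trans (Set.abs_projIcc_sub_projIcc zero_le_one) ?_
    have h1 := pends_join_le hJ hB ht P r
    have h2 := pends_join_ge hJ hB hV ht P r
    have h3 := pends_le ht P r B hB
    have h1' : ((pends P r B).card : ℝ) ≤ (pends P r G).card + w.factorial := by exact_mod_cast h1
    have h2' : ((pends P r G).card : ℝ) ≤ (pends P r B).card + (j + 1) * w.factorial := by
      exact_mod_cast h2
    have h3' : ((pends P r B).card : ℝ) ≤ w.factorial * m := by exact_mod_cast h3
    have hm0 : (0 : ℝ) < m := by exact_mod_cast (by omega : 0 < m)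
    have hw0 : (0 : ℝ) < w.factorial := by exact_mod_cast w.factorial_pos
    have hj0 : (0 : ℝ) ≤ j := Nat.cast_nonneg j
    simp only
    have hp0 : (0 : ℝ) ≤ ((pends P r B).card : ℝ) := Nat.cast_nonneg _
    generalize ((pends P r B).card : ℝ) = p at *
    generalize ((pends P r G).card : ℝ) = q at *
    generalize (w.factorial : ℝ) = c at *
    push_cast
    have e1 : p / ((m : ℝ) * c) - q / (((m : ℝ) + j) * c) =
        (p * (m + j) - q * m) / (m * ((m + j) * c)) := by
      field_simp
    have e2 : (2 * (j : ℝ) + 1) / m = ((2 * j + 1) * ((m + j) * c)) / (m * ((m + j) * c)) := by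
      field_simp
    have hjc : 0 ≤ j * c := by positivity
    have hjm : 0 ≤ j * c * m := by positivity
    have hjj : 0 ≤ j * c * j := by positivity
    have t1 := mul_le_mul_of_nonneg_right h1' hm0.le
    have t2 := mul_le_mul_of_nonneg_right h2' hm0.le
    have t3 := mul_le_mul_of_nonneg_right h3' hj0
    rw [e1, e2, abs_div, abs_of_pos (show 0 < (m : ℝ) * ((m + j) * c) by positivity)]
    refine div_le_div_of_nonneg_right ?_ (by positivity)
    rw [abs_le]
    have t4 : 0 ≤ p * j := mul_nonneg hp0 hj0
    constructor <;> nlinarith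
  have huc := CompactSpace.uniformContinuous_of_continuous hf
  have h2 := Tendsto.comp huc ht
  have h3 := (tendsto_uniformity_iff_dist_tendsto_zero
    (f := fun t : T => (f (xG t.2.1.1), f (xG t.2.1.2))) (p := l)).1 h2
  have h4 := h3.eventually (gt_mem_nhds hε)
  rw [eventually_comap] at h4
  filter_upwards [h4] with m hm B hB G e b hJ
  have h5 := hm ⟨m, ⟨(B, G), hB, e, b, hJ⟩⟩ rfl
  simp only [Real.dist_eq] at h5
  linarith [(abs_lt.1 h5).2]

end BA

namespace BA

open MeasureTheory
open scoped ENNReal NNReal BoundedContinuousFunction Uniformity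

/-- Number of connected graphs as a real. -/
noncomputable def kk (C : GraphClassOn) (n : ℕ) : ℝ := ((conn C n).card : ℝ)

/-- The measure of the uniform connected graph. -/
noncomputable def lawM (C : GraphClassOn) (m : ℕ) : Measure XX :=
  ((conn C m).card : ℝ≥0∞)⁻¹ • ∑ G ∈ conn C m, Measure.dirac (xG G)

lemma lawM_prob {C : GraphClassOn} {m : ℕ} (h : (conn C m).Nonempty) :
    IsProbabilityMeasure (lawM C m) := by
  constructor
  simp only [lawM, Measure.smul_apply, Measure.finsetSum_apply, measure_univ, Finset.sum_const,
    smul_eq_mul, nsmul_eq_mul, mul_one]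
  exact ENNReal.inv_mul_cancel (by simpa using h.ne_empty) (ENNReal.natCast_ne_top _)

/-- The law of the uniform connected graph. -/
noncomputable def law (C : GraphClassOn) (m : ℕ) : ProbabilityMeasure XX :=
  if h : (conn C m).Nonempty then ⟨lawM C m, lawM_prob h⟩
  else ⟨Measure.dirac (fun _ => 0), Measure.dirac.isProbabilityMeasure⟩

lemma integral_law {C : GraphClassOn} {m : ℕ} (h : (conn C m).Nonempty) {f : XX → ℝ}
    (hf : Continuous f) :
    kk C m * ∫ x, f x ∂(law C m : Measure XX) = ∑ G ∈ conn C m, f (xG G) := by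
  have h0 : ((conn C m).card : ℝ) ≠ 0 := by simpa using h.ne_empty
  have hl : law C m = ⟨lawM C m, lawM_prob h⟩ := dif_pos h
  rw [hl]
  simp only [ProbabilityMeasure.coe_mk, lawM]
  rw [integral_smul_measure, integral_finsetSum_measure fun G _ => integrable_of_cont _ hf]
  simp only [integral_dirac, ENNReal.toReal_inv, ENNReal.toReal_natCast, smul_eq_mul, kk]
  field_simp

/-- Ratio of connected counts. -/
noncomputable def rr (C : GraphClassOn) (s n : ℕ) : ℝ :=
  (n.descFactorial s : ℝ) * kk C (n - s) / kk C n

lemma kk_pos {C : GraphClassOn} (hI : ClassIsoInvariant C) (hA : ClassAddable C)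
    (hne : ∀ n : ℕ, 1 ≤ n → ∃ G : SimpleGraph (Fin n), C (Fin n) G) {n : ℕ} (hn : 0 < n) :
    0 < kk C n := by
  obtain ⟨m, rfl⟩ := Nat.exists_eq_succ_of_ne_zero hn.ne'
  have := (conn_nonempty hI hA hne m).card_pos
  unfold kk
  exact_mod_cast this

lemma kk_step {C : GraphClassOn} (hI : ClassIsoInvariant C) (hA : ClassAddable C)
    (hne : ∀ n : ℕ, 1 ≤ n → ∃ G : SimpleGraph (Fin n), C (Fin n) G) {m : ℕ} (hm : 2 ≤ m) :
    (m : ℝ) * kk C m ≤ kk C (m + 1) := by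
  have h := attach0 hI hA (m := m) (bot_mem hne) 0 (fun _ => 1) (fun _ => 1)
    (fun _ => zero_le_one) (fun _ _ _ _ _ _ => le_rfl)
  have h2 : ∑ G ∈ conn C (m + 1), ((pends (⊥ : SimpleGraph (Fin 1)) 0 G).card : ℝ) * 1 ≤
      ∑ G ∈ conn C (m + 1), ((m : ℝ) + 1) := by
    refine Finset.sum_le_sum fun G hG => ?_
    rw [mem_conn] at hG
    have := pends_le (by omega) (⊥ : SimpleGraph (Fin 1)) 0 G hG.2
    rw [mul_one]
    have h3 : ((pends (⊥ : SimpleGraph (Fin 1)) 0 G).card : ℝ) ≤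
      ((Nat.factorial 1 * (m + 1) : ℕ) : ℝ) := by exact_mod_cast this
    simpa using h3
  have h3 := h.trans h2
  simp only [Nat.descFactorial_one, mul_one, Finset.sum_const, nsmul_eq_mul] at h3
  push_cast at h3
  have hp : (0 : ℝ) < m + 1 := by positivity
  unfold kk
  nlinarith

lemma rr_nonneg (C : GraphClassOn) (s n : ℕ) : 0 ≤ rr C s n := by
  unfold rr kk; positivity

lemma rr_zero {C : GraphClassOn} (hI : ClassIsoInvariant C) (hA : ClassAddable C)
    (hne : ∀ n : ℕ, 1 ≤ n → ∃ G : SimpleGraph (Fin n), C (Fin n) G) {n : ℕ} (hn : 0 < n) :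
    rr C 0 n = 1 := by
  simp [rr, (kk_pos hI hA hne hn).ne']

lemma rr_le {C : GraphClassOn} (hI : ClassIsoInvariant C) (hA : ClassAddable C)
    (hne : ∀ n : ℕ, 1 ≤ n → ∃ G : SimpleGraph (Fin n), C (Fin n) G) (s : ℕ) {n : ℕ}
    (hn : s + 3 ≤ n) : rr C s n ≤ 2 ^ s := by
  induction s with
  | zero => rw [rr_zero hI hA hne (by omega)]; simp
  | succ s ih =>
    have ih := ih (by omega)
    obtain ⟨m, rfl⟩ : ∃ m, n = m + (s + 1) := ⟨n - (s + 1), by omega⟩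
    have hstep := kk_step hI hA hne (m := m) (by omega)
    have hpos := kk_pos hI hA hne (n := m + (s + 1)) (by omega)
    unfold rr at *
    rw [div_le_iff₀ hpos] at *
    have e1 : m + (s + 1) - s = m + 1 := by omega
    have e2 : m + (s + 1) - (s + 1) = m := by omega
    rw [Nat.descFactorial_succ, e2]
    rw [e1] at ih ⊢
    push_cast
    have hm1 : (1 : ℝ) ≤ m := by exact_mod_cast (by omega : 1 ≤ m)
    have hk : 0 ≤ kk C m := by unfold kk; positivity
    have h1 : ((m : ℝ) + 1) * kk C m ≤ 2 * kk C (m + 1) := by nlinarith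
    calc ((m : ℝ) + 1) * ((m + (s + 1)).descFactorial s : ℝ) * kk C m
        = ((m + (s + 1)).descFactorial s : ℝ) * (((m : ℝ) + 1) * kk C m) := by ring
      _ ≤ ((m + (s + 1)).descFactorial s : ℝ) * (2 * kk C (m + 1)) := by gcongr
      _ = 2 * (((m + (s + 1)).descFactorial s : ℝ) * kk C (m + 1)) := by ring
      _ ≤ 2 * (2 ^ s * kk C (m + (s + 1))) := by gcongr
      _ = _ := by ring

/-- The finite attachment inequality. -/
def Att (C : GraphClassOn) (j : ℕ) (α β : XX → ℝ) : Prop :=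
  ∀ f : XX → ℝ, Continuous f → (∀ x, 0 ≤ f x) → ∀ ε : ℝ, 0 < ε → ∀ᶠ m : ℕ in atTop,
    (m : ℝ) / ((m : ℝ) + j) * (((m + j).descFactorial j : ℝ) *
      ∑ B ∈ conn C m, α (xG B) * f (xG B)) ≤
      ∑ G ∈ conn C (m + j), β (xG G) * (f (xG G) + ε)

lemma att0 {C : GraphClassOn} (hI : ClassIsoInvariant C) (hA : ClassAddable C) {j : ℕ}
    {V : SimpleGraph (Fin j)} (hV : V ∈ conn C j) (v : Fin j) :
    Att C j (fun _ => 1) (xi j V v) := by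
  intro f hf hf0 ε hε
  filter_upwards [close (mem_conn.1 hV).2 v hf hε, eventually_gt_atTop (2 * j)] with m hm hm2
  have h := attach0 hI hA (m := m) hV v (fun B => f (xG B)) (fun G => f (xG G) + ε)
    (fun G => add_nonneg (hf0 _) hε.le) (fun B hB G e b hJ => hm B (mem_conn.1 hB).2 G e b hJ)
  have hp : (0 : ℝ) < (m : ℝ) + j := by
    have : (0 : ℝ) < m := by exact_mod_cast (by omega : 0 < m)
    positivity
  have e1 : ∑ G ∈ conn C (m + j), xi j V v (xG G) * (f (xG G) + ε) =
      (∑ G ∈ conn C (m + j), ((pends V v G).card : ℝ) * (f (xG G) + ε)) / ((m : ℝ) + j) := by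
    rw [Finset.sum_div]
    refine Finset.sum_congr rfl fun G hG => ?_
    rw [xi_xG (by omega) V v G (mem_conn.1 hG).2]
    push_cast
    ring
  rw [e1, le_div_iff₀ hp]
  refine le_trans (le_of_eq ?_) h
  rw [← Finset.mul_sum]
  simp only [one_mul]
  field_simp
  rw [Finset.mul_sum]

lemma att1 {C : GraphClassOn} (hI : ClassIsoInvariant C) (hA : ClassAddable C) {j i w : ℕ}
    {V : SimpleGraph (Fin j)} (hV : V ∈ conn C j) (v : Fin j)
    {U : SimpleGraph (Fin i)} {W : SimpleGraph (Fin w)} {e0 : Fin i ⊕ Fin j ≃ Fin w}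
    {u : Fin i} (hW : IsJoin U V W e0 u v) (r : Fin i) :
    Att C j (xi i U r) (xi w W (e0 (.inl r))) := by
  intro f hf hf0 ε hε
  filter_upwards [close (mem_conn.1 hV).2 v hf hε, eventually_gt_atTop (2 * (j + i + w))]
    with m hm hm2
  have h := attach1 hI hA (m := m) hV v hW r (fun B => f (xG B)) (fun G => f (xG G) + ε)
    (fun G => add_nonneg (hf0 _) hε.le) (fun B hB G e b hJ => hm B (mem_conn.1 hB).2 G e b hJ)
  have hm0 : (0 : ℝ) < m := by exact_mod_cast (by omega : 0 < m)
  have hp : (0 : ℝ) < (m : ℝ) + j := by positivity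
  have e1 : ∑ G ∈ conn C (m + j), xi w W (e0 (.inl r)) (xG G) * (f (xG G) + ε) =
      (∑ G ∈ conn C (m + j), ((pends W (e0 (.inl r)) G).card : ℝ) * (f (xG G) + ε)) /
        ((m : ℝ) + j) := by
    rw [Finset.sum_div]
    refine Finset.sum_congr rfl fun G hG => ?_
    rw [xi_xG (by omega) W _ G (mem_conn.1 hG).2]
    push_cast
    ring
  have e2 : ∑ B ∈ conn C m, xi i U r (xG B) * f (xG B) =
      (∑ B ∈ conn C m, ((pends U r B).card : ℝ) * f (xG B)) / m := by
    rw [Finset.sum_div]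
    refine Finset.sum_congr rfl fun G hG => ?_
    rw [xi_xG (by omega) U _ G (mem_conn.1 hG).2]
    ring
  rw [e1, e2, le_div_iff₀ hp]
  refine le_trans (le_of_eq ?_) h
  field_simp

lemma att_limit {C : GraphClassOn} (hI : ClassIsoInvariant C) (hA : ClassAddable C)
    (hne : ∀ n : ℕ, 1 ≤ n → ∃ G : SimpleGraph (Fin n), C (Fin n) G)
    {l : Filter ℕ} [l.NeBot] (hl : l ≤ atTop) {P : ℕ → ProbabilityMeasure XX} {ρ : ℕ → ℝ}
    (hP : ∀ s, Tendsto (fun n => law C (n - s)) l (𝓝 (P s)))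
    (hρ : ∀ s, Tendsto (fun n => rr C s n) l (𝓝 (ρ s)))
    {j : ℕ} {α β : XX → ℝ} (hα : Continuous α) (hβ : Continuous β) (hatt : Att C j α β)
    (s : ℕ) (f : XX → ℝ) (hf : Continuous f) (hf0 : ∀ x, 0 ≤ f x) :
    ρ (s + j) * ∫ x, α x * f x ∂(P (s + j) : Measure XX) ≤
      ρ s * ∫ x, β x * f x ∂(P s : Measure XX) := by
  have hInt : ∀ s (g : XX → ℝ), Continuous g →
      Tendsto (fun n => ∫ x, g x ∂(law C (n - s) : Measure XX)) l
        (𝓝 (∫ x, g x ∂(P s : Measure XX))) := by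
    intro s g hg
    exact (ProbabilityMeasure.tendsto_iff_forall_integral_tendsto.1 (hP s))
      (BoundedContinuousFunction.mkOfCompact ⟨g, hg⟩)
  have main : ∀ ε : ℝ, 0 < ε → ρ (s + j) * ∫ x, α x * f x ∂(P (s + j) : Measure XX) ≤
      ρ s * ∫ x, β x * (f x + ε) ∂(P s : Measure XX) := by
    intro ε hε
    have hm : Tendsto (fun n : ℕ => n - (s + j)) l atTop :=
      (tendsto_sub_atTop_nat (s + j)).mono_left hl
    have hq : Tendsto (fun n : ℕ => ((n - (s + j) : ℕ) : ℝ) / (((n - (s + j) : ℕ) : ℝ) + j)) l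
        (𝓝 1) := (tendsto_natCast_div_add_atTop (j : ℝ)).comp hm
    have hL := hq.mul ((hρ (s + j)).mul (hInt (s + j) (fun x => α x * f x) (hα.mul hf)))
    have hR := (hρ s).mul (hInt s (fun x => β x * (f x + ε)) (hβ.mul (hf.add continuous_const)))
    rw [one_mul] at hL
    refine le_of_tendsto_of_tendsto hL hR ?_
    filter_upwards [hm.eventually (hatt f hf hf0 ε hε), hl (eventually_gt_atTop (s + j))] with n h1 h2
    obtain ⟨m, rfl⟩ : ∃ m, n = m + j + s := ⟨n - (s + j), by omega⟩
    have e1 : m + j + s - (s + j) = m := by omega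
    have e2 : m + j + s - s = m + j := by omega
    rw [e1] at h1 ⊢
    rw [e2]
    have hn1 : (conn C m).Nonempty := by
      obtain ⟨k, rfl⟩ : ∃ k, m = k + 1 := ⟨m - 1, by omega⟩
      exact conn_nonempty hI hA hne k
    have hn2 : (conn C (m + j)).Nonempty := by
      obtain ⟨k, hk⟩ : ∃ k, m + j = k + 1 := ⟨m + j - 1, by omega⟩
      rw [hk]
      exact conn_nonempty hI hA hne k
    rw [← integral_law hn1 (f := fun x => α x * f x) (hα.mul hf),
      ← integral_law hn2 (f := fun x => β x * (f x + ε)) (hβ.mul (hf.add continuous_const))] at h1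
    have hpos := kk_pos hI hA hne (n := m + j + s) (by omega)
    have hd : ((m + j + s).descFactorial (s + j) : ℝ) =
        ((m + j + s).descFactorial s : ℝ) * ((m + j).descFactorial j : ℝ) := by
      have := Nat.descFactorial_mul_descFactorial (n := m + j + s) (k := s) (m := s + j) (by omega)
      rw [e2, Nat.add_sub_cancel_left] at this
      rw [← this]
      push_cast
      ring
    unfold rr
    rw [e1, e2, hd]
    have h3 := mul_le_mul_of_nonneg_left h1
      (show (0 : ℝ) ≤ ((m + j + s).descFactorial s : ℝ) / kk C (m + j + s) by positivity)
    refine le_trans (le_of_eq ?_) (h3.trans (le_of_eq ?_)) <;> ring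
  have hlim : Tendsto (fun ε : ℝ => ρ s * ∫ x, β x * (f x + ε) ∂(P s : Measure XX)) (𝓝[>] 0)
      (𝓝 (ρ s * ∫ x, β x * f x ∂(P s : Measure XX))) := by
    have he : ∀ ε : ℝ, ∫ x, β x * (f x + ε) ∂(P s : Measure XX) =
        ∫ x, β x * f x ∂(P s : Measure XX) + (∫ x, β x ∂(P s : Measure XX)) * ε := by
      intro ε
      simp only [mul_add]
      rw [integral_add (f := fun x => β x * f x) (g := fun x => β x * ε)
        (integrable_of_cont _ (hβ.mul hf))
        (integrable_of_cont _ (hβ.mul continuous_const)), integral_mul_const]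
    simp only [he]
    have : Continuous fun ε : ℝ => ρ s * (∫ x, β x * f x ∂(P s : Measure XX) +
        (∫ x, β x ∂(P s : Measure XX)) * ε) := by fun_prop
    have h0 := this.tendsto 0
    rw [mul_zero, add_zero] at h0
    exact h0.mono_left nhdsWithin_le_nhds
  refine ge_of_tendsto hlim ?_
  filter_upwards [self_mem_nhdsWithin] with ε hε
  exact main ε hε

theorem limit_thm {C : GraphClassOn} (hI : ClassIsoInvariant C) (hA : ClassAddable C)
    (hne : ∀ n : ℕ, 1 ≤ n → ∃ G : SimpleGraph (Fin n), C (Fin n) G)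
    (u : Ultrafilter ℕ) (hu : (u : Filter ℕ) ≤ atTop) :
    ∃ ρ : ℕ → ℝ, (∀ s, Tendsto (fun n => rr C s n) u (𝓝 (ρ s))) ∧
      ∀ S, ∑ s ∈ Finset.range (S + 1), ((cls C s).card : ℝ) / (s.factorial : ℝ) * ρ s ≤
        Real.exp (1 / 2) := by
  have hPex : ∀ s, ∃ Q : ProbabilityMeasure XX, Tendsto (fun n => law C (n - s)) u (𝓝 Q) := by
    intro s
    obtain ⟨Q, -, hQ⟩ := isCompact_univ.ultrafilter_le_nhds
      (u.map (fun n => law C (n - s))) (by simp)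
    exact ⟨Q, hQ⟩
  have hρex : ∀ s, ∃ q : ℝ, Tendsto (fun n => rr C s n) u (𝓝 q) := by
    intro s
    obtain ⟨Q, -, hQ⟩ := (isCompact_Icc (a := (0 : ℝ)) (b := 2 ^ s)).ultrafilter_le_nhds
      (u.map (fun n => rr C s n)) (by
        rw [le_principal_iff]
        have : ∀ᶠ n in (u : Filter ℕ), rr C s n ∈ Set.Icc (0 : ℝ) (2 ^ s) := by
          filter_upwards [hu (eventually_ge_atTop (s + 3))] with n hn
          exact ⟨rr_nonneg C s n, rr_le hI hA hne s hn⟩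
        exact this)
    exact ⟨Q, hQ⟩
  choose P hP using hPex
  choose ρ hρ using hρex
  refine ⟨ρ, hρ, fun S => ?_⟩
  have hρ0 : ∀ s, 0 ≤ ρ s := fun s => ge_of_tendsto' (hρ s) fun n => rr_nonneg C s n
  have hρ1 : ρ 0 = 1 := by
    refine tendsto_nhds_unique (hρ 0) (tendsto_const_nhds.congr' ?_)
    filter_upwards [hu (eventually_gt_atTop 0)] with n hn
    exact (rr_zero hI hA hne hn).symm
  let μ : ℕ → Measure XX := fun s => ENNReal.ofReal (ρ s) • (P s : Measure XX)
  have : ∀ s, IsFiniteMeasure (μ s) := fun s =>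
    Measure.smul_finite _ ENNReal.ofReal_ne_top
  have hμ0 : μ 0 = (P 0 : Measure XX) := by simp [μ, hρ1]
  have : IsProbabilityMeasure (μ 0) := by rw [hμ0]; infer_instance
  have hμint : ∀ s (g : XX → ℝ), ∫ x, g x ∂(μ s) = ρ s * ∫ x, g x ∂(P s : Measure XX) := by
    intro s g
    simp only [μ]
    rw [integral_smul_measure, ENNReal.toReal_ofReal (hρ0 s), smul_eq_mul]
  have hres := measure_thm (X := XX) hI hA (bot_mem hne) μ xi xi_cont xi_nonneg ?_ ?_ ?_ S
  · refine le_trans (le_of_eq ?_) hres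
    refine Finset.sum_congr rfl fun s _ => ?_
    congr 1
    simp [μ, Measure.real, ENNReal.toReal_ofReal (hρ0 s)]
  · intro s j V hV v f hf hf0
    rw [hμint, hμint]
    simpa only [one_mul] using att_limit hI hA hne hu hP hρ continuous_const (xi_cont j V v)
      (att0 hI hA hV v) s f hf hf0
  · intro s j V hV i w U W e x v r hJ f hf hf0
    rw [hμint, hμint]
    exact att_limit hI hA hne hu hP hρ (xi_cont _ _ _) (xi_cont _ _ _)
      (att1 hI hA hV v hJ r) s f hf hf0
  · intro J
    rw [hμ0]
    set Φ : XX → ℝ := fun x => ∑ j ∈ Finset.range (J + 1), (1 / (j.factorial : ℝ)) *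
      ∑ V ∈ conn C j, ∑ v, xi j V v x with hΦ
    have hΦc : Continuous Φ := by
      refine continuous_finset_sum _ fun j _ => continuous_const.mul ?_
      exact continuous_finset_sum _ fun V _ => continuous_finset_sum _ fun v _ => xi_cont j V v
    have hgc : Continuous (fun x => max (Φ x - 1) 0) := by fun_prop
    have hlim := (ProbabilityMeasure.tendsto_iff_forall_integral_tendsto.1 (hP 0))
      (BoundedContinuousFunction.mkOfCompact ⟨fun x => max (Φ x - 1) 0, hgc⟩)
    have hzero : ∫ x, max (Φ x - 1) 0 ∂(P 0 : Measure XX) = 0 := by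
      refine tendsto_nhds_unique hlim (tendsto_const_nhds.congr' ?_)
      filter_upwards [hu (eventually_gt_atTop (2 * J))] with n hn
      have hnn : (conn C n).Nonempty := by
        obtain ⟨k, rfl⟩ : ∃ k, n = k + 1 := ⟨n - 1, by omega⟩
        exact conn_nonempty hI hA hne k
      have h1 := integral_law hnn hgc
      have h2 : ∑ G ∈ conn C n, max (Φ (xG G) - 1) 0 = 0 := by
        refine Finset.sum_eq_zero fun G hG => ?_
        have hGc := (mem_conn.1 hG).2
        have hn0 : (0 : ℝ) < n := by exact_mod_cast (by omega : 0 < n)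
        have h3 : Φ (xG G) = (∑ j ∈ Finset.range (J + 1), (1 / (j.factorial : ℝ)) *
            ∑ V ∈ conn C j, ∑ v, ((pends V v G).card : ℝ)) / n := by
          simp only [hΦ]
          rw [Finset.sum_div]
          refine Finset.sum_congr rfl fun j hj => ?_
          rw [Finset.mem_range] at hj
          rw [mul_div_assoc, Finset.sum_div]
          congr 1
          refine Finset.sum_congr rfl fun V _ => ?_
          rw [Finset.sum_div]
          refine Finset.sum_congr rfl fun v _ => ?_
          exact xi_xG (by omega) V v G hGc
        have h4 := weighted_pends_le (C := C) hn G hGc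
        rw [max_eq_right]
        rw [h3, sub_nonpos, div_le_one hn0]
        exact h4
      rw [h2] at h1
      have := (mul_eq_zero.1 h1).resolve_left (kk_pos hI hA hne (by omega)).ne'
      exact this.symm
    have hae := (integral_eq_zero_iff_of_nonneg (fun x => le_max_right _ _)
      (integrable_of_cont _ hgc)).1 hzero
    filter_upwards [hae] with x hx
    have : Φ x - 1 ≤ 0 := by
      have h5 : max (Φ x - 1) 0 = 0 := hx
      exact h5 ▸ le_max_left _ _
    linarith

end BA

namespace BA

lemma fin_ineq {C : GraphClassOn} (hI : ClassIsoInvariant C) (hA : ClassAddable C)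
    (hne : ∀ n : ℕ, 1 ≤ n → ∃ G : SimpleGraph (Fin n), C (Fin n) G) (S n : ℕ) (hn : S < n) :
    ((cls C n).card : ℝ) * (1 - 2 / ((S : ℝ) + 1)) ≤
      kk C n * ∑ s ∈ Finset.range (S + 1), ((cls C s).card : ℝ) / (s.factorial : ℝ) * rr C s n := by
  have hk := kk_pos hI hA hne (n := n) (by omega)
  have hb := big_comp hI hA.1 n S
  have hs := small_comp hA.2 n S (by omega)
  have hsplit : (cls C n).card ≤
      ((cls C n).filter (fun G => ∃ A, IsComp G A ∧ Aᶜ.card ≤ S)).card +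
      ((cls C n).filter (fun G => ∀ A, IsComp G A → S < Aᶜ.card)).card := by
    rw [← Finset.card_filter_add_card_filter_not (s := cls C n)
      (fun G => ∃ A, IsComp G A ∧ Aᶜ.card ≤ S)]
    refine Nat.add_le_add_left (Finset.card_le_card fun G hG => ?_) _
    rw [Finset.mem_filter] at hG ⊢
    refine ⟨hG.1, fun A hA => ?_⟩
    by_contra h
    exact hG.2 ⟨A, hA, by omega⟩
  have hn0 : (0 : ℝ) < n := by exact_mod_cast (by omega : 0 < n)
  have hS0 : (0 : ℝ) < (S : ℝ) + 1 := by positivity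
  have hs' : (((cls C n).filter (fun G => ∀ A, IsComp G A → S < Aᶜ.card)).card : ℝ) ≤
      ((cls C n).card : ℝ) * (2 / ((S : ℝ) + 1)) := by
    have h1 : (((cls C n).filter (fun G => ∀ A, IsComp G A → S < Aᶜ.card)).card : ℝ) *
        (n * ((S : ℝ) + 1)) ≤ (cls C n).card * (2 * n) := by
      have h2 : ((cls C n).filter (fun G => ∀ A, IsComp G A → S < Aᶜ.card)).card *
        (n * (S + 1)) ≤ (cls C n).card * (2 * n) :=
        hs.trans (Nat.mul_le_mul_left _ (by omega))
      exact_mod_cast h2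
    rw [← mul_div_assoc, le_div_iff₀ hS0]
    nlinarith
  have hb' : (((cls C n).filter (fun G => ∃ A, IsComp G A ∧ Aᶜ.card ≤ S)).card : ℝ) ≤
      kk C n * ∑ s ∈ Finset.range (S + 1), ((cls C s).card : ℝ) / (s.factorial : ℝ) * rr C s n := by
    have h1 : (((cls C n).filter (fun G => ∃ A, IsComp G A ∧ Aᶜ.card ≤ S)).card : ℝ) ≤
        ∑ A ∈ Finset.univ.filter (fun A : Finset (Fin n) => Aᶜ.card ≤ S),
          kk C A.card * ((cls C Aᶜ.card).card : ℝ) := by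
      unfold kk
      exact_mod_cast hb
    refine h1.trans (le_of_eq ?_)
    rw [Finset.sum_filter]
    have h2 := sum_subsets (j := n) (fun p q => if q ≤ S then kk C p * ((cls C q).card : ℝ) else 0)
    rw [h2, Finset.Nat.sum_antidiagonal_eq_sum_range_succ_mk, ← Finset.sum_range_reflect]
    have hsub : Finset.range (S + 1) ⊆ Finset.range n.succ :=
      Finset.range_subset_range.2 (by omega)
    rw [Finset.mul_sum, ← Finset.sum_subset hsub]
    · refine Finset.sum_congr rfl fun s hs => ?_
      rw [Finset.mem_range] at hs
      have e1 : n.succ - 1 - s = n - s := by omega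
      have e2 : n - (n - s) = s := by omega
      beta_reduce
      rw [e1, e2]
      rw [if_pos (by omega), Nat.choose_symm (by omega), rr, Nat.descFactorial_eq_factorial_mul_choose]
      push_cast
      have : (s.factorial : ℝ) ≠ 0 := by exact_mod_cast s.factorial_ne_zero
      have hk' := hk.ne'
      field_simp
    · intro s hs hs2
      rw [Finset.mem_range] at hs hs2
      have e1 : n.succ - 1 - s = n - s := by omega
      have e2 : n - (n - s) = s := by omega
      simp only [e1, e2]
      rw [if_neg (by omega), mul_zero]
  have hsplit' : ((cls C n).card : ℝ) ≤
      (((cls C n).filter (fun G => ∃ A, IsComp G A ∧ Aᶜ.card ≤ S)).card : ℝ) +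
      (((cls C n).filter (fun G => ∀ A, IsComp G A → S < Aᶜ.card)).card : ℝ) := by
    exact_mod_cast hsplit
  linarith

theorem main {C : GraphClassOn} (hI : ClassIsoInvariant C) (hA : ClassAddable C)
    (hne : ∀ n : ℕ, 1 ≤ n → ∃ G : SimpleGraph (Fin n), C (Fin n) G) :
    Real.exp (-(1 / 2 : ℝ)) ≤
      Filter.liminf (fun n : ℕ => classProb C n (fun G => G.Connected)) atTop := by
  have hp : ∀ n, classProb C n (fun G => G.Connected) = kk C n / ((cls C n).card : ℝ) := by
    intro n
    rw [classProb, classCount_eq, connCount_eq]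
    rfl
  have hsub : ∀ n, kk C n ≤ ((cls C n).card : ℝ) := by
    intro n
    unfold kk
    have : (conn C n).card ≤ (cls C n).card := Finset.card_le_card fun G hG =>
      mem_cls.2 (mem_conn.1 hG).1
    exact_mod_cast this
  have h01 : ∀ n, classProb C n (fun G => G.Connected) ≤ 1 := by
    intro n
    rw [hp]
    exact div_le_one_of_le₀ (hsub n) (by positivity)
  refine le_of_forall_lt fun c hc => ?_
  obtain ⟨c', hc1, hc2⟩ := exists_between (max_lt hc (Real.exp_pos (-(1 / 2 : ℝ))))
  refine lt_of_lt_of_le ((le_max_left _ _).trans_lt hc1) ?_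
  have hc0 : 0 < c' := (le_max_right _ _).trans_lt hc1
  refine le_liminf_of_le ?_ ?_
  · exact IsBoundedUnder.isCoboundedUnder_ge ⟨1, by simpa using ⟨0, fun n _ => h01 n⟩⟩
  by_contra hcon
  rw [not_eventually] at hcon
  have hNB : (atTop ⊓ 𝓟 {n : ℕ | ¬ c' ≤ classProb C n (fun G => G.Connected)}).NeBot :=
    Filter.frequently_mem_iff_neBot.1 hcon
  let u : Ultrafilter ℕ := Ultrafilter.of
    (atTop ⊓ 𝓟 {n : ℕ | ¬ c' ≤ classProb C n (fun G => G.Connected)})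
  have hu := Ultrafilter.of_le (atTop ⊓ 𝓟 {n : ℕ | ¬ c' ≤ classProb C n (fun G => G.Connected)})
  have hu1 : (u : Filter ℕ) ≤ atTop := hu.trans inf_le_left
  have hu2 : ∀ᶠ n in (u : Filter ℕ), ¬ c' ≤ classProb C n (fun G => G.Connected) :=
    (hu.trans inf_le_right) (mem_principal_self _)
  obtain ⟨ρ, hρ, hsum⟩ := limit_thm hI hA hne u hu1
  have key : ∀ S : ℕ, 1 ≤ S → (1 - 2 / ((S : ℝ) + 1)) ≤ c' * Real.exp (1 / 2) := by
    intro S hS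
    have hlim : Tendsto (fun n => c' * ∑ s ∈ Finset.range (S + 1),
        ((cls C s).card : ℝ) / (s.factorial : ℝ) * rr C s n) u
        (𝓝 (c' * ∑ s ∈ Finset.range (S + 1), ((cls C s).card : ℝ) / (s.factorial : ℝ) * ρ s)) :=
      (tendsto_finsetSum _ fun s _ => (hρ s).const_mul _).const_mul _
    refine (ge_of_tendsto hlim ?_).trans (mul_le_mul_of_nonneg_left (hsum S) hc0.le)
    filter_upwards [hu2, hu1 (eventually_gt_atTop S)] with n h1 h2
    have h3 := fin_ineq hI hA hne S n h2
    have hk := kk_pos hI hA hne (n := n) (by omega)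
    have hcl := hk.trans_le (hsub n)
    rw [hp, not_le, div_lt_iff₀ hcl] at h1
    set T := ∑ s ∈ Finset.range (S + 1), ((cls C s).card : ℝ) / (s.factorial : ℝ) * rr C s n
    have hT : 0 ≤ T := Finset.sum_nonneg fun s _ => mul_nonneg (by positivity) (rr_nonneg C s n)
    have h4 := mul_le_mul_of_nonneg_right h1.le hT
    have h5 : ((cls C n).card : ℝ) * (1 - 2 / ((S : ℝ) + 1)) ≤ ((cls C n).card : ℝ) * (c' * T) := by
      linarith
    exact le_of_mul_le_mul_left h5 hcl
  have hlt : c' * Real.exp (1 / 2) < 1 := by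
    have := mul_lt_mul_of_pos_right hc2 (Real.exp_pos (1 / 2))
    rwa [← Real.exp_add, neg_add_cancel, Real.exp_zero] at this
  have hl : Tendsto (fun S : ℕ => 1 - 2 / ((S : ℝ) + 1)) atTop (𝓝 (1 - 0)) := by
    refine tendsto_const_nhds.sub ?_
    exact tendsto_const_nhds.div_atTop
      (tendsto_atTop_add_const_right _ _ tendsto_natCast_atTop_atTop)
  rw [sub_zero] at hl
  have := le_of_tendsto hl (by
    filter_upwards [eventually_ge_atTop 1] with S hS
    exact key S hS)
  linarith

end BA

end BAsection

/-- A random graph from a small addable class is connected with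
probability at least `1/√e - o(1)`. -/
theorem connected_probability_liminf
    (C : GraphClassOn) (hIso : ClassIsoInvariant C) (hAdd : ClassAddable C)
    (hSmall : ClassSmall C)
    (hne : ∀ n : ℕ, 1 ≤ n → ∃ G : SimpleGraph (Fin n), C (Fin n) G) :
    Real.exp (-(1 / 2 : ℝ)) ≤
      Filter.liminf (fun n : ℕ => classProb C n (fun G => G.Connected)) atTop := by
  exact BA.main hIso hAdd hne
end

section
/- Let t_n be the number of connected acyclic simple graphs (trees) on the vertex set Fin n and let f_n be the number of acyclic simple graphs (forests) on the vertex set Fin n. Then t_n / f_n converges to e^{−1/2} as n → ∞; that is, the limiting probability that a uniformly random forest on Fin n is connected equals e^{−1/2}. -/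
open Filter Topology FirstOrder

/-- The graph on `Option W` obtained from `H` by adding a vertex with neighbourhood `A`. -/
def coneGraph {W : Type} (H : SimpleGraph W) (A : Set W) : SimpleGraph (Option W) where
  Adj x y := match x, y with
    | none, none => False
    | none, some w => w ∈ A
    | some w, none => w ∈ A
    | some a, some b => H.Adj a b
  symm := ⟨by
    intro x y h
    cases x <;> cases y
    · exact h
    · exact h
    · exact h
    · exact SimpleGraph.Adj.symm (G := H) h⟩
  loopless := ⟨by
    intro x h
    cases x
    · exact h
    · exact H.loopless.irrefl _ h⟩

@[simp] lemma coneGraph_none_none {W : Type} (H : SimpleGraph W) (A : Set W) :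
    (coneGraph H A).Adj none none ↔ False := Iff.rfl
@[simp] lemma coneGraph_none_some {W : Type} (H : SimpleGraph W) (A : Set W) (w : W) :
    (coneGraph H A).Adj none (some w) ↔ w ∈ A := Iff.rfl
@[simp] lemma coneGraph_some_none {W : Type} (H : SimpleGraph W) (A : Set W) (w : W) :
    (coneGraph H A).Adj (some w) none ↔ w ∈ A := Iff.rfl
@[simp] lemma coneGraph_some_some {W : Type} (H : SimpleGraph W) (A : Set W) (a b : W) :
    (coneGraph H A).Adj (some a) (some b) ↔ H.Adj a b := Iff.rfl

lemma coneGraph_reach_of {W : Type} {H : SimpleGraph W} (A : Set W) {a b : W}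
    (h : H.Reachable a b) : (coneGraph H A).Reachable (some a) (some b) := by
  rw [SimpleGraph.reachable_iff_reflTransGen] at h ⊢
  induction h with
  | refl => exact Relation.ReflTransGen.refl
  | tail _ h2 ih => exact ih.tail h2

lemma coneGraph_reach_none {W : Type} (H : SimpleGraph W) (A : Set W) (b : W) :
    (coneGraph H A).Reachable none (some b) ↔ ∃ a ∈ A, H.Reachable a b := by
  constructor
  · intro h
    rw [SimpleGraph.reachable_iff_reflTransGen] at h
    have key : ∀ y, Relation.ReflTransGen (coneGraph H A).Adj none y →
        ∀ b, y = some b → ∃ a ∈ A, H.Reachable a b := by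
      intro y hy
      induction hy with
      | refl => intro b hb; cases hb
      | tail h1 h2 ih =>
        rename_i x z
        rintro b rfl
        cases x with
        | none => exact ⟨b, h2, SimpleGraph.Reachable.refl _⟩
        | some c =>
          obtain ⟨a, ha, hr⟩ := ih c rfl
          exact ⟨a, ha, hr.trans (SimpleGraph.Adj.reachable h2)⟩
    exact key _ h b rfl
  · rintro ⟨a, ha, hr⟩
    have h1 : (coneGraph H A).Adj none (some a) := ha
    exact h1.reachable.trans (coneGraph_reach_of A hr)

lemma coneGraph_reach_some {W : Type} (H : SimpleGraph W) (A : Set W) (a b : W) :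
    (coneGraph H A).Reachable (some a) (some b) ↔
      H.Reachable a b ∨ ((∃ c ∈ A, H.Reachable c a) ∧ ∃ c ∈ A, H.Reachable c b) := by
  constructor
  · intro h
    rw [SimpleGraph.reachable_iff_reflTransGen] at h
    by_cases hn : (coneGraph H A).Reachable none (some a)
    · right
      refine ⟨(coneGraph_reach_none H A a).1 hn, (coneGraph_reach_none H A b).1 ?_⟩
      rw [← SimpleGraph.reachable_iff_reflTransGen] at h
      exact hn.trans h
    · left
      have key : ∀ y, Relation.ReflTransGen (coneGraph H A).Adj (some a) y →
          ∃ b, y = some b ∧ H.Reachable a b := by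
        intro y hy
        induction hy with
        | refl => exact ⟨a, rfl, SimpleGraph.Reachable.refl _⟩
        | tail h1 h2 ih =>
          rename_i x z
          obtain ⟨b, rfl, hr⟩ := ih
          cases z with
          | none =>
            exact absurd ((SimpleGraph.Adj.reachable h2).symm.trans
              (coneGraph_reach_of A hr.symm)) hn
          | some c => exact ⟨c, rfl, hr.trans (SimpleGraph.Adj.reachable h2)⟩
      obtain ⟨b', hb, hr⟩ := key _ h
      cases hb
      exact hr
  · rintro (h | ⟨h1, h2⟩)
    · exact coneGraph_reach_of A h
    · exact ((coneGraph_reach_none H A a).2 h1).symm.trans ((coneGraph_reach_none H A b).2 h2)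

/-- The vertices of `S` lie in pairwise different components. -/
def SepSet {V : Type} (G : SimpleGraph V) (S : Set V) : Prop :=
  ∀ u ∈ S, ∀ v ∈ S, G.Reachable u v → u = v

lemma coneGraph_del_none {W : Type} (H : SimpleGraph W) (A : Set W) (a : W) :
    (coneGraph H A).deleteEdges {s(none, some a)} = coneGraph H (A \ {a}) := by
  ext x y
  cases x <;> cases y <;> simp [SimpleGraph.deleteEdges_adj]

lemma coneGraph_del_some {W : Type} (H : SimpleGraph W) (A : Set W) (a b : W) :
    (coneGraph H A).deleteEdges {s(some a, some b)} = coneGraph (H.deleteEdges {s(a, b)}) A := by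
  ext x y
  cases x <;> cases y <;> simp [SimpleGraph.deleteEdges_adj]

lemma coneGraph_acyclic {W : Type} (H : SimpleGraph W) (A : Set W) :
    (coneGraph H A).IsAcyclic ↔ H.IsAcyclic ∧ SepSet H A := by
  constructor
  · intro h
    refine ⟨h.comap (⟨some, fun h => h⟩ : H →g coneGraph H A) (Option.some_injective _), ?_⟩
    intro a ha b hb hr
    by_contra hab
    rw [SimpleGraph.isAcyclic_iff_forall_adj_isBridge] at h
    have h1 := h (show (coneGraph H A).Adj none (some a) from ha)
    rw [SimpleGraph.isBridge_iff, coneGraph_del_none, coneGraph_reach_none] at h1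
    exact h1 ⟨b, ⟨hb, fun h => hab h.symm⟩, hr.symm⟩
  · rintro ⟨h, hs⟩
    rw [SimpleGraph.isAcyclic_iff_forall_adj_isBridge] at h ⊢
    have hnone : ∀ a ∈ A, (coneGraph H A).IsBridge s(none, some a) := by
      intro a ha
      rw [SimpleGraph.isBridge_iff, coneGraph_del_none, coneGraph_reach_none]
      rintro ⟨b, ⟨hb, hab⟩, hr⟩
      exact hab (hs b hb a ha hr)
    intro x y hxy
    cases x with
    | none =>
      cases y with
      | none => exact hxy.elim
      | some a => exact hnone a hxy
    | some a =>
      cases y with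
      | none => rw [Sym2.eq_swap]; exact hnone a hxy
      | some b =>
        have hab := h (show H.Adj a b from hxy)
        rw [SimpleGraph.isBridge_iff] at hab ⊢
        rw [coneGraph_del_some, coneGraph_reach_some]
        rintro (h1 | ⟨⟨c, hc, h1⟩, ⟨d, hd, h2⟩⟩)
        · exact hab h1
        · have hle : H.deleteEdges {s(a, b)} ≤ H := SimpleGraph.deleteEdges_le _
          have hcd : c = d := hs c hc d hd (((h1.mono hle).trans
            (SimpleGraph.Adj.reachable hxy)).trans (h2.mono hle).symm)
          subst hcd
          exact hab (h1.symm.trans h2)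

/-- `G` is a forest, the vertices of `S` are in different components and, if `cov` holds,
each component contains a vertex of `S`. -/
def GoodForest (cov : Prop) {V : Type} (G : SimpleGraph V) (S : Set V) : Prop :=
  G.IsAcyclic ∧ SepSet G S ∧ (cov → ∀ v, ∃ s ∈ S, G.Reachable s v)

lemma goodForest_cone (cov : Prop) {W : Type} (H : SimpleGraph W) (A S : Set W) :
    GoodForest cov (coneGraph H A) (insert none (some '' S)) ↔
      Disjoint A S ∧ GoodForest cov H (S ∪ A) := by
  unfold GoodForest
  rw [coneGraph_acyclic]
  constructor
  · rintro ⟨⟨h1, h2⟩, h3, h4⟩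
    have hAS : ∀ a ∈ A, ∀ s ∈ S, ¬ H.Reachable a s := by
      intro a ha s hs hr
      have := h3 none (by simp) (some s) (by simp [hs])
        ((coneGraph_reach_none H A s).2 ⟨a, ha, hr⟩)
      cases this
    refine ⟨?_, h1, ?_, ?_⟩
    · rw [Set.disjoint_left]
      intro a ha hs
      exact hAS a ha a hs (SimpleGraph.Reachable.refl _)
    · rintro u (hu | hu) v (hv | hv) hr
      · have := h3 (some u) (by simp [hu]) (some v) (by simp [hv]) (coneGraph_reach_of A hr)
        simpa using this
      · exact absurd hr.symm (hAS v hv u hu)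
      · exact absurd hr (hAS u hu v hv)
      · exact h2 u hu v hv hr
    · intro hc v
      obtain ⟨s, hs, hr⟩ := h4 hc (some v)
      rcases hs with rfl | ⟨t, ht, rfl⟩
      · obtain ⟨a, ha, hr⟩ := (coneGraph_reach_none H A v).1 hr
        exact ⟨a, Or.inr ha, hr⟩
      · rcases (coneGraph_reach_some H A t v).1 hr with hr | ⟨-, a, ha, hr⟩
        · exact ⟨t, Or.inl ht, hr⟩
        · exact ⟨a, Or.inr ha, hr⟩
  · rintro ⟨hd, h1, h2, h3⟩
    rw [Set.disjoint_left] at hd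
    have hAS : ∀ a ∈ A, ∀ s ∈ S, ¬ H.Reachable a s := by
      intro a ha s hs hr
      have := h2 a (Or.inr ha) s (Or.inl hs) hr
      subst this
      exact hd ha hs
    refine ⟨⟨h1, fun u hu v hv hr => h2 u (Or.inr hu) v (Or.inr hv) hr⟩, ?_, ?_⟩
    · rintro u (rfl | ⟨s, hs, rfl⟩) v (rfl | ⟨t, ht, rfl⟩) hr
      · rfl
      · obtain ⟨a, ha, hr⟩ := (coneGraph_reach_none H A t).1 hr
        exact absurd hr (hAS a ha t ht)
      · obtain ⟨a, ha, hr⟩ := (coneGraph_reach_none H A s).1 hr.symm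
        exact absurd hr (hAS a ha s hs)
      · rcases (coneGraph_reach_some H A s t).1 hr with hr | ⟨-, a, ha, hr⟩
        · rw [h2 s (Or.inl hs) t (Or.inl ht) hr]
        · exact absurd hr (hAS a ha t ht)
    · intro hc v
      cases v with
      | none => exact ⟨none, by simp, SimpleGraph.Reachable.refl _⟩
      | some w =>
        obtain ⟨s, (hs | hs), hr⟩ := h3 hc w
        · exact ⟨some s, by simp [hs], coneGraph_reach_of A hr⟩
        · exact ⟨none, by simp, (coneGraph_reach_none H A w).2 ⟨s, hs, hr⟩⟩

open Classical in
/-- Graphs on `Option W` are pairs of a neighbourhood of `none` and a graph on `W`. -/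
noncomputable def coneEquiv (W : Type) [Fintype W] :
    SimpleGraph (Option W) ≃ Finset W × SimpleGraph W where
  toFun G := (Finset.univ.filter fun w => G.Adj none (some w), G.comap some)
  invFun p := coneGraph p.2 (p.1 : Set W)
  left_inv G := by
    ext x y
    cases x <;> cases y <;> simp [SimpleGraph.adj_comm]
  right_inv p := by
    ext <;> simp

/-- The number of good forests. -/
noncomputable def goodCount (cov : Prop) {V : Type} (S : Finset V) : ℕ :=
  Nat.card {G : SimpleGraph V // GoodForest cov G (S : Set V)}

lemma goodForest_iso (cov : Prop) {V V' : Type} {G : SimpleGraph V} {G' : SimpleGraph V'}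
    (f : G ≃g G') (S : Set V) (h : GoodForest cov G S) : GoodForest cov G' (f '' S) := by
  obtain ⟨h1, h2, h3⟩ := h
  refine ⟨f.isAcyclic_iff.1 h1, ?_, ?_⟩
  · rintro _ ⟨u, hu, rfl⟩ _ ⟨v, hv, rfl⟩ hr
    rw [h2 u hu v hv (SimpleGraph.Iso.reachable_iff.1 hr)]
  · intro hc v
    obtain ⟨s, hs, hr⟩ := h3 hc (f.symm v)
    refine ⟨f s, ⟨s, hs, rfl⟩, ?_⟩
    have := (SimpleGraph.Iso.reachable_iff (φ := f)).2 hr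
    simpa using this

lemma goodCount_equiv (cov : Prop) {V V' : Type} (e : V ≃ V') (S : Finset V) :
    goodCount cov (S.map e.toEmbedding) = goodCount cov S := by
  unfold goodCount
  symm
  refine Nat.card_congr (e.simpleGraph.subtypeEquiv ?_)
  intro G
  have f : G ≃g e.simpleGraph G := (SimpleGraph.Iso.comap e.symm G).symm
  have hf : ∀ v, (SimpleGraph.Iso.comap e.symm G).symm v = e v := fun v => rfl
  constructor
  · intro h
    have := goodForest_iso cov (SimpleGraph.Iso.comap e.symm G).symm _ h
    have h2 : ((SimpleGraph.Iso.comap e.symm G).symm '' (S : Set V))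
      = ((S.map e.toEmbedding : Finset V') : Set V') := by
      ext x; simp [hf]
    rwa [h2] at this
  · intro h
    have := goodForest_iso cov (SimpleGraph.Iso.comap e.symm G) _ h
    have h2 : ((SimpleGraph.Iso.comap e.symm G) '' ((S.map e.toEmbedding : Finset V') : Set V'))
      = (S : Set V) := by
      ext x
      simp only [Set.mem_image, Finset.mem_coe, Finset.mem_map_equiv]
      constructor
      · rintro ⟨y, hy, rfl⟩
        exact hy
      · intro hx
        exact ⟨e x, by simpa using hx, e.symm_apply_apply x⟩
    rwa [h2] at this

lemma goodCount_cone (cov : Prop) {W : Type} [Fintype W] [DecidableEq W] (S : Finset W) :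
    goodCount cov (Finset.insertNone S) = ∑ A ∈ (Sᶜ).powerset, goodCount cov (S ∪ A) := by
  classical
  unfold goodCount
  have h1 : Nat.card {G : SimpleGraph (Option W) //
      GoodForest cov G ((Finset.insertNone S : Finset (Option W)) : Set (Option W))} =
      Nat.card {p : Finset W × SimpleGraph W // p.1 ∈ (Sᶜ).powerset ∧
        GoodForest cov p.2 ((S ∪ p.1 : Finset W) : Set W)} := by
    refine Nat.card_congr ((coneEquiv W).subtypeEquiv ?_)
    intro G
    obtain ⟨p, rfl⟩ := (coneEquiv W).symm.surjective G
    rw [Equiv.apply_symm_apply]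
    have h2 : ((Finset.insertNone S : Finset (Option W)) : Set (Option W))
        = insert none (some '' (S : Set W)) := by
      ext x; cases x <;> simp
    rw [h2]
    refine (goodForest_cone cov p.2 (p.1 : Set W) (S : Set W)).trans ?_
    rw [Finset.mem_powerset, Finset.coe_union]
    refine and_congr ?_ Iff.rfl
    rw [Finset.disjoint_coe, Finset.subset_compl_iff_disjoint_right]
  rw [h1]
  have h3 : ∀ A : Finset W, Nat.card {G : SimpleGraph W //
      GoodForest cov G ((S ∪ A : Finset W) : Set W)} =
      (Finset.univ.filter fun G : SimpleGraph W =>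
        GoodForest cov G ((S ∪ A : Finset W) : Set W)).card := by
    intro A
    rw [Nat.card_eq_fintype_card, Fintype.card_subtype]
  simp_rw [h3]
  rw [Nat.card_eq_fintype_card, Fintype.card_subtype, ← Finset.card_sigma]
  refine Finset.card_bij' (fun p _ => ⟨p.1, p.2⟩) (fun p _ => (p.1, p.2)) ?_ ?_ ?_ ?_ <;> simp

lemma goodCount_singleton_of_empty {V : Type} (v : V) :
    goodCount False (∅ : Finset V) = goodCount False {v} := by
  unfold goodCount
  refine Nat.card_congr (Equiv.subtypeEquivRight ?_)
  intro G
  simp [GoodForest, SepSet]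

lemma goodCount_true_empty {V : Type} [Nonempty V] :
    goodCount True (∅ : Finset V) = 0 := by
  unfold goodCount
  have : IsEmpty {G : SimpleGraph V // GoodForest True G ((∅ : Finset V) : Set V)} := by
    constructor
    rintro ⟨G, -, -, h⟩
    obtain ⟨v⟩ := (inferInstance : Nonempty V)
    simp at h
  exact Nat.card_of_isEmpty

lemma goodCount_isEmpty (cov : Prop) {V : Type} [IsEmpty V] (S : Finset V) :
    goodCount cov S = 1 := by
  unfold goodCount
  rw [Nat.card_eq_one_iff_unique]
  refine ⟨inferInstance, ⟨⊥, ?_, ?_, ?_⟩⟩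
  · exact SimpleGraph.IsAcyclic.of_subsingleton
  · intro u; exact isEmptyElim u
  · intro _ u; exact isEmptyElim u

lemma goodCount_forest {V : Type} :
    Nat.card {G : SimpleGraph V // G.IsAcyclic} = goodCount False (∅ : Finset V) := by
  unfold goodCount
  refine Nat.card_congr (Equiv.subtypeEquivRight ?_)
  intro G
  simp [GoodForest, SepSet]

lemma goodCount_tree {V : Type} (v : V) :
    Nat.card {G : SimpleGraph V // G.Connected ∧ G.IsAcyclic} = goodCount True {v} := by
  unfold goodCount
  refine Nat.card_congr (Equiv.subtypeEquivRight ?_)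
  intro G
  simp only [GoodForest, SepSet, SimpleGraph.connected_iff_exists_forall_reachable]
  constructor
  · rintro ⟨⟨w, hw⟩, h⟩
    refine ⟨h, by simp, fun _ u => ⟨v, by simp, (hw v).symm.trans (hw u)⟩⟩
  · rintro ⟨h, -, h2⟩
    exact ⟨⟨v, fun u => by simpa using h2 trivial u⟩, h⟩

/-- The recursion satisfied by the numbers of good forests determines them. -/
lemma goodCount_eq (cov : Prop) (N : ℕ → ℕ → ℝ) (h00 : N 0 0 = 1)
    (h0 : ∀ (n : ℕ), ∀ S : Finset (Fin (n + 1)), S = ∅ →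
      (∀ T : Finset (Fin (n + 1)), T.card = 1 → (goodCount cov T : ℝ) = N (n + 1) 1) →
      (goodCount cov S : ℝ) = N (n + 1) 0)
    (hrec : ∀ n k : ℕ, k ≤ n → N (n + 1) (k + 1) =
      ∑ a ∈ Finset.range (n - k + 1), ((n - k).choose a : ℝ) * N n (k + a)) :
    ∀ (n : ℕ) (S : Finset (Fin n)), (goodCount cov S : ℝ) = N n S.card := by
  classical
  have trans : ∀ n : ℕ, (∀ S : Finset (Fin n), (goodCount cov S : ℝ) = N n S.card) →
      ∀ (V : Type) [Fintype V] (S : Finset V), Fintype.card V = n →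
        (goodCount cov S : ℝ) = N n S.card := by
    intro n h V _ S hV
    have e : V ≃ Fin n := Fintype.equivFinOfCardEq hV
    rw [← goodCount_equiv cov e S, h, Finset.card_map]
  intro n
  induction n with
  | zero =>
    intro S
    rw [goodCount_isEmpty, Finset.eq_empty_of_isEmpty S]
    simp [h00]
  | succ n ih =>
    have pos : ∀ S : Finset (Fin (n + 1)), S.Nonempty →
        (goodCount cov S : ℝ) = N (n + 1) S.card := by
      rintro S ⟨s, hs⟩
      let e : Option {b // b ≠ s} ≃ Fin (n + 1) := Equiv.optionSubtypeNe s
      let S' : Finset {b // b ≠ s} := S.subtype (fun b => b ≠ s)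
      have hcardW : Fintype.card {b // b ≠ s} = n := by
        simp
      have hS : S = (Finset.insertNone S').map e.toEmbedding := by
        ext x
        by_cases hx : x = s
        · subst hx
          simp [hs, e]
        · rw [Finset.mem_map_equiv]
          simp [e, S', hx]
      have hcard : S.card = S'.card + 1 := by
        conv_lhs => rw [hS]
        simp
      have hle : S'.card ≤ n := (Finset.card_le_univ S').trans_eq hcardW
      rw [hcard, hrec n _ hle]
      conv_lhs => rw [hS]
      rw [goodCount_equiv, goodCount_cone]
      push_cast
      have hs2 : ∀ A ∈ (S'ᶜ).powerset, (goodCount cov (S' ∪ A) : ℝ) =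
          (fun a => N n (S'.card + a)) A.card := by
        intro A hA
        rw [trans n ih _ (S' ∪ A) hcardW, Finset.card_union_of_disjoint]
        rw [Finset.mem_powerset, Finset.subset_compl_iff_disjoint_right] at hA
        exact hA.symm
      rw [Finset.sum_congr rfl hs2]
      refine (Finset.sum_powerset_apply_card (fun a => N n (S'.card + a))).trans ?_
      rw [Finset.card_compl, hcardW]
      simp
    intro S
    rcases S.eq_empty_or_nonempty with hS | hS
    · rw [h0 n S hS, hS, Finset.card_empty]
      intro T hT
      rw [pos T (Finset.card_pos.1 (by omega)), hT]
    · exact pos S hS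

lemma binom_sum_linear (M : ℕ) (p y : ℝ) (hy : 1 + y ≠ 0) :
    ∑ a ∈ Finset.range (M + 1), (M.choose a : ℝ) * (p + a) * y ^ (M - a) =
      p * (1 + y) ^ M + M * (1 + y) ^ M / (1 + y) := by
  have h1 : ∑ a ∈ Finset.range (M + 1), (M.choose a : ℝ) * y ^ (M - a) = (1 + y) ^ M := by
    rw [add_pow]
    refine Finset.sum_congr rfl fun a _ => ?_
    rw [one_pow]; ring
  have h2 : ∑ a ∈ Finset.range (M + 1), (M.choose a : ℝ) * a * y ^ (M - a) =
      M * (1 + y) ^ M / (1 + y) := by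
    cases M with
    | zero => simp
    | succ m =>
      rw [Finset.sum_range_succ']
      have h3 : ∀ a ∈ Finset.range (m + 1),
          ((m + 1).choose (a + 1) : ℝ) * ((a + 1 : ℕ) : ℝ) * y ^ (m + 1 - (a + 1)) =
          ((m : ℝ) + 1) * (1 ^ a * y ^ (m - a) * (m.choose a : ℝ)) := by
        intro a _
        have := Nat.add_one_mul_choose_eq m a
        have h4 : ((m : ℝ) + 1) * (m.choose a : ℝ) =
          ((m + 1).choose (a + 1) : ℝ) * ((a + 1 : ℕ) : ℝ) := by exact_mod_cast this
        rw [← h4, Nat.add_sub_add_right, one_pow]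
        ring
      rw [Finset.sum_congr rfl h3, ← Finset.mul_sum, ← add_pow]
      field_simp
      push_cast
      ring
  rw [← h2, ← h1, Finset.mul_sum, ← Finset.sum_add_distrib]
  refine Finset.sum_congr rfl fun a _ => ?_
  ring

/-- Number of forests on `n` vertices rooted at `k` given vertices. -/
noncomputable def treeN (n k : ℕ) : ℝ :=
  if n = 0 then 1 else k * (n : ℝ) ^ (n - k) / n

lemma treeN_rec (n k : ℕ) (hk : k ≤ n) : treeN (n + 1) (k + 1) =
      ∑ a ∈ Finset.range (n - k + 1), ((n - k).choose a : ℝ) * treeN n (k + a) := by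
  rcases Nat.eq_zero_or_pos n with rfl | hn
  · obtain rfl : k = 0 := by omega
    simp [treeN]
  · have hn' : (n : ℝ) ≠ 0 := by positivity
    obtain ⟨m, rfl⟩ := Nat.exists_eq_add_of_le hk
    have h1 : ∀ a ∈ Finset.range (k + m - k + 1),
        ((k + m - k).choose a : ℝ) * treeN (k + m) (k + a) =
        ((m.choose a : ℝ) * ((k : ℝ) + a) * ((k + m : ℕ) : ℝ) ^ (m - a)) / ((k + m : ℕ) : ℝ) := by
      intro a _
      rw [treeN, if_neg (by omega)]
      have e1 : k + m - k = m := by omega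
      have e2 : k + m - (k + a) = m - a := by omega
      rw [e1, e2]
      push_cast
      ring
    rw [Finset.sum_congr rfl h1, ← Finset.sum_div]
    have e1 : k + m - k = m := by omega
    rw [e1, binom_sum_linear _ _ _ (by positivity), treeN, if_neg (by omega)]
    have e2 : k + m + 1 - (k + 1) = m := by omega
    rw [e2]
    push_cast at hn' ⊢
    have h3 : (k : ℝ) + m + 1 ≠ 0 := by positivity
    have h4 : 1 + ((k : ℝ) + m) ≠ 0 := by positivity
    rw [show 1 + ((k : ℝ) + m) = k + m + 1 by ring]
    field_simp
    ring

/-- The coefficients in the Takács formula. -/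
noncomputable def tak (j : ℕ) : ℝ := (-1 / 2 : ℝ) ^ j / (j.factorial : ℝ)

/-- The `j`-th term in the formula for the number of forests on `n` vertices in which `k` given
vertices lie in different components. -/
noncomputable def forestTerm (n k j : ℕ) : ℝ :=
  tak j * ((n - k).descFactorial (2 * j) : ℝ) * (k + 2 * j + 1) *
    ((n : ℝ) + 1) ^ (n - k) / ((n : ℝ) + 1) ^ (2 * j) / ((n : ℝ) + 1)

/-- Number of forests on `n` vertices in which `k` given vertices lie in different components. -/
noncomputable def forestN (n k : ℕ) : ℝ := ∑ j ∈ Finset.range (n + 1), forestTerm n k j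

lemma choose_mul_desc (m a i : ℕ) :
    m.choose a * (m - a).descFactorial i = m.descFactorial i * (m - i).choose a := by
  rw [Nat.descFactorial_eq_factorial_mul_choose, Nat.descFactorial_eq_factorial_mul_choose]
  have h1 := Nat.choose_mul (n := m) (k := a + i) (s := a) (by omega)
  have h2 := Nat.choose_mul (n := m) (k := a + i) (s := i) (by omega)
  rw [Nat.choose_symm_add, h2] at h1
  have e1 : a + i - a = i := by omega
  have e2 : a + i - i = a := by omega
  rw [e1, e2] at h1
  calc m.choose a * (i.factorial * (m - a).choose i)
      = i.factorial * (m.choose a * (m - a).choose i) := by ring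
    _ = i.factorial * (m.choose i * (m - i).choose a) := by rw [h1]
    _ = _ := by ring

lemma forestTerm_eq_zero (n k j : ℕ) (h : n - k < 2 * j) : forestTerm n k j = 0 := by
  unfold forestTerm
  rw [Nat.descFactorial_eq_zero_iff_lt.2 h]
  simp

lemma forestTerm_rec (n k j : ℕ) (hk : k ≤ n) : forestTerm (n + 1) (k + 1) j =
      ∑ a ∈ Finset.range (n - k + 1), ((n - k).choose a : ℝ) * forestTerm n (k + a) j := by
  by_cases hj : n - k < 2 * j
  · rw [forestTerm_eq_zero _ _ _ (by omega), Finset.sum_eq_zero]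
    intro a _
    rw [forestTerm_eq_zero _ _ _ (by omega), mul_zero]
  · push Not at hj
    obtain ⟨M, hM⟩ := Nat.exists_eq_add_of_le hj
    have hn : n = k + 2 * j + M := by omega
    have hy : ((n : ℝ) + 1) ≠ 0 := by positivity
    have hy1 : ((n : ℝ) + 1 + 1) ≠ 0 := by positivity
    have h1 : ∀ a ∈ Finset.range (n - k + 1),
        ((n - k).choose a : ℝ) * forestTerm n (k + a) j =
        tak j * ((n - k).descFactorial (2 * j) : ℝ) / ((n : ℝ) + 1) *
          ((M.choose a : ℝ) * (((k : ℝ) + 2 * j + 1) + a) * ((n : ℝ) + 1) ^ (M - a)) := by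
      intro a haM
      rw [Finset.mem_range] at haM
      have h2 : ((n - k).choose a : ℝ) * ((n - k - a).descFactorial (2 * j) : ℝ) =
          ((n - k).descFactorial (2 * j) : ℝ) * (M.choose a : ℝ) := by
        have := choose_mul_desc (n - k) a (2 * j)
        rw [show n - k - 2 * j = M by omega] at this
        exact_mod_cast this
      unfold forestTerm
      rw [show n - (k + a) = n - k - a by omega]
      by_cases ha : a ≤ M
      · have h3 : ((n : ℝ) + 1) ^ (n - k - a) = ((n : ℝ) + 1) ^ (2 * j) * ((n : ℝ) + 1) ^ (M - a) := by
          rw [← pow_add]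
          congr 1
          omega
        rw [h3]
        push_cast
        calc _ = tak j * (((n - k).choose a : ℝ) * ((n - k - a).descFactorial (2 * j) : ℝ)) *
              ((k : ℝ) + a + 2 * j + 1) * ((n : ℝ) + 1) ^ (M - a) / ((n : ℝ) + 1) *
              (((n : ℝ) + 1) ^ (2 * j) / ((n : ℝ) + 1) ^ (2 * j)) := by ring
          _ = _ := by
            rw [h2, div_self (pow_ne_zero _ hy)]
            ring
      · rw [Nat.choose_eq_zero_of_lt (show M < a by omega),
          Nat.descFactorial_eq_zero_iff_lt.2 (show n - k - a < 2 * j by omega)]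
        simp
    rw [Finset.sum_congr rfl h1, ← Finset.mul_sum]
    have h4 : ∑ a ∈ Finset.range (n - k + 1),
        ((M.choose a : ℝ) * (((k : ℝ) + 2 * j + 1) + a) * ((n : ℝ) + 1) ^ (M - a)) =
        ∑ a ∈ Finset.range (M + 1),
        ((M.choose a : ℝ) * (((k : ℝ) + 2 * j + 1) + a) * ((n : ℝ) + 1) ^ (M - a)) := by
      symm
      apply Finset.sum_subset
      · intro a
        simp only [Finset.mem_range]
        omega
      · intro a _ ha
        simp only [Finset.mem_range] at ha
        rw [Nat.choose_eq_zero_of_lt (show M < a by omega)]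
        simp
    rw [h4, binom_sum_linear _ _ _ (by positivity)]
    unfold forestTerm
    rw [show n + 1 - (k + 1) = n - k by omega]
    have h5 : (((n + 1 : ℕ) : ℝ) + 1) ^ (n - k) =
        ((n : ℝ) + 1 + 1) ^ (2 * j) * ((n : ℝ) + 1 + 1) ^ M := by
      rw [← pow_add, hM]
      push_cast
      rfl
    rw [h5]
    have hnr : (n : ℝ) = k + 2 * j + M := by exact_mod_cast hn
    rw [show (1 : ℝ) + ((n : ℝ) + 1) = n + 1 + 1 by ring]
    push_cast
    have hMr : (M : ℝ) = n - k - 2 * j := by linarith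
    rw [hMr]
    field_simp
    ring

lemma forestN_rec (n k : ℕ) (hk : k ≤ n) : forestN (n + 1) (k + 1) =
      ∑ a ∈ Finset.range (n - k + 1), ((n - k).choose a : ℝ) * forestN n (k + a) := by
  unfold forestN
  simp_rw [Finset.mul_sum]
  rw [Finset.sum_comm, Finset.sum_range_succ, forestTerm_eq_zero _ _ (n + 1) (by omega), add_zero]
  exact Finset.sum_congr rfl fun j _ => forestTerm_rec n k j hk

lemma desc_succ_real (n k : ℕ) :
    (n.descFactorial (k + 1) : ℝ) = ((n : ℝ) - k) * n.descFactorial k := by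
  by_cases h : k ≤ n
  · rw [Nat.descFactorial_succ]
    push_cast [Nat.cast_sub h]
    ring
  · rw [Nat.descFactorial_eq_zero_iff_lt.2 (show n < k + 1 by omega),
      Nat.descFactorial_eq_zero_iff_lt.2 (show n < k by omega)]
    simp

lemma succ_desc_real (n k : ℕ) :
    ((n : ℝ) + 1 - k) * ((n + 1).descFactorial k : ℝ) = ((n : ℝ) + 1) * n.descFactorial k := by
  by_cases h : k ≤ n + 1
  · have := Nat.succ_descFactorial n k
    have h2 : ((n + 1 - k : ℕ) : ℝ) * ((n + 1).descFactorial k : ℝ)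
      = ((n + 1 : ℕ) : ℝ) * n.descFactorial k := by exact_mod_cast this
    rw [Nat.cast_sub h] at h2
    exact_mod_cast h2
  · rw [Nat.descFactorial_eq_zero_iff_lt.2 (show n < k by omega),
      Nat.descFactorial_eq_zero_iff_lt.2 (show n + 1 < k by omega)]
    simp

lemma tak_succ (j : ℕ) : tak (j + 1) * (2 * (j + 1)) = - tak j := by
  unfold tak
  rw [Nat.factorial_succ, pow_succ]
  have : (j.factorial : ℝ) ≠ 0 := by positivity
  push_cast
  field_simp

lemma forestN_zero (n : ℕ) : forestN (n + 1) 0 = forestN (n + 1) 1 := by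
  rw [← sub_eq_zero]
  unfold forestN
  rw [← Finset.sum_sub_distrib]
  let g : ℕ → ℝ := fun j => tak j * (2 * j) * ((n + 1).descFactorial (2 * j) : ℝ) / ((n : ℝ) + 1) *
    ((n : ℝ) + 1 + 1) ^ (n + 1) / ((n : ℝ) + 1 + 1) ^ (2 * j)
  have h : ∀ j ∈ Finset.range (n + 1 + 1), forestTerm (n + 1) 0 j - forestTerm (n + 1) 1 j =
      g j - g (j + 1) := by
    intro j _
    have hx : ((n : ℝ) + 1 + 1) ≠ 0 := by positivity
    have hn : ((n : ℝ) + 1) ≠ 0 := by positivity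
    have hxp : ((n : ℝ) + 1 + 1) ^ (2 * j) ≠ 0 := pow_ne_zero _ hx
    have e1 : ((n + 1).descFactorial (2 * (j + 1)) : ℝ) =
        ((n : ℝ) + 1 - 2 * j - 1) * (((n : ℝ) + 1 - 2 * j) * (n + 1).descFactorial (2 * j)) := by
      rw [show 2 * (j + 1) = 2 * j + 1 + 1 by ring, desc_succ_real, desc_succ_real]
      push_cast
      ring
    have e2 : (n.descFactorial (2 * j) : ℝ) =
        ((n : ℝ) + 1 - 2 * j) * ((n + 1).descFactorial (2 * j) : ℝ) / ((n : ℝ) + 1) := by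
      have := succ_desc_real n (2 * j)
      push_cast at this
      field_simp
      linarith
    have e3 := tak_succ j
    simp only [g, forestTerm]
    rw [e1]
    push_cast
    rw [e3, e2,
      show 2 * (j + 1) = 2 * j + 2 by ring, pow_add _ (2 * j) 2, pow_succ _ n]
    generalize ((n : ℝ) + 1 + 1) ^ (2 * j) = X at *
    generalize ((n + 1).descFactorial (2 * j) : ℝ) = D at *
    generalize hY : ((n : ℝ) + 1 + 1) ^ n = Y at *
    field_simp
    ring
  rw [Finset.sum_congr rfl h, Finset.sum_range_sub']
  simp only [g]
  rw [Nat.descFactorial_eq_zero_iff_lt.2 (show n + 1 < 2 * (n + 1 + 1) by omega)]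
  simp

lemma forestN_zero_zero : forestN 0 0 = 1 := by
  simp [forestN, forestTerm, tak]

lemma expTerm_shift (x : ℝ) (a : ℕ → ℝ) (s : ℝ)
    (h : HasSum (fun j : ℕ => a (j + 1) * (x ^ j / (j.factorial : ℝ))) s) :
    HasSum (fun j : ℕ => (j : ℝ) * a j * (x ^ j / (j.factorial : ℝ))) (x * s) := by
  rw [← hasSum_nat_add_iff' 1]
  simp only [Finset.range_one, Finset.sum_singleton, Nat.cast_zero, zero_mul, sub_zero]
  convert! h.mul_left x using 1
  funext j
  rw [Nat.factorial_succ, pow_succ]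
  have : (j.factorial : ℝ) ≠ 0 := by positivity
  push_cast
  field_simp

lemma expTerm_moments (x : ℝ) :
    HasSum (fun j : ℕ => x ^ j / (j.factorial : ℝ)) (Real.exp x) ∧
    HasSum (fun j : ℕ => (j : ℝ) * (x ^ j / (j.factorial : ℝ))) (x * Real.exp x) ∧
    HasSum (fun j : ℕ => (j : ℝ) ^ 2 * (x ^ j / (j.factorial : ℝ)))
      ((x ^ 2 + x) * Real.exp x) ∧
    HasSum (fun j : ℕ => (j : ℝ) ^ 3 * (x ^ j / (j.factorial : ℝ)))
      ((x ^ 3 + 3 * x ^ 2 + x) * Real.exp x) := by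
  have h0 : HasSum (fun j : ℕ => x ^ j / (j.factorial : ℝ)) (Real.exp x) := by
    rw [Real.exp_eq_exp_ℝ]
    exact NormedSpace.expSeries_div_hasSum_exp x
  have h1 : HasSum (fun j : ℕ => (j : ℝ) * (x ^ j / (j.factorial : ℝ))) (x * Real.exp x) := by
    have := expTerm_shift x (fun _ => 1) (Real.exp x) (by simpa using h0)
    simpa using this
  have h2 : HasSum (fun j : ℕ => (j : ℝ) ^ 2 * (x ^ j / (j.factorial : ℝ)))
      ((x ^ 2 + x) * Real.exp x) := by
    have := expTerm_shift x (fun j => (j : ℝ)) (x * Real.exp x + Real.exp x) (by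
      convert! h1.add h0 using 1
      funext j
      push_cast
      ring)
    convert! this using 1
    · funext j
      ring
    · ring
  refine ⟨h0, h1, h2, ?_⟩
  have := expTerm_shift x (fun j => (j : ℝ) ^ 2)
    ((x ^ 2 + x) * Real.exp x + 2 * (x * Real.exp x) + Real.exp x) (by
      convert! (h2.add (h1.mul_left 2)).add h0 using 1
      funext j
      push_cast
      ring)
  convert! this using 1
  · funext j
    ring
  · ring

/-- The normalized falling factorials. -/
noncomputable def fallQ (n i : ℕ) : ℝ := (n.descFactorial i : ℝ) / ((n : ℝ) + 1) ^ i

lemma fallQ_zero (n : ℕ) : fallQ n 0 = 1 := by simp [fallQ]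

lemma fallQ_nonneg (n i : ℕ) : 0 ≤ fallQ n i := by unfold fallQ; positivity

lemma fallQ_succ (n i : ℕ) :
    ((n : ℝ) + 1) * (fallQ n (i + 1) - 1) =
      ((n : ℝ) + 1) * (fallQ n i - 1) - fallQ n i * (i + 1) := by
  unfold fallQ
  rw [desc_succ_real, pow_succ]
  have : ((n : ℝ) + 1) ≠ 0 := by positivity
  field_simp
  ring

lemma fallQ_le_one (n i : ℕ) : fallQ n i ≤ 1 := by
  induction i with
  | zero => rw [fallQ_zero]
  | succ i ih =>
    have h := fallQ_succ n i
    have h1 : 0 ≤ fallQ n i * (i + 1) := mul_nonneg (fallQ_nonneg n i) (by positivity)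
    have h2 : (0 : ℝ) < (n : ℝ) + 1 := by positivity
    by_contra hc
    push Not at hc
    have h3 : 0 < ((n : ℝ) + 1) * (fallQ n (i + 1) - 1) := mul_pos h2 (by linarith)
    have h4 : ((n : ℝ) + 1) * (fallQ n i - 1) ≤ 0 :=
      mul_nonpos_of_nonneg_of_nonpos h2.le (by linarith)
    linarith

lemma fallQ_bound (n i : ℕ) :
    |((n : ℝ) + 1) * (fallQ n i - 1)| ≤ i * (i + 1) / 2 := by
  have h2 : (0 : ℝ) < (n : ℝ) + 1 := by positivity
  have hup : ((n : ℝ) + 1) * (fallQ n i - 1) ≤ 0 :=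
      mul_nonpos_of_nonneg_of_nonpos h2.le (by linarith [fallQ_le_one n i])
  rw [abs_of_nonpos hup]
  clear hup
  induction i with
  | zero => simp [fallQ_zero]
  | succ i ih =>
    rw [fallQ_succ]
    have h1 : fallQ n i * (i + 1) ≤ 1 * ((i : ℝ) + 1) :=
      mul_le_mul_of_nonneg_right (fallQ_le_one n i) (by positivity)
    push_cast
    linarith

lemma fallQ_tendsto (i : ℕ) :
    Tendsto (fun n : ℕ => ((n : ℝ) + 1) * (fallQ n i - 1)) atTop
      (𝓝 (-((i : ℝ) * (i + 1) / 2))) := by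
  induction i with
  | zero => simp [fallQ_zero]
  | succ i ih =>
    have h1 : Tendsto (fun n : ℕ => fallQ n i) atTop (𝓝 1) := by
      have h2 := (ih.mul (tendsto_one_div_add_atTop_nhds_zero_nat (𝕜 := ℝ))).add_const 1
      rw [mul_zero, zero_add] at h2
      refine h2.congr fun n => ?_
      have : ((n : ℝ) + 1) ≠ 0 := by positivity
      field_simp
      ring
    simp_rw [fallQ_succ]
    have h3 := ih.sub (h1.mul_const ((i : ℝ) + 1))
    convert h3 using 2
    push_cast
    ring

/-- The scaled Takács sum. -/
noncomputable def takSum (n : ℕ) : ℝ :=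
  ∑' j : ℕ, tak j * (2 * j + 1) * (((n : ℝ) + 1) * (fallQ n (2 * j) - 1))

lemma takSum_tendsto : Tendsto takSum atTop (𝓝 (Real.exp (-(1 / 2 : ℝ)))) := by
  obtain ⟨p0, p1, p2, p3⟩ := expTerm_moments (1 / 2)
  obtain ⟨m0, m1, m2, m3⟩ := expTerm_moments (-1 / 2)
  have hlim : HasSum (fun j : ℕ => tak j * (2 * j + 1) *
      (-(((2 * j : ℕ) : ℝ) * ((2 * j : ℕ) + 1) / 2))) (Real.exp (-(1 / 2 : ℝ))) := by
    have h := ((m3.mul_left (-4)).add (m2.mul_left (-4))).add (m1.mul_left (-1))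
    rw [show (-(1 / 2 : ℝ)) = -1 / 2 by norm_num]
    convert! h using 1
    · funext j
      unfold tak
      push_cast
      ring
    · ring
  rw [← hlim.tsum_eq]
  have hsum : Summable (fun j : ℕ => |tak j| * (2 * j + 1) *
      (((2 * j : ℕ) : ℝ) * ((2 * j : ℕ) + 1) / 2)) := by
    have h := ((p3.mul_left 4).add (p2.mul_left 4)).add p1
    refine h.summable.congr fun j => ?_
    have : |tak j| = (1 / 2 : ℝ) ^ j / (j.factorial : ℝ) := by
      unfold tak
      rw [abs_div, abs_pow, Nat.abs_cast]
      norm_num [abs_div]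
    rw [this]
    push_cast
    ring
  refine tendsto_tsum_of_dominated_convergence hsum ?_ ?_
  · intro j
    exact (fallQ_tendsto (2 * j)).const_mul _
  · refine Eventually.of_forall fun n j => ?_
    rw [Real.norm_eq_abs, abs_mul, abs_mul, abs_of_nonneg (show (0 : ℝ) ≤ 2 * j + 1 by positivity)]
    exact mul_le_mul_of_nonneg_left (fallQ_bound n (2 * j)) (by positivity)

lemma forestN_eq (n : ℕ) :
    forestN n 0 = ((n : ℝ) + 1) ^ n / ((n : ℝ) + 1) ^ 2 * takSum n := by
  obtain ⟨m0, m1, m2, m3⟩ := expTerm_moments (-1 / 2)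
  have hx : ((n : ℝ) + 1) ≠ 0 := by positivity
  have hz : HasSum (fun j : ℕ => ((n : ℝ) + 1) * (tak j * (2 * j + 1))) 0 := by
    have h := ((m1.mul_left 2).add m0).mul_left ((n : ℝ) + 1)
    convert! h using 1
    · funext j
      unfold tak
      ring
    · ring
  have hf : HasSum (fun j : ℕ => ((n : ℝ) + 1) * (tak j * (2 * j + 1) * fallQ n (2 * j)))
      (∑ j ∈ Finset.range (n + 1),
        ((n : ℝ) + 1) * (tak j * (2 * j + 1) * fallQ n (2 * j))) := by
    apply hasSum_sum_of_ne_finset_zero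
    intro j hj
    rw [Finset.mem_range] at hj
    have : fallQ n (2 * j) = 0 := by
      unfold fallQ
      rw [Nat.descFactorial_eq_zero_iff_lt.2 (show n < 2 * j by omega)]
      simp
    rw [this]
    simp
  have hs : takSum n = ∑ j ∈ Finset.range (n + 1),
        ((n : ℝ) + 1) * (tak j * (2 * j + 1) * fallQ n (2 * j)) := by
    have h := hf.sub hz
    rw [sub_zero] at h
    rw [← h.tsum_eq]
    unfold takSum
    congr 1
    funext j
    ring
  rw [hs, Finset.mul_sum]
  unfold forestN
  refine Finset.sum_congr rfl fun j _ => ?_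
  unfold forestTerm fallQ
  rw [Nat.sub_zero, Nat.cast_zero]
  field_simp
  ring

lemma forest_count (n : ℕ) :
    (Nat.card {G : SimpleGraph (Fin n) // G.IsAcyclic} : ℝ) = forestN n 0 := by
  rw [goodCount_forest]
  have := goodCount_eq False forestN forestN_zero_zero ?_ forestN_rec n ∅
  · simpa using this
  · intro n S hS hT
    rw [hS, goodCount_singleton_of_empty (0 : Fin (n + 1)), hT _ (Finset.card_singleton _),
      forestN_zero]

lemma tree_count (n : ℕ) :
    (Nat.card {G : SimpleGraph (Fin (n + 1)) // G.Connected ∧ G.IsAcyclic} : ℝ) =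
      treeN (n + 1) 1 := by
  rw [goodCount_tree (0 : Fin (n + 1))]
  have := goodCount_eq True treeN (by simp [treeN]) ?_ treeN_rec (n + 1) {0}
  · simpa using this
  · intro n S hS _
    rw [hS, goodCount_true_empty]
    simp [treeN]

/-- The limiting probability that a uniformly random labelled forest on
`Fin n` is connected (i.e. is a tree) equals `e^{-1/2}`. -/
theorem random_forest_connected_probability :
    Tendsto
      (fun n : ℕ =>
        (Nat.card {G : SimpleGraph (Fin n) // G.Connected ∧ G.IsAcyclic} : ℝ) /
          (Nat.card {G : SimpleGraph (Fin n) // G.IsAcyclic} : ℝ))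
      atTop (𝓝 (Real.exp (-(1 / 2 : ℝ)))) := by
  have h1 : Tendsto (fun n : ℕ => (1 + 1 / (n : ℝ)) ^ n) atTop (𝓝 (Real.exp 1)) :=
    Real.tendsto_one_add_div_pow_exp 1
  have h2 : Tendsto (fun n : ℕ => ((n : ℝ) / ((n : ℝ) + 1))) atTop (𝓝 1) :=
    tendsto_natCast_div_add_atTop (1 : ℝ)
  have h3 := ((h1.mul (h2.pow 2)).mul takSum_tendsto).inv₀ (by positivity)
  have h4 : (Real.exp 1 * 1 ^ 2 * Real.exp (-(1 / 2 : ℝ)))⁻¹ = Real.exp (-(1 / 2 : ℝ)) := by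
    rw [one_pow, mul_one, ← Real.exp_add, ← Real.exp_neg]
    norm_num
  rw [h4] at h3
  refine h3.congr' ?_
  filter_upwards [eventually_ge_atTop 1] with n hn
  obtain ⟨m, rfl⟩ := Nat.exists_eq_add_of_le' hn
  rw [tree_count, forest_count, forestN_eq, treeN, if_neg (by omega), Nat.add_sub_cancel]
  have hx : ((m + 1 : ℕ) : ℝ) ≠ 0 := by positivity
  generalize hX : ((m + 1 : ℕ) : ℝ) = x at *
  have hx1 : x + 1 ≠ 0 := by rw [← hX]; positivity
  have e1 : 1 + 1 / x = (x + 1) / x := by field_simp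
  have hp : (x + 1) ^ (m + 1) ≠ 0 := pow_ne_zero _ hx1
  have hq : x ^ m ≠ 0 := pow_ne_zero _ hx
  rw [e1, div_pow, div_pow, pow_succ x m, Nat.cast_one, one_mul]
  generalize (x + 1) ^ (m + 1) = Y at *
  generalize x ^ m = Z at *
  rw [inv_eq_one_div]
  by_cases ht : takSum (m + 1) = 0
  · simp [ht]
  · field_simp
end
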